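/- Let L/k be a dihedral extension of number fields of degree 2q with q odd, F its quadratic subextension, K a degree-q subextension. Then for every prime ℓ, the ℓ-adic valuation of the ratio h(L)h(k)²/(h(F)h(K)²) satisfies −a·v_ℓ(q) ≤ v_ℓ(h(L)h(k)²/(h(F)h(K)²)) ≤ b·v_ℓ(q), where a = rank_Z(U_F) + δ_q(F) + 1, b = rank_Z(U_k) + δ_q(k), and δ_q(M) is 1 if M contains a nontrivial root of unity of order dividing q and 0 otherwise. -/

import Mathlib

open DihedralGroup NumberField IntermediateField
open scoped Classical

section DihedralAveraging

lemma DihedralGroup.mem_closure_r_one {q : ℕ} (x : DihedralGroup q) :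
    x ∈ Subgroup.closure {(r 1 : DihedralGroup q)} ↔ ∃ i, x = r i := by
  rw [Subgroup.mem_closure_singleton]
  constructor
  · rintro ⟨n, rfl⟩
    exact ⟨_, r_zpow _ _⟩
  · rintro ⟨i, rfl⟩
    obtain ⟨n, rfl⟩ := ZMod.intCast_surjective i
    exact ⟨n, by simp⟩

lemma DihedralGroup.mem_closure_sr_zero {q : ℕ} (x : DihedralGroup q) :
    x ∈ Subgroup.closure {(sr 0 : DihedralGroup q)} ↔ x = 1 ∨ x = sr 0 := by
  rw [Subgroup.mem_closure_singleton]
  constructor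
  · rintro ⟨n, rfl⟩
    rcases Int.even_or_odd' n with ⟨m, rfl | rfl⟩
    · left; rw [zpow_mul, zpow_ofNat, pow_two, sr_mul_sr]; simp [-r_zero, ← one_def]
    · right; rw [zpow_add, zpow_mul, zpow_ofNat, pow_two, sr_mul_sr]; simp [-r_zero, ← one_def]
  · rintro (rfl | rfl)
    · exact ⟨0, by simp⟩
    · exact ⟨1, by simp⟩

lemma ZMod.exists_two_mul_eq {q : ℕ} (hq : Odd q) (i : ZMod q) : ∃ j : ZMod q, 2 * j = i := by
  have h : IsUnit ((2 : ℕ) : ZMod q) := by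
    rw [ZMod.isUnit_iff_coprime]
    exact (Nat.coprime_two_left).2 hq
  obtain ⟨u, hu⟩ := h
  refine ⟨(↑u⁻¹ : ZMod q) * i, ?_⟩
  have : (2 : ZMod q) = u := by rw [hu]; norm_num
  rw [this, ← mul_assoc, Units.mul_inv, one_mul]

variable {k L : Type*} [Field k] [Field L] [Algebra k L] [FiniteDimensional k L]

/-- The average over `Gal(L/M)` of a function on the field automorphisms of `L`. -/
noncomputable def galAvg (M : Type*) {L : Type*} [Field M] [Field L] [Algebra M L]
    [FiniteDimensional M L] (N : (L ≃+* L) → ℝ) : ℝ :=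
  (∑ h : L ≃ₐ[M] L, N h.toRingEquiv) / Module.finrank M L

variable {q : ℕ} [NeZero q] (e : (L ≃ₐ[k] L) ≃* DihedralGroup q)

omit [NeZero q] in
lemma mem_fixingSubgroup_rotations [IsGalois k L] {F : IntermediateField k L}
    (hF : F = fixedField ((Subgroup.closure {(r 1 : DihedralGroup q)}).comap e.toMonoidHom))
    (g : L ≃ₐ[k] L) : g ∈ F.fixingSubgroup ↔ ∃ i, g = e.symm (r i) := by
  rw [hF, fixingSubgroup_fixedField, Subgroup.mem_comap, mem_closure_r_one]
  simp [MulEquiv.eq_symm_apply]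

omit [NeZero q] in
lemma mem_fixingSubgroup_reflection [IsGalois k L] {K : IntermediateField k L}
    (hK : K = fixedField ((Subgroup.closure {(sr 0 : DihedralGroup q)}).comap e.toMonoidHom))
    (g : L ≃ₐ[k] L) : g ∈ K.fixingSubgroup ↔ g = 1 ∨ g = e.symm (sr 0) := by
  rw [hK, fixingSubgroup_fixedField, Subgroup.mem_comap, mem_closure_sr_zero]
  simp [MulEquiv.eq_symm_apply]

lemma IntermediateField.sum_algEquiv_eq [IsGalois k L] (M : IntermediateField k L)
    (N : (L ≃+* L) → ℝ) :
    ∑ h : L ≃ₐ[M] L, N h.toRingEquiv = ∑ g : M.fixingSubgroup, N g.1.toRingEquiv := by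
  refine (Fintype.sum_equiv (fixingSubgroupEquiv M).toEquiv _ _ fun g ↦ ?_).symm
  congr 1

lemma sum_fixingSubgroup_rotations [IsGalois k L] {F : IntermediateField k L}
    (hF : F = fixedField ((Subgroup.closure {(r 1 : DihedralGroup q)}).comap e.toMonoidHom))
    (N : (L ≃+* L) → ℝ) :
    ∑ h : L ≃ₐ[F] L, N h.toRingEquiv = ∑ i : ZMod q, N (e.symm (r i)).toRingEquiv := by
  rw [IntermediateField.sum_algEquiv_eq]
  symm
  refine Function.Bijective.sum_comp (e := fun i : ZMod q ↦
    (⟨e.symm (r i), (mem_fixingSubgroup_rotations e hF _).2 ⟨i, rfl⟩⟩ : F.fixingSubgroup))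
    ⟨?_, ?_⟩ (fun g ↦ N g.1.toRingEquiv)
  · intro i j h
    simpa using h
  · rintro ⟨g, hg⟩
    obtain ⟨i, rfl⟩ := (mem_fixingSubgroup_rotations e hF _).1 hg
    exact ⟨i, rfl⟩

omit [NeZero q] in
lemma sum_fixingSubgroup_reflection [IsGalois k L] {K : IntermediateField k L}
    (hK : K = fixedField ((Subgroup.closure {(sr 0 : DihedralGroup q)}).comap e.toMonoidHom))
    (N : (L ≃+* L) → ℝ) :
    ∑ h : L ≃ₐ[K] L, N h.toRingEquiv =
      N (RingEquiv.refl L) + N (e.symm (sr 0)).toRingEquiv := by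
  rw [IntermediateField.sum_algEquiv_eq]
  have hne : (1 : L ≃ₐ[k] L) ≠ e.symm (sr 0) := by
    intro h
    have := congrArg e h
    rw [map_one, MulEquiv.apply_symm_apply, one_def] at this
    exact absurd this (by simp [-r_zero])
  have := Finset.sum_subtype (p := fun g ↦ g ∈ K.fixingSubgroup)
    (F := (inferInstance : Fintype K.fixingSubgroup))
    ({1, e.symm (sr 0)} : Finset (L ≃ₐ[k] L))
    (fun g ↦ by rw [mem_fixingSubgroup_reflection e hK]; simp) (fun g ↦ N g.toRingEquiv)
  rw [Finset.sum_pair hne] at this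
  exact this.symm

omit [FiniteDimensional k L] [NeZero q] in
lemma reflection_conj (hq : Odd q) (i : ZMod q) : ∃ τ : L ≃ₐ[k] L,
    e.symm (sr i) = τ * e.symm (sr 0) * τ⁻¹ := by
  obtain ⟨j, hj⟩ := ZMod.exists_two_mul_eq hq (-i)
  refine ⟨e.symm (r j), ?_⟩
  apply e.injective
  simp only [map_mul, map_inv, MulEquiv.apply_symm_apply, inv_r, r_mul_sr, sr_mul_r]
  congr 1
  linear_combination hj

lemma sum_dihedral [IsGalois k L] (hq : Odd q) (N : (L ≃+* L) → ℝ)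
    (hN : ∀ τ g : L ≃ₐ[k] L, N (τ * g * τ⁻¹).toRingEquiv = N g.toRingEquiv) :
    ∑ h : L ≃ₐ[k] L, N h.toRingEquiv =
      ∑ i : ZMod q, N (e.symm (r i)).toRingEquiv + q * N (e.symm (sr 0)).toRingEquiv := by
  have h1 : ∑ h : L ≃ₐ[k] L, N h.toRingEquiv =
      ∑ x : ZMod q ⊕ ZMod q, N (Sum.elim (fun i : ZMod q ↦ e.symm (r i))
        (fun i ↦ e.symm (sr i)) x).toRingEquiv := by
    symm
    refine Function.Bijective.sum_comp (e := Sum.elim (fun i : ZMod q ↦ e.symm (r i))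
        (fun i ↦ e.symm (sr i))) ⟨?_, ?_⟩ (fun g : L ≃ₐ[k] L ↦ N g.toRingEquiv)
    · rintro (i | i) (j | j) h <;> simp_all
    · intro g
      rcases hg : e g with i | i
      · exact ⟨Sum.inl i, by simp [← hg]⟩
      · exact ⟨Sum.inr i, by simp [← hg]⟩
  rw [h1, Fintype.sum_sum_type]
  congr 1
  simp only [Sum.elim_inr]
  rw [Finset.sum_congr rfl (g := fun _ ↦ N (e.symm (sr 0)).toRingEquiv)]
  · simp
  · intro i _
    obtain ⟨τ, hτ⟩ := reflection_conj e hq i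
    rw [hτ, hN]

omit [FiniteDimensional k L] [NeZero q] in
include e in
lemma finrank_dihedral [FiniteDimensional k L] [IsGalois k L] : Module.finrank k L = 2 * q := by
  rw [← IsGalois.card_aut_eq_finrank, Nat.card_congr e.toEquiv, DihedralGroup.nat_card]

lemma finrank_rotations [IsGalois k L] {F : IntermediateField k L}
    (hF : F = fixedField ((Subgroup.closure {(r 1 : DihedralGroup q)}).comap e.toMonoidHom)) :
    Module.finrank F L = q := by
  have := sum_fixingSubgroup_rotations e hF (fun _ ↦ 1)
  rw [← IsGalois.card_aut_eq_finrank]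
  simp only [Finset.sum_const, Finset.card_univ, nsmul_eq_mul, mul_one, ZMod.card] at this
  rw [Nat.card_eq_fintype_card]
  exact_mod_cast this

omit [NeZero q] in
lemma finrank_reflection [IsGalois k L] {K : IntermediateField k L}
    (hK : K = fixedField ((Subgroup.closure {(sr 0 : DihedralGroup q)}).comap e.toMonoidHom)) :
    Module.finrank K L = 2 := by
  have := sum_fixingSubgroup_reflection e hK (fun _ ↦ 1)
  rw [← IsGalois.card_aut_eq_finrank]
  simp only [Finset.sum_const, Finset.card_univ, nsmul_eq_mul, mul_one] at this
  rw [Nat.card_eq_fintype_card]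
  have h2 : ((Fintype.card (L ≃ₐ[K] L) : ℕ) : ℝ) = (2 : ℕ) := by rw [this]; norm_num
  exact_mod_cast h2

/-- The relation between permutation characters of a dihedral group of order `2q`, `q` odd,
evaluated against a class function. -/
theorem galAvg_dihedral [IsGalois k L] (hq : Odd q) {F K : IntermediateField k L}
    (hF : F = fixedField ((Subgroup.closure {(r 1 : DihedralGroup q)}).comap e.toMonoidHom))
    (hK : K = fixedField ((Subgroup.closure {(sr 0 : DihedralGroup q)}).comap e.toMonoidHom))
    (N : (L ≃+* L) → ℝ)
    (hN : ∀ τ g : L ≃ₐ[k] L, N (τ * g * τ⁻¹).toRingEquiv = N g.toRingEquiv) :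
    galAvg L N + 2 * galAvg k N = galAvg F N + 2 * galAvg K N := by
  have hL : galAvg L N = N (RingEquiv.refl L) := by
    have : (default : L ≃ₐ[L] L) = AlgEquiv.refl := Subsingleton.elim _ _
    simp only [galAvg, Module.finrank_self, Nat.cast_one, div_one]
    rw [Fintype.sum_subsingleton _ (AlgEquiv.refl : L ≃ₐ[L] L)]
    rfl
  have hq0 : (q : ℝ) ≠ 0 := Nat.cast_ne_zero.2 (NeZero.ne q)
  rw [hL, galAvg, galAvg, galAvg, sum_dihedral e hq N hN, sum_fixingSubgroup_rotations e hF,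
    sum_fixingSubgroup_reflection e hK, finrank_dihedral e, finrank_rotations e hF,
    finrank_reflection e hK]
  push_cast
  field_simp
  ring

end DihedralAveraging

section TwistedBurnside

lemma sum_card_twisted_fixedBy {G X Y : Type*} [Group G] [Fintype G] [MulAction G X] [Finite X]
    (π : X → Y) (hπ : Function.Surjective π) (hG : ∀ x x', π x = π x' ↔ ∃ g : G, x' = g • x)
    (φ : X → X) (ψ : Y → Y) (hφ : ∀ x, π (φ x) = ψ (π x)) :
    ∑ g : G, Nat.card {x : X // φ x = g • x} = Nat.card G * Nat.card {y : Y // ψ y = y} := by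
  have := Fintype.ofFinite X
  have : Finite Y := Finite.of_surjective π hπ
  have := Fintype.ofFinite Y
  have hstab : ∀ x, ψ (π x) = π x →
      Nat.card {g : G // φ x = g • x} = Nat.card (MulAction.stabilizer G x) := by
    intro x hx
    obtain ⟨g₀, hg₀⟩ := (hG x (φ x)).1 (by rw [hφ, hx])
    refine Nat.card_congr ((Equiv.mulLeft g₀⁻¹).subtypeEquiv fun g ↦ ?_)
    rw [hg₀, Equiv.coe_mulLeft, MulAction.mem_stabilizer_iff, mul_smul, inv_smul_eq_iff, eq_comm]
  have hfib : ∀ y, ψ y = y → ∑ x with π x = y, Nat.card {g : G // φ x = g • x} = Nat.card G := by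
    intro y hy
    obtain ⟨x₀, rfl⟩ := hπ y
    have hc : ∀ x ∈ (Finset.univ.filter fun x ↦ π x = π x₀),
        Nat.card {g : G // φ x = g • x} = Nat.card (MulAction.stabilizer G x₀) := by
      intro x hx
      have hx' : π x = π x₀ := by simpa using hx
      rw [hstab x (by rw [hx', hy])]
      obtain ⟨g, rfl⟩ := (hG x₀ x).1 hx'.symm
      exact Nat.card_congr (MulAction.stabilizerEquivStabilizerOfOrbitRel
        (⟨g, rfl⟩ : MulAction.orbitRel G X (g • x₀) x₀)).toEquiv
    rw [Finset.sum_congr rfl hc, Finset.sum_const, smul_eq_mul]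
    have : (Finset.univ.filter fun x ↦ π x = π x₀).card = Nat.card (MulAction.orbit G x₀) := by
      rw [Nat.card_eq_fintype_card, Fintype.card_subtype]
      congr 1
      ext x
      rw [Finset.mem_filter, Finset.mem_filter, eq_comm, hG]
      simp [MulAction.mem_orbit_iff, eq_comm]
    rw [this, Nat.card_eq_fintype_card, Nat.card_eq_fintype_card, Nat.card_eq_fintype_card]
    exact MulAction.card_orbit_mul_card_stabilizer_eq_card_group G x₀
  have hswap : ∑ g : G, Nat.card {x : X // φ x = g • x} =
      ∑ x : X, Nat.card {g : G // φ x = g • x} := by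
    simp only [Nat.card_eq_fintype_card, Fintype.card_subtype, Finset.card_filter]
    exact Finset.sum_comm
  rw [hswap, ← Finset.sum_fiberwise (s := Finset.univ) (g := π), Nat.card_eq_fintype_card (α := {y // ψ y = y}), Fintype.card_subtype, mul_comm,
    ← smul_eq_mul, ← Finset.sum_const, Finset.sum_filter]
  refine Finset.sum_congr rfl fun y _ ↦ ?_
  split_ifs with hy
  · exact hfib y hy
  · refine Finset.sum_eq_zero fun x hx ↦ ?_
    have hx' : π x = y := by simpa using hx
    have : IsEmpty {g : G // φ x = g • x} := by
      refine ⟨fun ⟨g, hg⟩ ↦ hy ?_⟩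
      rw [← hx', ← hφ]
      exact ((hG x (φ x)).2 ⟨g, hg⟩).symm
    exact Nat.card_of_isEmpty

end TwistedBurnside

section RestrictHom

open Polynomial in
lemma exists_ringHom_comp_eq_of_isInvariant (A : Type*) {B Ω G : Type*} [CommRing A] [CommRing B]
    [Algebra A B] [CommRing Ω] [IsDomain Ω] [Group G] [Finite G] [MulSemiringAction G B]
    [Algebra.IsInvariant A B G] [Module.Finite ℤ B] (f g : B →+* Ω)
    (hfg : f.comp (algebraMap A B) = g.comp (algebraMap A B)) :
    ∃ σ : G, ∀ b, f b = g (σ • b) := by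
  cases nonempty_fintype G
  obtain ⟨n, s, hs⟩ := Module.Finite.exists_fin (R := ℤ) (M := B)
  let _ : Algebra A[X] B[X] := (mapRingHom (algebraMap A B)).toAlgebra
  have hinv : Algebra.IsInvariant A[X] B[X] G := by
    refine ⟨fun b hb ↦ ?_⟩
    have : b ∈ Polynomial.lifts (algebraMap A B) := by
      rw [Polynomial.lifts_iff_coeff_lifts]
      intro i
      obtain ⟨a, ha⟩ := Algebra.IsInvariant.isInvariant (A := A) (G := G) (b.coeff i) (fun σ ↦ by
        conv_rhs => rw [← hb σ]
        rw [Polynomial.coeff_smul])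
      exact ⟨a, ha⟩
    obtain ⟨a, ha⟩ := this
    exact ⟨a, ha⟩
  set b : B[X] := ∑ i : Fin n, C (s i) * X ^ (i : ℕ) with hb
  obtain ⟨P, hP⟩ := Algebra.IsInvariant.charpoly_mem_lifts A[X] B[X] G b
  have hcomp : (mapRingHom f).comp (algebraMap A[X] B[X]) =
      (mapRingHom g).comp (algebraMap A[X] B[X]) := by
    have : ∀ x, (mapRingHom f) (algebraMap A[X] B[X] x) = (mapRingHom g) (algebraMap A[X] B[X] x) := by
      intro x
      change (mapRingHom f) (x.map (algebraMap A B)) = (mapRingHom g) (x.map (algebraMap A B))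
      simp only [coe_mapRingHom, Polynomial.map_map, hfg]
    exact RingHom.ext this
  have h0 : ((MulSemiringAction.charpoly G b).map (mapRingHom g)).eval (mapRingHom f b) = 0 := by
    rw [← hP, coe_mapRingHom (algebraMap A[X] B[X]), Polynomial.map_map, ← hcomp,
      ← Polynomial.map_map, ← coe_mapRingHom (algebraMap A[X] B[X]), hP, Polynomial.eval_map,
      Polynomial.eval₂_hom, MulSemiringAction.eval_charpoly, map_zero]
  rw [MulSemiringAction.charpoly_eq, Polynomial.map_prod, Polynomial.eval_prod,
    Finset.prod_eq_zero_iff] at h0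
  obtain ⟨σ, -, hσ⟩ := h0
  refine ⟨σ, ?_⟩
  have hσ' : b.map f = (σ • b).map g := by
    simpa [sub_eq_zero] using hσ
  have hcoef : ∀ i : Fin n, b.coeff i = s i := by
    intro i
    simp [hb, Polynomial.coeff_X_pow, Fin.val_inj]
  have hi : ∀ i, f (s i) = g (σ • s i) := by
    intro i
    have := congrArg (fun p ↦ p.coeff i) hσ'
    simpa only [Polynomial.coeff_map, Polynomial.coeff_smul, hcoef] using this
  have hle : (⊤ : Submodule ℤ B) ≤ LinearMap.eqLocus f.toAddMonoidHom.toIntLinearMap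
      (g.comp (MulSemiringAction.toRingHom G B σ)).toAddMonoidHom.toIntLinearMap := by
    rw [← hs, Submodule.span_le]
    rintro _ ⟨i, rfl⟩
    exact hi i
  exact fun b ↦ hle (x := b) trivial

lemma exists_ringHom_extension_isAlgClosed {A B Ω : Type*} [CommRing A] [CommRing B] [IsDomain B] [Algebra A B]
    [Algebra.IsIntegral A B] [FaithfulSMul A B] [Field Ω] [IsAlgClosed Ω] (y : A →+* Ω) :
    ∃ x : B →+* Ω, x.comp (algebraMap A B) = y := by
  have hker : (RingHom.ker y).IsPrime := RingHom.ker_isPrime y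
  obtain ⟨Q, hQ, hQy⟩ := Ideal.exists_ideal_over_prime_of_isIntegral_of_isDomain (S := B) (RingHom.ker y)
    (by rw [(RingHom.injective_iff_ker_eq_bot _).1 (FaithfulSMul.algebraMap_injective A B)]; exact bot_le)
  have : Q.LiesOver (RingHom.ker y) := ⟨hQy.symm⟩
  let _ : Algebra (A ⧸ RingHom.ker y) Ω := (RingHom.kerLift y).toAlgebra
  have : FaithfulSMul (A ⧸ RingHom.ker y) Ω := 
    (faithfulSMul_iff_algebraMap_injective _ _).2 (RingHom.kerLift_injective y)
  have : Algebra.IsIntegral (A ⧸ RingHom.ker y) (B ⧸ Q) := inferInstance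
  have : Algebra.IsAlgebraic (A ⧸ RingHom.ker y) (B ⧸ Q) := inferInstance
  have : FaithfulSMul (A ⧸ RingHom.ker y) (B ⧸ Q) := inferInstance
  have : Module.IsTorsionFree (A ⧸ RingHom.ker y) (B ⧸ Q) :=
    (Module.isTorsionFree_iff_faithfulSMul).2 inferInstance
  let φ : (B ⧸ Q) →ₐ[A ⧸ RingHom.ker y] Ω := IsAlgClosed.lift
  refine ⟨φ.toRingHom.comp (Ideal.Quotient.mk Q), RingHom.ext fun a ↦ ?_⟩
  exact φ.commutes (Ideal.Quotient.mk _ a)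

end RestrictHom

section FrobeniusCounts

lemma RingHom.ext_of_span_int {B Ω ι : Type*} [CommRing B] [CommRing Ω] {s : ι → B}
    (hs : Submodule.span ℤ (Set.range s) = ⊤) {f g : B →+* Ω} (h : ∀ i, f (s i) = g (s i)) :
    f = g := by
  have hle : (⊤ : Submodule ℤ B) ≤ LinearMap.eqLocus f.toAddMonoidHom.toIntLinearMap
      g.toAddMonoidHom.toIntLinearMap := by
    rw [← hs, Submodule.span_le]
    rintro _ ⟨i, rfl⟩
    exact h i
  exact RingHom.ext fun b ↦ hle (x := b) trivial

lemma finite_ringHom_of_finite_int (B Ω : Type*) [CommRing B] [CommRing Ω] [IsDomain Ω]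
    [Module.Finite ℤ B] : Finite (B →+* Ω) := by
  obtain ⟨n, s, hs⟩ := Module.Finite.exists_fin (R := ℤ) (M := B)
  have hPint : ∀ i, IsIntegral ℤ (s i) := fun i ↦ Algebra.IsIntegral.isIntegral _
  choose P hP hP0 using hPint
  refine Finite.of_injective (β := ∀ i, ((P i).map (Int.castRingHom Ω)).roots.toFinset)
    (fun f i ↦ ⟨f (s i), ?_⟩) fun f g hfg ↦ RingHom.ext_of_span_int hs fun i ↦ ?_
  · rw [Multiset.mem_toFinset, Polynomial.mem_roots ((hP i).map _).ne_zero, Polynomial.IsRoot,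
      Polynomial.eval_map, RingHom.ext_int (Int.castRingHom Ω) (f.comp (algebraMap ℤ B)),
      ← Polynomial.hom_eval₂, hP0 i, map_zero]
  · simpa using congrFun hfg i

variable (p : ℕ) [Fact p.Prime]

lemma card_ringHom_algebraicClosure_zmod {κ : Type*} [Field κ] {f : ℕ} (hf : 0 < f)
    (hκ : Nat.card κ = p ^ f) :
    Nat.card (κ →+* AlgebraicClosure (ZMod p)) = f ∧
      ∀ m, (∀ a : κ, a ^ p ^ m = a) ↔ f ∣ m := by
  have hp : p.Prime := Fact.out
  have : Finite κ := Nat.finite_of_card_ne_zero (by rw [hκ]; exact pow_ne_zero _ hp.ne_zero)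
  have := Fintype.ofFinite κ
  have h0 : (p : κ) = 0 := by
    have : ((p ^ f : ℕ) : κ) = 0 := by
      rw [← hκ, Nat.card_eq_fintype_card]; exact Nat.cast_card_eq_zero κ
    rw [Nat.cast_pow] at this
    exact pow_eq_zero_iff hf.ne' |>.1 this
  have : CharP κ p := (CharP.charP_iff_prime_eq_zero hp).2 h0
  let _ : Algebra (ZMod p) κ := ZMod.algebra κ p
  have : FiniteDimensional (ZMod p) κ := Module.Finite.of_finite
  have hfin : Module.finrank (ZMod p) κ = f := by
    have h := Module.natCard_eq_pow_finrank (K := ZMod p) (V := κ)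
    rw [hκ, Nat.card_zmod] at h
    exact (Nat.pow_right_injective hp.two_le h).symm
  constructor
  · let E : (κ →+* AlgebraicClosure (ZMod p)) ≃ (κ →ₐ[ZMod p] AlgebraicClosure (ZMod p)) :=
      { toFun := fun x ↦ { x with
          commutes' := fun r ↦ RingHom.congr_fun
            (Subsingleton.elim (x.comp (algebraMap (ZMod p) κ)) (algebraMap _ _)) r }
        invFun := fun x ↦ x.toRingHom
        left_inv := fun _ ↦ rfl
        right_inv := fun _ ↦ rfl }
    rw [Nat.card_congr E, Nat.card_eq_fintype_card, AlgHom.card, hfin]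
  · intro m
    rw [← hfin, ← FiniteField.orderOf_frobeniusAlgEquivOfAlgebraic, orderOf_dvd_iff_pow_eq_one,
      AlgEquiv.ext_iff]
    refine forall_congr' fun a ↦ ?_
    rw [AlgEquiv.coe_pow, FiniteField.coe_frobeniusAlgEquivOfAlgebraic_iterate, ZMod.card]
    rfl

/-- Ring homomorphisms to an algebraic closure of `𝔽_p` landing in the field of `p ^ m` elements. -/
abbrev FrobHom (R : Type*) [CommRing R] (m : ℕ) : Type _ :=
  {y : R →+* AlgebraicClosure (ZMod p) // ∀ a, y a ^ p ^ m = y a}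

/-- The number of prime ideals of the ring of integers of `M` of absolute norm `n`. -/
noncomputable def primeCount (M : Type*) [Field M] [NumberField M] (n : ℕ) : ℕ :=
  Nat.card {P : Ideal (𝓞 M) // P.IsPrime ∧ Ideal.absNorm P = n}

lemma card_ringHom_ker_eq {R : Type*} [CommRing R] (P : Ideal R) [P.IsMaximal] {f : ℕ} (hf : 0 < f)
    (hP : Nat.card (R ⧸ P) = p ^ f) :
    Nat.card {y : R →+* AlgebraicClosure (ZMod p) // RingHom.ker y = P} = f := by
  let _ := Ideal.Quotient.field P
  rw [← (card_ringHom_algebraicClosure_zmod p hf hP).1]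
  exact Nat.card_congr
    { toFun := fun y ↦ Ideal.Quotient.lift P y.1 fun a ha ↦ by
        rwa [← y.2, RingHom.mem_ker] at ha
      invFun := fun z ↦ ⟨z.comp (Ideal.Quotient.mk P), by
        rw [← RingHom.comap_ker, (RingHom.injective_iff_ker_eq_bot z).1 z.injective,
          ← RingHom.ker_eq_comap_bot, Ideal.mk_ker]⟩
      left_inv := fun y ↦ by ext a; rfl
      right_inv := fun z ↦ by ext a; rfl }

lemma frobHom_iff {R : Type*} [CommRing R] (y : R →+* AlgebraicClosure (ZMod p))
    [(RingHom.ker y).IsMaximal] {f : ℕ} (hf : 0 < f)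
    (hP : Nat.card (R ⧸ RingHom.ker y) = p ^ f) (m : ℕ) :
    (∀ a, y a ^ p ^ m = y a) ↔ f ∣ m := by
  let _ := Ideal.Quotient.field (RingHom.ker y)
  rw [← (card_ringHom_algebraicClosure_zmod p hf hP).2 m]
  constructor
  · intro h a
    obtain ⟨a, rfl⟩ := Ideal.Quotient.mk_surjective a
    rw [← map_pow, Ideal.Quotient.eq, RingHom.mem_ker, map_sub, map_pow, h, sub_self]
  · intro h a
    have := h (Ideal.Quotient.mk _ a)
    rwa [← map_pow, Ideal.Quotient.eq, RingHom.mem_ker, map_sub, map_pow, sub_eq_zero] at this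

lemma exists_absNorm_ker_eq (M : Type*) [Field M] [NumberField M]
    (y : 𝓞 M →+* AlgebraicClosure (ZMod p)) :
    (RingHom.ker y).IsMaximal ∧ ∃ f, 0 < f ∧ Ideal.absNorm (RingHom.ker y) = p ^ f := by
  have hp : p.Prime := Fact.out
  have hpr : (RingHom.ker y).IsPrime := RingHom.ker_isPrime y
  have hmem : (p : 𝓞 M) ∈ RingHom.ker y := by
    rw [RingHom.mem_ker, map_natCast, CharP.cast_eq_zero]
  have hne : RingHom.ker y ≠ ⊥ := by
    intro h
    rw [h, Ideal.mem_bot] at hmem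
    exact hp.ne_zero (by exact_mod_cast hmem)
  have hmax := hpr.isMaximal hne
  refine ⟨hmax, ?_⟩
  let _ := Ideal.Quotient.field (RingHom.ker y)
  have hfin : Finite (𝓞 M ⧸ RingHom.ker y) := Ideal.finiteQuotientOfFreeOfNeBot _ hne
  have := Fintype.ofFinite (𝓞 M ⧸ RingHom.ker y)
  have h0 : (p : 𝓞 M ⧸ RingHom.ker y) = 0 := by
    rw [← map_natCast (Ideal.Quotient.mk _), Ideal.Quotient.eq_zero_iff_mem]; exact hmem
  have : CharP (𝓞 M ⧸ RingHom.ker y) p := (CharP.charP_iff_prime_eq_zero hp).2 h0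
  obtain ⟨n, -, hn⟩ := FiniteField.card (𝓞 M ⧸ RingHom.ker y) p
  refine ⟨n, n.pos, ?_⟩
  rw [Ideal.absNorm_apply, Submodule.cardQuot_apply, Nat.card_eq_fintype_card, hn]

lemma card_frobHom (M : Type*) [Field M] [NumberField M] {m : ℕ} (hm : m ≠ 0) :
    Nat.card (FrobHom p (𝓞 M) m) = ∑ f ∈ m.divisors, f * primeCount M (p ^ f) := by
  have hp : p.Prime := Fact.out
  have hfinH : Finite (𝓞 M →+* AlgebraicClosure (ZMod p)) := finite_ringHom_of_finite_int _ _
  have hfinP : ∀ n, Finite {P : Ideal (𝓞 M) // P.IsPrime ∧ Ideal.absNorm P = n} := fun n ↦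
    ((Ideal.finite_setOfPred_absNorm_eq n).subset fun P hP ↦ hP.2).to_subtype
  have := fun n ↦ Fintype.ofFinite {P : Ideal (𝓞 M) // P.IsPrime ∧ Ideal.absNorm P = n}
  let T := Σ f : m.divisors, Σ P : {P : Ideal (𝓞 M) // P.IsPrime ∧ Ideal.absNorm P = p ^ (f : ℕ)},
    {y : 𝓞 M →+* AlgebraicClosure (ZMod p) // RingHom.ker y = P}
  have hmaxl : ∀ (f : m.divisors)
      (P : {P : Ideal (𝓞 M) // P.IsPrime ∧ Ideal.absNorm P = p ^ (f : ℕ)}),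
      0 < (f : ℕ) ∧ P.1.IsMaximal ∧ Nat.card (𝓞 M ⧸ P.1) = p ^ (f : ℕ) := by
    rintro f ⟨P, hP, hPf⟩
    refine ⟨Nat.pos_of_mem_divisors f.2, hP.isMaximal ?_, ?_⟩
    · rintro rfl
      rw [Ideal.absNorm_bot] at hPf
      exact pow_ne_zero _ hp.ne_zero hPf.symm
    · exact ((Submodule.cardQuot_apply P).symm.trans (Ideal.absNorm_apply P).symm).trans hPf
  let F : T → FrobHom p (𝓞 M) m := fun t ↦ ⟨t.2.2.1, by
    obtain ⟨f, P, y, hy⟩ := t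
    obtain ⟨h1, h2, h3⟩ := hmaxl f P
    rw [← hy] at h2 h3
    exact (frobHom_iff p y h1 h3 m).2 (Nat.dvd_of_mem_divisors f.2)⟩
  have hF : Function.Bijective F := by
    constructor
    · rintro ⟨⟨f, hf⟩, ⟨P, hP⟩, ⟨y, hy⟩⟩ ⟨⟨f', hf'⟩, ⟨P', hP'⟩, ⟨y', hy'⟩⟩ h
      obtain rfl : y = y' := congrArg Subtype.val h
      dsimp only at hy hy' hP hP'
      subst hy
      subst hy'
      obtain rfl : f = f' := Nat.pow_right_injective hp.two_le (hP.2.symm.trans hP'.2)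
      rfl
    · rintro ⟨y, hy⟩
      obtain ⟨h1, f, h2, h3⟩ := exists_absNorm_ker_eq p M y
      have h4 : f ∈ m.divisors := Nat.mem_divisors.2
        ⟨(frobHom_iff p y h2 (by rw [← h3, Ideal.absNorm_apply, Submodule.cardQuot_apply]) m).1 hy,
          hm⟩
      exact ⟨⟨⟨f, h4⟩, ⟨RingHom.ker y, h1.isPrime, h3⟩, ⟨y, rfl⟩⟩, rfl⟩
  rw [← Nat.card_congr (Equiv.ofBijective F hF), Nat.card_sigma,
    ← Finset.sum_coe_sort m.divisors (fun f ↦ f * primeCount M (p ^ f))]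
  refine Finset.sum_congr rfl fun f _ ↦ ?_
  rw [Nat.card_sigma, Finset.sum_congr rfl (g := fun _ ↦ (f : ℕ))]
  · rw [Finset.sum_const, primeCount, smul_eq_mul, mul_comm, Nat.card_eq_fintype_card,
      Finset.card_univ]
  · intro P _
    obtain ⟨h1, h2, h3⟩ := hmaxl f P
    exact card_ringHom_ker_eq p P.1 h1 h3

/-- The number of characteristic-`p` points of `𝓞 L` on which `g` acts as the `m`-th power of
Frobenius. -/
noncomputable def frobFixed (m : ℕ) (L : Type*) [Field L] (g : L ≃+* L) : ℝ :=
  Nat.card {x : 𝓞 L →+* AlgebraicClosure (ZMod p) // ∀ a, x a ^ p ^ m = x (g • a)}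

lemma frobFixed_conj (m : ℕ) {k L : Type*} [Field k] [Field L] [Algebra k L] (τ g : L ≃ₐ[k] L) :
    frobFixed p m L (τ * g * τ⁻¹).toRingEquiv = frobFixed p m L g.toRingEquiv := by
  unfold frobFixed
  congr 1
  let T : (𝓞 L →+* AlgebraicClosure (ZMod p)) ≃ (𝓞 L →+* AlgebraicClosure (ZMod p)) :=
    { toFun := fun x ↦ x.comp (MulSemiringAction.toRingHom (L ≃ₐ[k] L) (𝓞 L) τ)
      invFun := fun x ↦ x.comp (MulSemiringAction.toRingHom (L ≃ₐ[k] L) (𝓞 L) τ⁻¹)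
      left_inv := fun x ↦ by ext a; simp
      right_inv := fun x ↦ by ext a; simp }
  refine Nat.card_congr (T.subtypeEquiv fun x ↦ ?_)
  change (∀ a, x a ^ p ^ m = x ((τ * g * τ⁻¹) • a)) ↔ ∀ a, x (τ • a) ^ p ^ m = x (τ • g • a)
  constructor
  · intro h a
    rw [h, mul_smul, mul_smul, inv_smul_smul]
  · intro h a
    have := h (τ⁻¹ • a)
    rwa [smul_inv_smul, ← mul_smul, ← mul_smul] at this

lemma card_frobHom_eq_galAvg (m : ℕ) (M L : Type*) [Field M] [Field L] [NumberField M]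
    [NumberField L] [Algebra M L] [FiniteDimensional M L] [IsGalois M L] :
    (Nat.card (FrobHom p (𝓞 M) m) : ℝ) = galAvg M (frobFixed p m L) := by
  have hfinH : Finite (𝓞 L →+* AlgebraicClosure (ZMod p)) := finite_ringHom_of_finite_int _ _
  let _ : MulAction (L ≃ₐ[M] L) (𝓞 L →+* AlgebraicClosure (ZMod p)) :=
    { smul := fun g x ↦ x.comp (MulSemiringAction.toRingHom (L ≃ₐ[M] L) (𝓞 L) g⁻¹)
      one_smul := fun x ↦ by
        ext a; change x ((1 : L ≃ₐ[M] L)⁻¹ • a) = x a; rw [inv_one, one_smul]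
      mul_smul := fun g h x ↦ by
        ext a; change x ((g * h)⁻¹ • a) = x (h⁻¹ • g⁻¹ • a); rw [mul_inv_rev, mul_smul] }
  have hsm : ∀ (g : L ≃ₐ[M] L) (x : 𝓞 L →+* AlgebraicClosure (ZMod p)) (a : 𝓞 L),
      (g • x) a = x (g⁻¹ • a) := fun g x a ↦ rfl
  have key := sum_card_twisted_fixedBy (G := L ≃ₐ[M] L)
    (fun x : 𝓞 L →+* AlgebraicClosure (ZMod p) ↦ x.comp (algebraMap (𝓞 M) (𝓞 L)))
    (fun y ↦ exists_ringHom_extension_isAlgClosed y)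
    (fun x x' ↦ ⟨fun h ↦ by
      obtain ⟨σ, hσ⟩ := exists_ringHom_comp_eq_of_isInvariant (𝓞 M) (G := L ≃ₐ[M] L) x' x h.symm
      exact ⟨σ⁻¹, RingHom.ext fun b ↦ by rw [hσ, hsm, inv_inv]⟩, by
      rintro ⟨g, rfl⟩
      ext a
      change x (algebraMap _ _ a) = x (g⁻¹ • algebraMap (𝓞 M) (𝓞 L) a)
      rw [smul_algebraMap]⟩)
    (fun x ↦ (iterateFrobenius (AlgebraicClosure (ZMod p)) p m).comp x)
    (fun y ↦ (iterateFrobenius (AlgebraicClosure (ZMod p)) p m).comp y)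
    (fun x ↦ by rw [RingHom.comp_assoc])
  have h0 : (Module.finrank M L : ℝ) ≠ 0 := Nat.cast_ne_zero.2 Module.finrank_pos.ne'
  rw [galAvg, eq_div_iff h0, ← IsGalois.card_aut_eq_finrank, mul_comm]
  have hcard : Nat.card (FrobHom p (𝓞 M) m) = Nat.card {y : 𝓞 M →+* AlgebraicClosure (ZMod p) //
      (iterateFrobenius (AlgebraicClosure (ZMod p)) p m).comp y = y} := by
    refine Nat.card_congr (Equiv.subtypeEquivRight fun y ↦ ?_)
    rw [RingHom.ext_iff]
    rfl
  rw [hcard, ← Nat.cast_mul, ← key, Nat.cast_sum, ← Equiv.sum_comp (Equiv.inv (L ≃ₐ[M] L))]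
  refine Finset.sum_congr rfl fun g _ ↦ ?_
  rw [frobFixed]
  congr 1
  refine Nat.card_congr (Equiv.subtypeEquivRight fun x ↦ ?_)
  rw [RingHom.ext_iff]
  refine forall_congr' fun a ↦ ?_
  rw [hsm, Equiv.inv_apply, inv_inv]
  rfl

end FrobeniusCounts

section PrimeIdeals

lemma Nat.eq_of_sum_divisors_eq {a b : ℕ → ℕ}
    (h : ∀ m ≠ 0, ∑ f ∈ m.divisors, a f = ∑ f ∈ m.divisors, b f) : ∀ m ≠ 0, a m = b m := by
  intro m
  induction m using Nat.strong_induction_on with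
  | _ m ih =>
    intro hm
    have := h m hm
    rw [← Nat.insert_self_properDivisors hm, Finset.sum_insert Nat.self_notMem_properDivisors,
      Finset.sum_insert Nat.self_notMem_properDivisors,
      Finset.sum_congr rfl fun f hf ↦ ih f (Nat.mem_properDivisors.1 hf).2
        (Nat.pos_of_mem_properDivisors hf).ne'] at this
    exact Nat.add_right_cancel this

lemma finite_heightOneSpectrum_absNorm_eq (M : Type*) [Field M] [NumberField M] (n : ℕ) :
    Finite {P : IsDedekindDomain.HeightOneSpectrum (𝓞 M) // Ideal.absNorm P.asIdeal = n} := by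
  have : Finite {I : Ideal (𝓞 M) // Ideal.absNorm I = n} :=
    (Ideal.finite_setOfPred_absNorm_eq (S := 𝓞 M) n).to_subtype
  refine Finite.of_injective (β := {I : Ideal (𝓞 M) // Ideal.absNorm I = n})
    (fun P ↦ ⟨P.1.asIdeal, P.2⟩) fun P Q h ↦ ?_
  ext1
  exact IsDedekindDomain.HeightOneSpectrum.ext (congrArg Subtype.val h)

lemma card_heightOneSpectrum_absNorm_eq (M : Type*) [Field M] [NumberField M] (n : ℕ) :
    Nat.card {P : IsDedekindDomain.HeightOneSpectrum (𝓞 M) // Ideal.absNorm P.asIdeal = n} =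
      if IsPrimePow n then primeCount M n else 0 := by
  split_ifs with hn
  · refine Nat.card_congr
      { toFun := fun P ↦ ⟨P.1.asIdeal, P.1.isPrime, P.2⟩
        invFun := fun P ↦ ⟨⟨P.1, P.2.1, ?_⟩, P.2.2⟩
        left_inv := fun P ↦ rfl
        right_inv := fun P ↦ rfl }
    intro h
    have := P.2.2
    rw [h, Ideal.absNorm_bot] at this
    exact hn.ne_zero this.symm
  · rw [Nat.card_eq_zero]
    left
    refine ⟨fun ⟨P, hP⟩ ↦ hn ?_⟩
    have hmax := P.isMaximal
    let _ := Ideal.Quotient.field P.asIdeal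
    have hfin : Finite (𝓞 M ⧸ P.asIdeal) := Ideal.finiteQuotientOfFreeOfNeBot _ P.ne_bot
    have := Fintype.ofFinite (𝓞 M ⧸ P.asIdeal)
    rw [← hP, Ideal.absNorm_apply, Submodule.cardQuot_apply, Nat.card_eq_fintype_card]
    exact FiniteField.isPrimePow_card _

variable {q : ℕ} [NeZero q] {k L : Type*} [Field k] [Field L] [NumberField k] [NumberField L]
  [Algebra k L] [IsGalois k L]

lemma primeCount_dihedral (e : (L ≃ₐ[k] L) ≃* DihedralGroup q) (hq : Odd q)
    {F K : IntermediateField k L}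
    (hF : F = fixedField ((Subgroup.closure {(r 1 : DihedralGroup q)}).comap e.toMonoidHom))
    (hK : K = fixedField ((Subgroup.closure {(sr 0 : DihedralGroup q)}).comap e.toMonoidHom))
    {n : ℕ} (hn : IsPrimePow n) :
    primeCount L n + 2 * primeCount k n = primeCount F n + 2 * primeCount K n := by
  have : FiniteDimensional k L := Module.Finite.of_restrictScalars_finite ℚ k L
  obtain ⟨p, f, hp, hf, rfl⟩ := hn
  have : Fact p.Prime := ⟨hp.nat_prime⟩
  have key := Nat.eq_of_sum_divisors_eq
    (a := fun f ↦ f * (primeCount L (p ^ f) + 2 * primeCount k (p ^ f)))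
    (b := fun f ↦ f * (primeCount F (p ^ f) + 2 * primeCount K (p ^ f))) ?_ f hf.ne'
  · exact Nat.eq_of_mul_eq_mul_left hf key
  · intro m hm
    have h := galAvg_dihedral e hq hF hK (frobFixed p m L) (frobFixed_conj p m)
    rw [← card_frobHom_eq_galAvg p m L L, ← card_frobHom_eq_galAvg p m k L,
      ← card_frobHom_eq_galAvg p m F L, ← card_frobHom_eq_galAvg p m K L,
      card_frobHom p L hm, card_frobHom p k hm, card_frobHom p F hm, card_frobHom p K hm] at h
    norm_cast at h
    simp only [mul_add, Finset.sum_add_distrib, mul_left_comm _ 2, ← Finset.mul_sum]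
    exact h

/-- The absolute norms of the primes in a disjoint union of the sets of primes of number fields. -/
noncomputable def primeSumNorm (M₁ M₂ M₃ : Type*) [Field M₁] [Field M₂] [Field M₃] [NumberField M₁]
    [NumberField M₂] [NumberField M₃] : IsDedekindDomain.HeightOneSpectrum (𝓞 M₁) ⊕
      (IsDedekindDomain.HeightOneSpectrum (𝓞 M₂) ⊕ IsDedekindDomain.HeightOneSpectrum (𝓞 M₃)) → ℕ :=
  Sum.elim (fun P ↦ Ideal.absNorm P.asIdeal)
    (Sum.elim (fun P ↦ Ideal.absNorm P.asIdeal) (fun P ↦ Ideal.absNorm P.asIdeal))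

lemma finite_and_card_primeSumNorm_eq (M₁ M₂ M₃ : Type*) [Field M₁] [Field M₂] [Field M₃]
    [NumberField M₁] [NumberField M₂] [NumberField M₃] (n : ℕ) :
    Finite {P // primeSumNorm M₁ M₂ M₃ P = n} ∧ Nat.card {P // primeSumNorm M₁ M₂ M₃ P = n} =
      if IsPrimePow n then primeCount M₁ n + (primeCount M₂ n + primeCount M₃ n) else 0 := by
  have i1 := finite_heightOneSpectrum_absNorm_eq M₁ n
  have i2 := finite_heightOneSpectrum_absNorm_eq M₂ n
  have i3 := finite_heightOneSpectrum_absNorm_eq M₃ n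
  let E : {P // primeSumNorm M₁ M₂ M₃ P = n} ≃
      {P : IsDedekindDomain.HeightOneSpectrum (𝓞 M₁) // Ideal.absNorm P.asIdeal = n} ⊕
      ({P : IsDedekindDomain.HeightOneSpectrum (𝓞 M₂) // Ideal.absNorm P.asIdeal = n} ⊕
      {P : IsDedekindDomain.HeightOneSpectrum (𝓞 M₃) // Ideal.absNorm P.asIdeal = n}) :=
    (Equiv.subtypeSum (p := fun P ↦ primeSumNorm M₁ M₂ M₃ P = n)).trans
      (Equiv.sumCongr (Equiv.refl _) Equiv.subtypeSum)
  refine ⟨Finite.of_equiv _ E.symm, ?_⟩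
  rw [Nat.card_congr E, Nat.card_sum, Nat.card_sum, card_heightOneSpectrum_absNorm_eq,
    card_heightOneSpectrum_absNorm_eq, card_heightOneSpectrum_absNorm_eq]
  split_ifs <;> rfl

lemma exists_primes_equiv_dihedral (e : (L ≃ₐ[k] L) ≃* DihedralGroup q) (hq : Odd q)
    {F K : IntermediateField k L}
    (hF : F = fixedField ((Subgroup.closure {(r 1 : DihedralGroup q)}).comap e.toMonoidHom))
    (hK : K = fixedField ((Subgroup.closure {(sr 0 : DihedralGroup q)}).comap e.toMonoidHom)) :
    ∃ E : (IsDedekindDomain.HeightOneSpectrum (𝓞 L) ⊕ (IsDedekindDomain.HeightOneSpectrum (𝓞 k) ⊕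
        IsDedekindDomain.HeightOneSpectrum (𝓞 k))) ≃
      (IsDedekindDomain.HeightOneSpectrum (𝓞 F) ⊕ (IsDedekindDomain.HeightOneSpectrum (𝓞 K) ⊕
        IsDedekindDomain.HeightOneSpectrum (𝓞 K))),
      ∀ P, primeSumNorm F K K (E P) = primeSumNorm L k k P := by
  have hE : ∀ n, Nonempty ({P // primeSumNorm L k k P = n} ≃ {P // primeSumNorm F K K P = n}) := by
    intro n
    obtain ⟨h1, h2⟩ := finite_and_card_primeSumNorm_eq L k k n
    obtain ⟨h3, h4⟩ := finite_and_card_primeSumNorm_eq F K K n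
    refine Finite.card_eq.1 ?_
    rw [h2, h4]
    split_ifs with hn
    · have := primeCount_dihedral e hq hF hK hn
      omega
    · rfl
  exact ⟨Equiv.ofFiberEquiv fun n ↦ (hE n).some, fun P ↦ Equiv.ofFiberEquiv_map _ P⟩

end PrimeIdeals

section EulerProducts

/-- The sum of `(∏ N(P) ^ e(P)) ^ (-s)` over all finitely supported exponent functions `e`. -/
noncomputable def normSeries {P : Type*} (N : P → ℕ) (s : ℝ) (e : P →₀ ℕ) : ℝ :=
  ((e.prod fun v n ↦ N v ^ n : ℕ) : ℝ) ^ (-s)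

lemma normSeries_nonneg {P : Type*} (N : P → ℕ) (s : ℝ) (e : P →₀ ℕ) : 0 ≤ normSeries N s e :=
  Real.rpow_nonneg (Nat.cast_nonneg _) _

lemma normSeries_sum_elim {P Q : Type*} (N : P → ℕ) (N' : Q → ℕ) (s : ℝ) (e : (P →₀ ℕ) × (Q →₀ ℕ)) :
    normSeries (Sum.elim N N') s (Finsupp.sumFinsuppEquivProdFinsupp.symm e) =
      normSeries N s e.1 * normSeries N' s e.2 := by
  rw [normSeries, normSeries, normSeries, ← Real.mul_rpow (Nat.cast_nonneg _) (Nat.cast_nonneg _),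
    ← Nat.cast_mul]
  congr 2
  exact Finsupp.prod_sumElim e.1 e.2 (fun v n ↦ Sum.elim N N' v ^ n)

lemma hasSum_normSeries_sum_elim {P Q : Type*} {N : P → ℕ} {N' : Q → ℕ} {s a b : ℝ}
    (h : HasSum (normSeries N s) a) (h' : HasSum (normSeries N' s) b) :
    HasSum (normSeries (Sum.elim N N') s) (a * b) := by
  rw [← Finsupp.sumFinsuppEquivProdFinsupp.symm.hasSum_iff]
  have hs : Summable fun e : (P →₀ ℕ) × (Q →₀ ℕ) ↦ normSeries N s e.1 * normSeries N' s e.2 :=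
    h.summable.mul_of_nonneg h'.summable (normSeries_nonneg _ _) (normSeries_nonneg _ _)
  refine (h.mul h' hs).congr_fun ?_
  exact fun e ↦ normSeries_sum_elim N N' s e

lemma hasSum_normSeries_congr {P Q : Type*} {N : P → ℕ} {N' : Q → ℕ} {s a : ℝ} (E : P ≃ Q)
    (hE : ∀ v, N' (E v) = N v) (h : HasSum (normSeries N s) a) : HasSum (normSeries N' s) a := by
  rw [← (Finsupp.domCongr (M := ℕ) E).toEquiv.hasSum_iff]
  refine h.congr_fun fun e ↦ ?_
  change normSeries N' s (Finsupp.equivMapDomain E e) = _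
  rw [normSeries, normSeries, Finsupp.prod_equivMapDomain]
  simp only [hE]

lemma bijOn_heightOneSpectrum_finsupp_prod (R : Type*) [CommRing R] [IsDedekindDomain R] :
    Function.Injective (fun e : IsDedekindDomain.HeightOneSpectrum R →₀ ℕ ↦
      e.prod fun v n ↦ v.asIdeal ^ n) ∧
    ∀ I : Ideal R, I ≠ 0 → ∃ e : IsDedekindDomain.HeightOneSpectrum R →₀ ℕ,
      (e.prod fun v n ↦ v.asIdeal ^ n) = I := by
  have hmul : ∀ e : IsDedekindDomain.HeightOneSpectrum R →₀ ℕ,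
      (e.prod fun v n ↦ v.asIdeal ^ n) =
        (e.toMultiset.map IsDedekindDomain.HeightOneSpectrum.asIdeal).prod := by
    intro e
    rw [Finsupp.toMultiset_map, Finsupp.prod_toMultiset, Finsupp.prod_mapDomain_index]
    · simp
    · intro v m n; exact pow_add _ _ _
  have hinj : Function.Injective (IsDedekindDomain.HeightOneSpectrum.asIdeal (R := R)) :=
    fun v w h ↦ IsDedekindDomain.HeightOneSpectrum.ext h
  constructor
  · intro e e' h
    simp only [hmul] at h
    have key : ∀ e : IsDedekindDomain.HeightOneSpectrum R →₀ ℕ,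
        UniqueFactorizationMonoid.normalizedFactors
          (e.toMultiset.map IsDedekindDomain.HeightOneSpectrum.asIdeal).prod =
        e.toMultiset.map IsDedekindDomain.HeightOneSpectrum.asIdeal := fun e ↦ by
      refine UniqueFactorizationMonoid.normalizedFactors_prod_of_prime fun I hI ↦ ?_
      obtain ⟨v, -, rfl⟩ := Multiset.mem_map.1 hI
      exact v.prime
    have := (key e).symm.trans ((congrArg _ h).trans (key e'))
    exact Multiset.toFinsupp.symm.injective (Multiset.map_injective hinj this)
  · intro I hI
    have hI' : ∀ J ∈ UniqueFactorizationMonoid.normalizedFactors I,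
        ∃ v : IsDedekindDomain.HeightOneSpectrum R, v.asIdeal = J := fun J hJ ↦
      ⟨⟨J, Ideal.isPrime_of_prime (UniqueFactorizationMonoid.prime_of_normalized_factor J hJ),
        (UniqueFactorizationMonoid.prime_of_normalized_factor J hJ).ne_zero⟩, rfl⟩
    obtain ⟨s, hs⟩ : ∃ s : Multiset (IsDedekindDomain.HeightOneSpectrum R),
        s.map IsDedekindDomain.HeightOneSpectrum.asIdeal =
          UniqueFactorizationMonoid.normalizedFactors I := by
      choose f hf using hI'
      refine ⟨(UniqueFactorizationMonoid.normalizedFactors I).attach.map fun J ↦ f J.1 J.2, ?_⟩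
      rw [Multiset.map_map]
      refine (Multiset.map_congr rfl fun J _ ↦ hf J.1 J.2).trans ?_
      exact Multiset.attach_map_val _
    refine ⟨Multiset.toFinsupp s, ?_⟩
    rw [hmul, Multiset.toFinsupp_toMultiset, hs]
    exact associated_iff_eq.1 (UniqueFactorizationMonoid.prod_normalizedFactors hI)

lemma hasSum_normSeries_dedekindZeta (M : Type*) [Field M] [NumberField M] {s : ℝ} (hs : s ≠ 0)
    (h0 : dedekindZeta M s ≠ 0) :
    ∃ a : ℝ, HasSum (normSeries (fun v : IsDedekindDomain.HeightOneSpectrum (𝓞 M) ↦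
      Ideal.absNorm v.asIdeal) s) a ∧ dedekindZeta M s = a := by
  have hterm : LSeries.term (fun n ↦ Nat.card {I : Ideal (𝓞 M) // Ideal.absNorm I = n}) s =
      fun n : ℕ ↦ (((Nat.card {I : Ideal (𝓞 M) // Ideal.absNorm I = n} : ℝ) *
        (n : ℝ) ^ (-s) : ℝ) : ℂ) := by
    ext n
    rw [LSeries.term_def]
    split_ifs with hn
    · rw [hn, Nat.cast_zero, Real.zero_rpow (neg_ne_zero.2 hs), mul_zero, Complex.ofReal_zero]
    · rw [Complex.ofReal_mul, Complex.ofReal_cpow (Nat.cast_nonneg _), Complex.ofReal_neg,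
        Complex.cpow_neg, div_eq_mul_inv]
      simp
  rw [dedekindZeta, LSeries, hterm] at h0 ⊢
  have hsum : Summable fun n : ℕ ↦ (Nat.card {I : Ideal (𝓞 M) // Ideal.absNorm I = n} : ℝ) *
      (n : ℝ) ^ (-s) := by
    by_contra h
    exact h0 (tsum_eq_zero_of_not_summable (by rwa [Complex.summable_ofReal]))
  refine ⟨_, ?_, (Complex.ofReal_tsum _).symm⟩
  have hfin : ∀ n, Finite {I : Ideal (𝓞 M) // Ideal.absNorm I = n} := fun n ↦
    (Ideal.finite_setOfPred_absNorm_eq (S := 𝓞 M) n).to_subtype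
  have := fun n ↦ Fintype.ofFinite {I : Ideal (𝓞 M) // Ideal.absNorm I = n}
  have hinner : ∀ n : ℕ, HasSum (fun _ : {I : Ideal (𝓞 M) // Ideal.absNorm I = n} ↦ (n : ℝ) ^ (-s))
      ((Nat.card {I : Ideal (𝓞 M) // Ideal.absNorm I = n} : ℝ) * (n : ℝ) ^ (-s)) := by
    intro n
    have := hasSum_fintype (fun _ : {I : Ideal (𝓞 M) // Ideal.absNorm I = n} ↦ (n : ℝ) ^ (-s))
    rwa [Finset.sum_const, nsmul_eq_mul, Finset.card_univ, ← Nat.card_eq_fintype_card] at this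
  have hsig : HasSum (fun x : Σ n, {I : Ideal (𝓞 M) // Ideal.absNorm I = n} ↦ (x.1 : ℝ) ^ (-s))
      (∑' n : ℕ, (Nat.card {I : Ideal (𝓞 M) // Ideal.absNorm I = n} : ℝ) * (n : ℝ) ^ (-s)) := by
    have hs' : Summable (fun x : Σ n, {I : Ideal (𝓞 M) // Ideal.absNorm I = n} ↦
        (x.1 : ℝ) ^ (-s)) := by
      rw [summable_sigma_of_nonneg fun x ↦ Real.rpow_nonneg (Nat.cast_nonneg _) _]
      refine ⟨fun n ↦ (hinner n).summable, ?_⟩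
      simpa only [(hinner _).tsum_eq] using hsum
    have := hs'.hasSum.sigma hinner
    rw [this.tsum_eq]
    exact hs'.hasSum
  rw [← (Equiv.sigmaFiberEquiv (Ideal.absNorm : Ideal (𝓞 M) → ℕ)).symm.hasSum_iff] at hsig
  obtain ⟨hinj, hsurj⟩ := bijOn_heightOneSpectrum_finsupp_prod (𝓞 M)
  rw [← hinj.hasSum_iff] at hsig
  · refine hsig.congr_fun fun e ↦ ?_
    rw [normSeries]
    change _ = ((Ideal.absNorm (e.prod fun v n ↦ v.asIdeal ^ n) : ℕ) : ℝ) ^ (-s)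
    rw [map_finsuppProd]
    simp only [map_pow]
  · intro I hI
    have : I = 0 := by
      by_contra h
      exact hI (hsurj I h)
    change ((Ideal.absNorm I : ℕ) : ℝ) ^ (-s) = 0
    rw [this, map_zero, Nat.cast_zero, Real.zero_rpow (neg_ne_zero.2 hs)]

end EulerProducts

section Residues

open Filter Topology

lemma eventually_dedekindZeta_ne_zero (M : Type*) [Field M] [NumberField M] :
    ∀ᶠ s : ℝ in 𝓝[>] 1, dedekindZeta M s ≠ 0 := by
  have h := (tendsto_sub_one_mul_dedekindZeta_nhdsGT M).eventually_ne
    (Complex.ofReal_ne_zero.2 (dedekindZeta_residue_ne_zero M))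
  filter_upwards [h] with s hs h0
  exact hs (by rw [h0, mul_zero])

lemma tendsto_sub_one_pow_mul_dedekindZeta (M N : Type*) [Field M] [NumberField M] [Field N]
    [NumberField N] : Tendsto (fun s : ℝ ↦ ((s : ℂ) - 1) ^ 3 *
      (dedekindZeta M s * (dedekindZeta N s * dedekindZeta N s))) (𝓝[>] 1)
      (𝓝 ((dedekindZeta_residue M * dedekindZeta_residue N ^ 2 : ℝ) : ℂ)) := by
  have hM := tendsto_sub_one_mul_dedekindZeta_nhdsGT M
  have hN := tendsto_sub_one_mul_dedekindZeta_nhdsGT N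
  push_cast
  refine (hM.mul (hN.pow 2)).congr fun s ↦ ?_
  ring

lemma dedekindZeta_residue_dihedral {q : ℕ} [NeZero q] {k L : Type*} [Field k] [Field L]
    [NumberField k] [NumberField L] [Algebra k L] [IsGalois k L]
    (e : (L ≃ₐ[k] L) ≃* DihedralGroup q) (hq : Odd q) {F K : IntermediateField k L}
    (hF : F = fixedField ((Subgroup.closure {(r 1 : DihedralGroup q)}).comap e.toMonoidHom))
    (hK : K = fixedField ((Subgroup.closure {(sr 0 : DihedralGroup q)}).comap e.toMonoidHom)) :
    dedekindZeta_residue L * dedekindZeta_residue k ^ 2 =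
      dedekindZeta_residue F * dedekindZeta_residue K ^ 2 := by
  obtain ⟨E, hE⟩ := exists_primes_equiv_dihedral e hq hF hK
  have h1 : ∀ᶠ s : ℝ in 𝓝[>] 1, dedekindZeta L s * (dedekindZeta k s * dedekindZeta k s) =
      dedekindZeta F s * (dedekindZeta K s * dedekindZeta K s) := by
    filter_upwards [eventually_dedekindZeta_ne_zero L, eventually_dedekindZeta_ne_zero k,
      eventually_dedekindZeta_ne_zero F, eventually_dedekindZeta_ne_zero K,
      self_mem_nhdsWithin] with s hL hk hF hK hs
    have hs0 : s ≠ 0 := (zero_lt_one.trans hs).ne'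
    obtain ⟨a, ha, ha'⟩ := hasSum_normSeries_dedekindZeta L hs0 hL
    obtain ⟨b, hb, hb'⟩ := hasSum_normSeries_dedekindZeta k hs0 hk
    obtain ⟨c, hc, hc'⟩ := hasSum_normSeries_dedekindZeta F hs0 hF
    obtain ⟨d, hd, hd'⟩ := hasSum_normSeries_dedekindZeta K hs0 hK
    have h1 := hasSum_normSeries_congr (N' := primeSumNorm F K K) E hE
      (hasSum_normSeries_sum_elim ha (hasSum_normSeries_sum_elim hb hb))
    have h2 := hasSum_normSeries_sum_elim hc (hasSum_normSeries_sum_elim hd hd)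
    rw [ha', hb', hc', hd']
    exact_mod_cast h1.unique h2
  refine Complex.ofReal_injective (tendsto_nhds_unique
    ((tendsto_sub_one_pow_mul_dedekindZeta L k).congr' ?_)
    (tendsto_sub_one_pow_mul_dedekindZeta F K))
  filter_upwards [h1] with s hs
  rw [hs]

end Residues

section Different

lemma exists_generator_mod_prime {B : Type*} [CommRing B] [IsDedekindDomain B] (P J : Ideal B)
    [P.IsPrime] (hP : P ≠ ⊥) [Finite (B ⧸ P)] (hJ : ¬ J ≤ P) :
    ∃ α ∈ J, α ∉ P ∧ (∀ b : B, b ∈ P ∨ ∃ i : ℕ, b - α ^ i ∈ P) ∧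
      α ^ Nat.card (B ⧸ P) - α ∈ P ∧ α ^ Nat.card (B ⧸ P) - α ∉ P ^ 2 := by
  have hmax : P.IsMaximal := Ring.DimensionLEOne.maximalOfPrime hP inferInstance
  let _ : Field (B ⧸ P) := Ideal.Quotient.field P
  set N := Nat.card (B ⧸ P) with hN
  obtain ⟨u, hu⟩ := IsCyclic.exists_generator (α := (B ⧸ P)ˣ)
  obtain ⟨a, ha⟩ := Ideal.Quotient.mk_surjective (I := P) (u : B ⧸ P)
  have hpow : ∀ x : B, x ^ N - x ∈ P := fun x ↦ by
    have := Fintype.ofFinite (B ⧸ P)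
    rw [← Ideal.Quotient.eq, map_pow, hN, Nat.card_eq_fintype_card, FiniteField.pow_card]
  have hNP : (N : B) ∈ P := by
    have := Fintype.ofFinite (B ⧸ P)
    rw [← Ideal.Quotient.eq_zero_iff_mem, map_natCast, hN, Nat.card_eq_fintype_card,
      FiniteField.cast_card_eq_zero]
  have hN1 : 1 ≤ N := Nat.card_pos
  obtain ⟨t, ht, ht2⟩ : ∃ t ∈ P, t ∉ P ^ 2 := by
    have := Ideal.exists_mem_pow_notMem_pow_succ P hP hmax.ne_top 1
    simpa using this
  obtain ⟨a', ha', ha2⟩ : ∃ a', a' - a ∈ P ∧ a' ^ N - a' ∉ P ^ 2 := by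
    by_cases h : a ^ N - a ∈ P ^ 2
    · refine ⟨a + t, by simpa using ht, fun h' ↦ ht2 ?_⟩
      have h1 : (a + t) ^ N - a ^ N ∈ P ^ 2 := by
        obtain ⟨c, hc⟩ := Polynomial.binomExpansion (Polynomial.X ^ N : Polynomial B) a t
        simp only [Polynomial.eval_pow, Polynomial.eval_X, Polynomial.derivative_X_pow,
          Polynomial.eval_mul, Polynomial.eval_C] at hc
        rw [hc]
        have e1 : (N : B) * a ^ (N - 1) * t ∈ P ^ 2 := by
          rw [pow_two, mul_assoc]
          exact Ideal.mul_mem_mul hNP (Ideal.mul_mem_left _ _ ht)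
        have e2 : c * t ^ 2 ∈ P ^ 2 := Ideal.mul_mem_left _ _ (Ideal.pow_mem_pow ht 2)
        have : a ^ N + N * a ^ (N - 1) * t + c * t ^ 2 - a ^ N =
          N * a ^ (N - 1) * t + c * t ^ 2 := by ring
        rw [this]
        exact add_mem e1 e2
      have : t = ((a + t) ^ N - a ^ N) + (a ^ N - a) - ((a + t) ^ N - (a + t)) := by ring
      rw [this]
      exact sub_mem (add_mem h1 h) h'
    · exact ⟨a, by simp, h⟩
  have hcop : IsCoprime (P ^ 2) J := by
    refine IsCoprime.pow_left ?_
    rw [Ideal.isCoprime_iff_sup_eq]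
    by_contra hne
    obtain ⟨m, hm, hle⟩ := Ideal.exists_le_maximal _ hne
    exact hJ ((le_sup_right.trans hle).trans
      (hmax.eq_of_le hm.ne_top (le_sup_left.trans hle)).ge)
  obtain ⟨x, hx, y, hy, hxy⟩ := Ideal.isCoprime_iff_exists.1 hcop
  have hα : y * a' - a' ∈ P ^ 2 := by
    have : y * a' - a' = -(x * a') := by rw [eq_sub_of_add_eq' hxy]; ring
    rw [this]
    exact neg_mem (Ideal.mul_mem_right _ _ hx)
  have hαP : Ideal.Quotient.mk P (y * a') = u := by
    rw [← ha, Ideal.Quotient.eq]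
    have := add_mem (Ideal.pow_le_self two_ne_zero hα) ha'
    simpa using this
  refine ⟨y * a', Ideal.mul_mem_right _ _ hy, fun h ↦ u.ne_zero ?_, fun b ↦ ?_, hpow _, fun h ↦ ha2 ?_⟩
  · rw [← hαP, Ideal.Quotient.eq_zero_iff_mem.2 h]
  · by_cases hb : b ∈ P
    · exact Or.inl hb
    · right
      have hb' : Ideal.Quotient.mk P b ≠ 0 := fun h ↦ hb (Ideal.Quotient.eq_zero_iff_mem.1 h)
      obtain ⟨i, hi⟩ := (mem_powers_iff_mem_zpowers.2 (hu (Units.mk0 _ hb')))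
      refine ⟨i, ?_⟩
      rw [← Ideal.Quotient.eq, map_pow, hαP]
      simpa using (congrArg Units.val hi).symm
  · have h2 : (y * a') ^ N - a' ^ N ∈ P ^ 2 :=
      Ideal.mem_of_dvd _ (sub_dvd_pow_sub_pow _ _ N) hα
    have : a' ^ N - a' = ((y * a') ^ N - y * a') - ((y * a') ^ N - a' ^ N) + (y * a' - a') := by ring
    rw [this]
    exact add_mem (sub_mem h h2) hα

lemma Ideal.pow_le_span_pow_sup {B : Type*} [CommRing B] {P : Ideal B} {π : B}
    (hπ : π ∈ P)
    (h : P ≤ Ideal.span {π} ⊔ P ^ 2) (n : ℕ) : P ^ n ≤ Ideal.span {π ^ n} ⊔ P ^ (n + 1) := by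
  induction n with
  | zero => simp
  | succ n ih =>
    rw [pow_succ P n]
    refine (Ideal.mul_mono ih h).trans ?_
    rw [Ideal.sup_mul, Ideal.mul_sup]
    refine sup_le (sup_le ?_ ?_) ?_
    · rw [Ideal.span_singleton_mul_span_singleton, ← pow_succ]
      exact le_sup_left
    · refine le_sup_of_le_right ?_
      rw [show n + 1 + 1 = n + 2 by ring, pow_add]
      exact Ideal.mul_mono ((Ideal.span_singleton_le_iff_mem _).2 (Ideal.pow_mem_pow hπ n)) le_rfl
    · refine le_sup_of_le_right ?_
      rw [pow_succ P (n + 1)]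
      exact Ideal.mul_mono le_rfl (sup_le ((Ideal.span_singleton_le_iff_mem _).2 hπ)
        (Ideal.pow_le_self two_ne_zero))

lemma exists_conductor_not_le (A : Type*) {B : Type*} [CommRing A] [CommRing B] [Algebra A B]
    [IsDedekindDomain B] [Module.Finite A B] (P : Ideal B) [P.IsPrime] [Finite (B ⧸ P)]
    (hP : (P.under A).map (algebraMap A B) ≠ ⊥) : ∃ α : B, ¬ conductor A α ≤ P := by
  set p := P.under A with hp
  have hP0 : P ≠ ⊥ := by
    rintro rfl
    exact hP (le_bot_iff.1 Ideal.map_comap_le)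
  obtain ⟨e, J, hJ, hpJ⟩ := WfDvdMonoid.max_power_factor (a₀ := p.map (algebraMap A B)) (x := P) hP
    (Ideal.prime_of_isPrime hP0 inferInstance).irreducible
  rw [Ideal.dvd_iff_le] at hJ
  obtain ⟨α, hαJ, hαP, hα, hπ, hπ2⟩ := exists_generator_mod_prime P J hP0 hJ
  refine ⟨α, fun hle ↦ ?_⟩
  set S := Algebra.adjoin A {α} with hS
  have hαS : α ∈ S := Algebra.self_mem_adjoin_singleton A α
  set π := α ^ Nat.card (B ⧸ P) - α with hπdef
  have hπS : π ∈ S := sub_mem (pow_mem hαS _) hαS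
  have hspan : P ≤ Ideal.span {π} ⊔ P ^ 2 := fun x hx ↦ by
    obtain ⟨d, r, hr, hdr⟩ := Ideal.exists_mul_add_mem_pow_succ (P := P) hP0 (i := 1) (a := π) (c := x)
      (by simpa using hπ) (by simpa using hπ2) (by simpa using hx)
    rw [← hdr]
    exact Submodule.add_mem_sup (Ideal.mem_span_singleton.2 ⟨d, rfl⟩) hr
  have happrox : ∀ n : ℕ, ∀ b : B, ∃ s ∈ S, b - s ∈ P ^ n := by
    intro n
    induction n with
    | zero => exact fun b ↦ ⟨0, S.zero_mem, by simp⟩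
    | succ n ih =>
      intro b
      obtain ⟨s, hs, hbs⟩ := ih b
      obtain ⟨y, hy, z, hz, hyz⟩ := Submodule.mem_sup.1 (Ideal.pow_le_span_pow_sup hπ hspan n hbs)
      obtain ⟨d, rfl⟩ := Ideal.mem_span_singleton.1 hy
      have hd : ∃ s' ∈ S, d - s' ∈ P := by
        rcases hα d with h | ⟨i, hi⟩
        · exact ⟨0, S.zero_mem, by simpa using h⟩
        · exact ⟨α ^ i, pow_mem hαS i, hi⟩
      obtain ⟨s', hs', hds⟩ := hd
      refine ⟨s + π ^ n * s', add_mem hs (mul_mem (pow_mem hπS n) hs'), ?_⟩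
      have : b - (s + π ^ n * s') = π ^ n * (d - s') + z := by linear_combination -hyz
      rw [this]
      refine add_mem ?_ hz
      rw [pow_succ]
      exact Ideal.mul_mem_mul (Ideal.pow_mem_pow hπ n) hds
  set T : Submodule A B := Subalgebra.toSubmodule S with hT
  have hmulT : ∀ a ∈ S, ∀ t ∈ T, a * t ∈ T := fun a ha t ht ↦ S.mul_mem ha ht
  let f : (B ⧸ T) →ₗ[A] (B ⧸ T) := T.mapQ T (LinearMap.mulLeft A α) (fun t ht ↦ hmulT α hαS t ht)
  have hf : LinearMap.range f ≤ p • ⊤ := by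
    rintro _ ⟨x, rfl⟩
    obtain ⟨b, rfl⟩ := T.mkQ_surjective x
    obtain ⟨s, hs, hbs⟩ := happrox e b
    have h1 : α * (b - s) ∈ p.map (algebraMap A B) := by
      rw [hpJ, mul_comm α]
      exact Ideal.mul_mem_mul hbs hαJ
    have h2 : f (T.mkQ b) = T.mkQ (α * (b - s)) := by
      change T.mkQ (α * b) = _
      rw [← sub_eq_zero, ← map_sub, Submodule.mkQ_apply, Submodule.Quotient.mk_eq_zero]
      have : α * b - α * (b - s) = α * s := by ring
      rw [this]
      exact hmulT α hαS s hs
    rw [h2]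
    have h3 : α * (b - s) ∈ (p • ⊤ : Submodule A B) := by
      rw [Ideal.smul_top_eq_map]
      exact h1
    have := Submodule.mem_map_of_mem (f := T.mkQ) h3
    rw [Submodule.map_smul''] at this
    exact Submodule.smul_mono le_rfl le_top this
  obtain ⟨g, hg, -, hgc, hgf⟩ :=
    LinearMap.exists_monic_and_natDegree_eq_and_coeff_mem_pow_and_aeval_eq_zero A f p hf
  have haeval : ∀ (g : Polynomial A) (b : B),
      Polynomial.aeval f g (T.mkQ b) = T.mkQ (Polynomial.aeval α g * b) := by
    intro g b
    induction g using Polynomial.induction_on' with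
    | add u v hu hv => simp only [map_add, LinearMap.add_apply, hu, hv, add_mul]
    | monomial n a =>
      rw [Polynomial.aeval_monomial, Polynomial.aeval_monomial]
      have : ∀ n : ℕ, (f ^ n) (T.mkQ b) = T.mkQ (α ^ n * b) := by
        intro n
        induction n with
        | zero => simp
        | succ n ih =>
          rw [pow_succ', Module.End.mul_apply, ih, pow_succ', mul_assoc]
          rfl
      rw [Module.End.mul_apply, this, Module.algebraMap_end_apply, ← map_smul, Algebra.smul_def,
        mul_assoc]
  have hmem : Polynomial.aeval α g ∈ conductor A α := by
    intro b
    have := haeval g b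
    rw [hgf, LinearMap.zero_apply, eq_comm, Submodule.mkQ_apply, Submodule.Quotient.mk_eq_zero]
      at this
    exact this
  have h4 := hle hmem
  rw [Polynomial.aeval_eq_sum_range, Finset.sum_range_succ, hg.coeff_natDegree, one_smul] at h4
  have h5 : ∑ i ∈ Finset.range g.natDegree, g.coeff i • α ^ i ∈ P := by
    refine sum_mem fun i hi ↦ ?_
    rw [Algebra.smul_def]
    refine Ideal.mul_mem_right _ _ ?_
    have : g.coeff i ∈ p := Ideal.pow_le_self
      (Nat.sub_ne_zero_of_lt (Finset.mem_range.1 hi)) (hgc i)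
    exact this
  have h6 := (Ideal.add_mem_iff_right P h5).1 h4
  exact hαP (Ideal.IsPrime.mem_of_pow_mem inferInstance _ h6)

end Different

section DifferentProduct

lemma Ideal.le_of_forall_isMaximal_exists_mul_mem {B : Type*} [CommRing B] {I J : Ideal B}
    (h : ∀ P : Ideal B, P.IsMaximal → ∃ c ∉ P, ∀ x ∈ I, c * x ∈ J) : I ≤ J := by
  by_contra hne
  have htop : (J.colon (I : Set B)) ≠ ⊤ := fun h ↦ hne fun x hx ↦ by
    have := Submodule.mem_colon.1 (h ▸ Submodule.mem_top : (1 : B) ∈ J.colon (I : Set B)) x hx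
    simpa using this
  obtain ⟨P, hP, hle⟩ := Ideal.exists_le_maximal _ htop
  obtain ⟨c, hc, hcI⟩ := h P hP
  exact hc (hle (Submodule.mem_colon.2 fun x hx ↦ hcI x hx))

/-- The ideal of `𝓞 L` generated by the elements `h x - x`. -/
noncomputable def moveIdeal {L : Type*} [Field L] (h : L ≃+* L) : Ideal (𝓞 L) :=
  Ideal.span (Set.range fun x : 𝓞 L ↦ h • x - x)

lemma adjoin_eq_top_of_conductor_ne_bot {M L : Type*} [Field M] [Field L] [NumberField M]
    [NumberField L] [Algebra M L] {α : 𝓞 L} (hα : conductor (𝓞 M) α ≠ ⊥) :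
    Algebra.adjoin M {algebraMap (𝓞 L) L α} = ⊤ := by
  obtain ⟨c, hc, hc0⟩ := Submodule.exists_mem_ne_zero_of_ne_bot hα
  have key : ∀ b : 𝓞 L, algebraMap (𝓞 L) L (c * b) ∈ Algebra.adjoin M {algebraMap (𝓞 L) L α} := by
    intro b
    have h1 := (mem_conductor_iff.1 hc) b
    generalize c * b = d at h1
    induction h1 using Algebra.adjoin_induction with
    | mem x hx => exact hx ▸ Algebra.self_mem_adjoin_singleton _ _
    | algebraMap r =>
      rw [← IsScalarTower.algebraMap_apply, IsScalarTower.algebraMap_apply (𝓞 M) M L]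
      exact Subalgebra.algebraMap_mem _ _
    | add x y _ _ hx hy => rw [map_add]; exact add_mem hx hy
    | mul x y _ _ hx hy => rw [map_mul]; exact mul_mem hx hy
  have hinv : ∀ x ∈ Algebra.adjoin M {algebraMap (𝓞 L) L α}, x⁻¹ ∈
      Algebra.adjoin M {algebraMap (𝓞 L) L α} := fun x hx ↦
    Subalgebra.inv_mem_of_algebraic (A := Algebra.adjoin M {algebraMap (𝓞 L) L α}) (x := ⟨x, hx⟩)
      (Algebra.IsAlgebraic.isAlgebraic (R := M) x)
  have h0 : algebraMap (𝓞 L) L c ≠ 0 := by simpa using hc0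
  rw [eq_top_iff]
  rintro x -
  obtain ⟨a, b, hb, rfl⟩ := IsFractionRing.div_surjective (A := 𝓞 L) x
  have hb0 : algebraMap (𝓞 L) L b ≠ 0 := by simpa using nonZeroDivisors.ne_zero hb
  have : algebraMap (𝓞 L) L a / algebraMap (𝓞 L) L b =
      algebraMap (𝓞 L) L (c * a) * (algebraMap (𝓞 L) L (c * b))⁻¹ := by
    rw [map_mul, map_mul]
    field_simp
  rw [this]
  exact mul_mem (key a) (hinv _ (key b))

lemma aeval_derivative_minpoly_eq_prod {M L : Type*} [Field M] [Field L] [NumberField M]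
    [NumberField L] [Algebra M L] [IsGalois M L] {α : 𝓞 L}
    (hα : Algebra.adjoin M {algebraMap (𝓞 L) L α} = ⊤) :
    Polynomial.aeval α (Polynomial.derivative (minpoly (𝓞 M) α)) =
      ∏ h ∈ Finset.univ.erase (1 : L ≃ₐ[M] L), (α - h • α) := by
  have hfin : FiniteDimensional M L := Module.Finite.of_restrictScalars_finite ℚ M L
  set x := algebraMap (𝓞 L) L α with hx
  have hxi : IsIntegral M x := Algebra.IsIntegral.isIntegral x
  have hinj : Function.Injective fun h : L ≃ₐ[M] L ↦ h x := by
    intro g h hgh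
    have : (g : L →ₐ[M] L) = h := AlgHom.ext_of_adjoin_eq_top hα (by simpa using hgh)
    exact AlgEquiv.coe_toAlgHom_injective this
  have hmin : (minpoly M x).map (algebraMap M L) =
      ∏ h : L ≃ₐ[M] L, (Polynomial.X - Polynomial.C (h x)) := by
    have hmon : ((minpoly M x).map (algebraMap M L)).Monic := (minpoly.monic hxi).map _
    refine (Polynomial.eq_of_monic_of_dvd_of_natDegree_le
      (Polynomial.monic_prod_of_monic _ _ fun h _ ↦ Polynomial.monic_X_sub_C _) hmon ?_ ?_)
    · refine Finset.prod_dvd_of_coprime ?_ ?_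
      · intro g _ h _ hgh
        exact Polynomial.isCoprime_X_sub_C_of_isUnit_sub
          (sub_ne_zero.2 fun h' ↦ hgh (hinj h')).isUnit
      · intro h _
        rw [Polynomial.dvd_iff_isRoot, Polynomial.IsRoot, Polynomial.eval_map_algebraMap,
          Polynomial.aeval_algHom_apply h, minpoly.aeval, map_zero]
    · rw [Polynomial.natDegree_prod_of_monic _ _ fun h _ ↦ Polynomial.monic_X_sub_C _]
      simp only [Polynomial.natDegree_X_sub_C, Finset.sum_const, Finset.card_univ,
        Polynomial.natDegree_map, smul_eq_mul, mul_one]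
      rw [← Nat.card_eq_fintype_card, IsGalois.card_aut_eq_finrank,
        (PowerBasis.ofAdjoinEqTop hxi hα).finrank, ← PowerBasis.natDegree_minpoly]
      simp
  have hαi : IsIntegral (𝓞 M) α := Algebra.IsIntegral.isIntegral α
  apply FaithfulSMul.algebraMap_injective (𝓞 L) L
  have h1 : algebraMap (𝓞 L) L (Polynomial.aeval α (Polynomial.derivative (minpoly (𝓞 M) α))) =
      Polynomial.eval x (Polynomial.derivative ((minpoly M x).map (algebraMap M L))) := by
    rw [minpoly.isIntegrallyClosed_eq_field_fractions M L hαi, Polynomial.map_map,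
      ← IsScalarTower.algebraMap_eq, Polynomial.derivative_map, Polynomial.eval_map_algebraMap,
      Polynomial.aeval_algebraMap_apply]
  rw [h1, hmin, ← Finset.mul_prod_erase _ _ (Finset.mem_univ (1 : L ≃ₐ[M] L)),
    Polynomial.derivative_mul]
  simp [Polynomial.eval_prod, x]
  rfl

lemma sub_smul_dvd_smul_sub_of_mem_adjoin {M L : Type*} [Field M] [Field L] [NumberField M]
    [NumberField L] [Algebra M L] {α : 𝓞 L} (h : L ≃ₐ[M] L) {y : 𝓞 L}
    (hy : y ∈ Algebra.adjoin (𝓞 M) {α}) : α - h • α ∣ h • y - y := by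
  induction hy using Algebra.adjoin_induction with
  | mem x hx => rw [hx, ← neg_sub]; exact neg_dvd.2 dvd_rfl
  | algebraMap r =>
    have : h • algebraMap (𝓞 M) (𝓞 L) r = algebraMap (𝓞 M) (𝓞 L) r :=
      RingOfIntegers.ext (h.commutes (algebraMap (𝓞 M) M r))
    rw [this, sub_self]
    exact dvd_zero _
  | add x y _ _ hx hy =>
    have : h • (x + y) - (x + y) = (h • x - x) + (h • y - y) := by rw [smul_add]; ring
    rw [this]
    exact dvd_add hx hy
  | mul x y _ _ hx hy =>
    have : h • (x * y) - x * y = h • x * (h • y - y) + (h • x - x) * y := by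
      rw [smul_mul']; ring
    rw [this]
    exact dvd_add (hy.mul_left _) (hx.mul_right _)

lemma exists_mul_mem_of_mem_conductor {M L : Type*} [Field M] [Field L] [NumberField M]
    [NumberField L] [Algebra M L] {α c : 𝓞 L} (hc : c ∈ conductor (𝓞 M) α) {P : Ideal (𝓞 L)}
    (hcP : c ∉ P) (h : L ≃ₐ[M] L) :
    ∃ d ∉ P, ∀ y ∈ moveIdeal h.toRingEquiv, α - h • α ∣ d * y := by
  by_cases hP' : α - h • α ∈ P
  · refine ⟨h • c, fun hhc ↦ hcP ?_, fun y hy ↦ ?_⟩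
    · have h1 : h • c - c ∈ P := Ideal.mem_of_dvd P
        (sub_smul_dvd_smul_sub_of_mem_adjoin h (by simpa using mem_conductor_iff.1 hc 1)) hP'
      have := sub_mem hhc h1
      simpa using this
    · have : moveIdeal h.toRingEquiv ≤ (Ideal.span {α - h • α}).colon ({h • c} : Set (𝓞 L)) := by
        refine Ideal.span_le.2 ?_
        rintro _ ⟨x, rfl⟩
        rw [SetLike.mem_coe, Submodule.mem_colon_singleton, Ideal.mem_span_singleton]
        have h2 : (h.toRingEquiv • x - x) • (h • c) =
            (h • (c * x) - c * x) - (h • c - c) * x := by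
          change (h • x - x) * (h • c) = _
          rw [smul_mul']; ring
        rw [h2]
        exact dvd_sub (sub_smul_dvd_smul_sub_of_mem_adjoin h (mem_conductor_iff.1 hc x))
          ((sub_smul_dvd_smul_sub_of_mem_adjoin h (by simpa using mem_conductor_iff.1 hc 1)).mul_right _)
      have := this hy
      rw [Submodule.mem_colon_singleton, Ideal.mem_span_singleton, smul_eq_mul, mul_comm] at this
      exact this
  · exact ⟨_, hP', fun y _ ↦ dvd_mul_right _ _⟩

lemma differentIdeal_eq_prod (M L : Type*) [Field M] [Field L] [NumberField M]
    [NumberField L] [Algebra M L] [IsGalois M L] :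
    differentIdeal (𝓞 M) (𝓞 L) =
      ∏ h ∈ Finset.univ.erase (1 : L ≃ₐ[M] L), moveIdeal h.toRingEquiv := by
  have hP0 : ∀ P : Ideal (𝓞 L), P.IsMaximal → P ≠ ⊥ := fun P hP h ↦
    RingOfIntegers.not_isField L (Ring.isField_iff_maximal_bot.2 (h ▸ hP))
  have hα : ∀ P : Ideal (𝓞 L), P.IsMaximal → ∃ α c : 𝓞 L, c ∈ conductor (𝓞 M) α ∧ c ∉ P ∧
      conductor (𝓞 M) α * differentIdeal (𝓞 M) (𝓞 L) =
        Ideal.span {∏ h ∈ Finset.univ.erase (1 : L ≃ₐ[M] L), (α - h • α)} := by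
    intro P hP
    have : Finite (𝓞 L ⧸ P) := Ideal.finiteQuotientOfFreeOfNeBot P (hP0 P hP)
    have hne : (P.under (𝓞 M)).map (algebraMap (𝓞 M) (𝓞 L)) ≠ ⊥ := by
      exact Ideal.map_ne_bot_of_ne_bot (Ideal.under_ne_bot (𝓞 M) (hP0 P hP))
    obtain ⟨α, hα⟩ := exists_conductor_not_le (𝓞 M) P hne
    obtain ⟨c, hc, hcP⟩ := SetLike.not_le_iff_exists.1 hα
    have htop : Algebra.adjoin M {algebraMap (𝓞 L) L α} = ⊤ :=
      adjoin_eq_top_of_conductor_ne_bot fun h ↦ hα (h ▸ bot_le)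
    refine ⟨α, c, hc, hcP, ?_⟩
    rw [conductor_mul_differentIdeal (𝓞 M) M L α htop, aeval_derivative_minpoly_eq_prod htop]
  have hmem : ∀ (h : L ≃ₐ[M] L) (x : 𝓞 L), h • x - x ∈ moveIdeal h.toRingEquiv := fun h x ↦
    Ideal.subset_span ⟨x, rfl⟩
  apply le_antisymm
  · refine Ideal.le_of_forall_isMaximal_exists_mul_mem fun P hP ↦ ?_
    obtain ⟨α, c, hc, hcP, heq⟩ := hα P hP
    refine ⟨c, hcP, fun x hx ↦ ?_⟩
    have h1 := heq.le (Ideal.mul_mem_mul hc hx)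
    refine (Ideal.span_singleton_le_iff_mem _).2 ?_ h1
    refine Ideal.prod_mem_prod fun h _ ↦ ?_
    rw [← neg_mem_iff, neg_sub]
    exact hmem h α
  · refine Ideal.le_of_forall_isMaximal_exists_mul_mem fun P hP ↦ ?_
    obtain ⟨α, c, hc, hcP, heq⟩ := hα P hP
    have hd : ∏ h ∈ Finset.univ.erase (1 : L ≃ₐ[M] L), (α - h • α) ∈
        differentIdeal (𝓞 M) (𝓞 L) := by
      have h1 : conductor (𝓞 M) α * differentIdeal (𝓞 M) (𝓞 L) ≤ differentIdeal (𝓞 M) (𝓞 L) :=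
        Ideal.mul_le_right
      rw [heq, Ideal.span_singleton_le_iff_mem] at h1
      exact h1
    choose d hd1 hd2 using fun h : L ≃ₐ[M] L ↦ exists_mul_mem_of_mem_conductor hc hcP h
    refine ⟨∏ h ∈ Finset.univ.erase (1 : L ≃ₐ[M] L), d h, ?_, fun x hx ↦ ?_⟩
    · rw [hP.isPrime.prod_mem_iff]
      rintro ⟨h, -, hh⟩
      exact hd1 h hh
    · have : Ideal.span {∏ h ∈ Finset.univ.erase (1 : L ≃ₐ[M] L), d h} *
          ∏ h ∈ Finset.univ.erase (1 : L ≃ₐ[M] L), moveIdeal h.toRingEquiv ≤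
          Ideal.span {∏ h ∈ Finset.univ.erase (1 : L ≃ₐ[M] L), (α - h • α)} := by
        rw [← Ideal.prod_span_singleton, ← Ideal.prod_span_singleton, ← Finset.prod_mul_distrib]
        refine Finset.prod_le_prod' fun h _ ↦ ?_
        rw [Ideal.span_singleton_mul_le_iff]
        exact fun y hy ↦ Ideal.mem_span_singleton.2 (hd2 h y hy)
      exact (Ideal.span_singleton_le_iff_mem _).2 hd
        (this (Ideal.mul_mem_mul (Ideal.mem_span_singleton_self _) hx))

end DifferentProduct

section Discriminants

lemma absNorm_moveIdeal_conj {L : Type*} [Field L] [NumberField L] (τ h : L ≃+* L) :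
    Ideal.absNorm (moveIdeal (τ * h * τ⁻¹)) = Ideal.absNorm (moveIdeal h) := by
  let E : 𝓞 L ≃+* 𝓞 L := MulSemiringAction.toRingEquiv (L ≃+* L) (𝓞 L) τ
  have hmap : moveIdeal (τ * h * τ⁻¹) = (moveIdeal h).map (E : 𝓞 L →+* 𝓞 L) := by
    rw [moveIdeal, moveIdeal, Ideal.map_span, ← Set.range_comp]
    congr 1
    have : (fun x : 𝓞 L ↦ (τ * h * τ⁻¹) • x - x) =
        (E ∘ fun x : 𝓞 L ↦ h • x - x) ∘ E.symm := by
      ext x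
      obtain ⟨y, rfl⟩ := E.surjective x
      simp only [Function.comp_apply, RingEquiv.symm_apply_apply, map_sub]
      change (((τ * h * τ⁻¹) • (τ • y) - τ • y : 𝓞 L) : L) = ((τ • (h • y) - τ • y : 𝓞 L) : L)
      rw [smul_smul, inv_mul_cancel_right, mul_smul]
    rw [this, E.symm.surjective.range_comp]
    rfl
  rw [hmap, Ideal.absNorm_apply, Ideal.absNorm_apply, Submodule.cardQuot_apply,
    Submodule.cardQuot_apply]
  exact (Nat.card_congr (Ideal.quotientEquiv _ _ E rfl).toEquiv).symm

/-- `log |d_L|` at the identity and `-log N(I_h)` elsewhere, where `I_h = (h x - x : x ∈ 𝓞 L)`. -/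
noncomputable def logDiscrChar (L : Type*) [Field L] [NumberField L] (h : L ≃+* L) : ℝ :=
  if h = 1 then Real.log (discr L).natAbs else -Real.log (Ideal.absNorm (moveIdeal h))

lemma logDiscrChar_conj {L : Type*} [Field L] [NumberField L] (τ h : L ≃+* L) :
    logDiscrChar L (τ * h * τ⁻¹) = logDiscrChar L h := by
  rw [logDiscrChar, logDiscrChar, absNorm_moveIdeal_conj]
  congr 1
  rw [conj_eq_one_iff]

lemma log_discr_eq_galAvg (M L : Type*) [Field M] [Field L] [NumberField M] [NumberField L]
    [Algebra M L] [IsGalois M L] [FiniteDimensional M L] :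
    Real.log (discr M).natAbs = galAvg M (logDiscrChar L) := by
  have hpos : (0 : ℝ) < Module.finrank M L := Nat.cast_pos.2 Module.finrank_pos
  have h1 := natAbs_discr_eq_absNorm_differentIdeal_mul_natAbs_discr_pow M (𝓞 M) L (𝓞 L)
  rw [differentIdeal_eq_prod, map_prod] at h1
  have h2 : ∀ h ∈ Finset.univ.erase (1 : L ≃ₐ[M] L),
      ((Ideal.absNorm (moveIdeal h.toRingEquiv) : ℕ) : ℝ) ≠ 0 := by
    intro h hh
    rw [Nat.cast_ne_zero]
    intro h'
    exact Int.natAbs_ne_zero.2 (discr_ne_zero L)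
      (by rw [h1, Finset.prod_eq_zero hh h', zero_mul])
  have h3 := congrArg (fun n : ℕ ↦ Real.log n) h1
  simp only [Nat.cast_mul, Nat.cast_prod, Nat.cast_pow] at h3
  rw [Real.log_mul (Finset.prod_ne_zero_iff.2 h2) (pow_ne_zero _ (Nat.cast_ne_zero.2
    (Int.natAbs_ne_zero.2 (discr_ne_zero M)))), Real.log_prod h2, Real.log_pow] at h3
  rw [galAvg, eq_div_iff hpos.ne', ← Finset.add_sum_erase _ _ (Finset.mem_univ (1 : L ≃ₐ[M] L))]
  have h4 : ∑ h ∈ Finset.univ.erase (1 : L ≃ₐ[M] L), logDiscrChar L h.toRingEquiv =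
      - ∑ h ∈ Finset.univ.erase (1 : L ≃ₐ[M] L),
        Real.log (Ideal.absNorm (moveIdeal h.toRingEquiv)) := by
    rw [← Finset.sum_neg_distrib]
    refine Finset.sum_congr rfl fun h hh ↦ ?_
    rw [logDiscrChar, if_neg]
    intro h'
    refine (Finset.mem_erase.1 hh).1 (AlgEquiv.ext fun x ↦ ?_)
    exact congrArg (fun f : L ≃+* L ↦ f x) h'
  have h5 : logDiscrChar L (1 : L ≃ₐ[M] L).toRingEquiv = Real.log (discr L).natAbs := if_pos rfl
  rw [h4, h5, h3]
  ring

lemma discr_dihedral {q : ℕ} [NeZero q] {k L : Type*} [Field k] [Field L]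
    [NumberField k] [NumberField L] [Algebra k L] [IsGalois k L]
    (e : (L ≃ₐ[k] L) ≃* DihedralGroup q) (hq : Odd q) {F K : IntermediateField k L}
    (hF : F = fixedField ((Subgroup.closure {(r 1 : DihedralGroup q)}).comap e.toMonoidHom))
    (hK : K = fixedField ((Subgroup.closure {(sr 0 : DihedralGroup q)}).comap e.toMonoidHom)) :
    (discr L).natAbs * (discr k).natAbs ^ 2 = (discr F).natAbs * (discr K).natAbs ^ 2 := by
  have : FiniteDimensional k L := Module.Finite.of_restrictScalars_finite ℚ k L
  have h := galAvg_dihedral e hq hF hK (logDiscrChar L) fun τ g ↦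
    logDiscrChar_conj τ.toRingEquiv g.toRingEquiv
  rw [← log_discr_eq_galAvg, ← log_discr_eq_galAvg, ← log_discr_eq_galAvg,
    ← log_discr_eq_galAvg] at h
  have h1 : (0 : ℝ) < (discr L).natAbs := Nat.cast_pos.2 (Int.natAbs_pos.2 (discr_ne_zero L))
  have h2 : (0 : ℝ) < (discr F).natAbs := Nat.cast_pos.2 (Int.natAbs_pos.2 (discr_ne_zero F))
  have h3 : (0 : ℝ) < (discr K).natAbs := Nat.cast_pos.2 (Int.natAbs_pos.2 (discr_ne_zero K))
  have h4 : (0 : ℝ) < (discr k).natAbs := Nat.cast_pos.2 (Int.natAbs_pos.2 (discr_ne_zero k))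
  have key : Real.log ((discr L).natAbs * (discr k).natAbs ^ 2) =
      Real.log ((discr F).natAbs * (discr K).natAbs ^ 2) := by
    rw [Real.log_mul h1.ne' (pow_pos h4 2).ne', Real.log_mul h2.ne' (pow_pos h3 2).ne',
      Real.log_pow, Real.log_pow]
    exact_mod_cast h
  have := Real.log_injOn_pos (Set.mem_Ioi.2 (mul_pos h1 (pow_pos h4 2)))
    (Set.mem_Ioi.2 (mul_pos h2 (pow_pos h3 2))) key
  exact_mod_cast this

end Discriminants

section InfinitePlaces

/-- The number of infinite places of `L` fixed by an automorphism. -/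
noncomputable def fixedPlaces (L : Type*) [Field L] (g : L ≃+* L) : ℝ :=
  Nat.card {w : InfinitePlace L // w.comap g.symm.toRingHom = w}

lemma fixedPlaces_conj {k L : Type*} [Field k] [Field L] [Algebra k L] (τ g : L ≃ₐ[k] L) :
    fixedPlaces L (τ * g * τ⁻¹).toRingEquiv = fixedPlaces L g.toRingEquiv := by
  unfold fixedPlaces
  congr 1
  refine Nat.card_congr ((MulAction.toPerm τ⁻¹).subtypeEquiv fun w ↦ ?_)
  change (τ * g * τ⁻¹) • w = w ↔ g • (τ⁻¹ • w) = τ⁻¹ • w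
  rw [mul_smul, mul_smul]
  constructor
  · intro h; rw [eq_inv_smul_iff, h]
  · intro h; rw [h, smul_inv_smul]

lemma card_infinitePlace_eq_galAvg (M L : Type*) [Field M] [Field L] [NumberField M]
    [NumberField L] [Algebra M L] [FiniteDimensional M L] [IsGalois M L] :
    (Fintype.card (InfinitePlace M) : ℝ) = galAvg M (fixedPlaces L) := by
  have h := MulAction.sum_card_fixedBy_eq_card_orbits_mul_card_group (L ≃ₐ[M] L) (InfinitePlace L)
  rw [Fintype.card_congr (InfinitePlace.orbitRelEquiv (k := M) (K := L)),
    ← Nat.card_eq_fintype_card (α := L ≃ₐ[M] L), IsGalois.card_aut_eq_finrank] at h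
  have h0 : (Module.finrank M L : ℝ) ≠ 0 := Nat.cast_ne_zero.2 Module.finrank_pos.ne'
  rw [galAvg, eq_div_iff h0, ← Nat.cast_mul, ← h, Nat.cast_sum]
  refine Finset.sum_congr rfl fun g _ ↦ ?_
  rw [fixedPlaces, ← Nat.card_eq_fintype_card]
  rfl

end InfinitePlaces

section HerbrandIndex

variable {A B C : Type*} [AddCommGroup A] [AddCommGroup B] [AddCommGroup C]

/-- The order of the cokernel of `f` divided by the order of its kernel. -/
noncomputable def qIndex (f : A →+ B) : ℚ := f.range.index / Nat.card f.ker

lemma qIndex_comp (g : B →+ C) (f : A →+ B) (hf : f.range.index ≠ 0) [Finite f.ker]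
    [Finite g.ker] : qIndex (g.comp f) = qIndex g * qIndex f := by
  have h1 : (g.comp f).range.index = (f.range ⊔ g.ker).index * g.range.index := by
    rw [← AddMonoidHom.map_range, AddSubgroup.index_map]
  have h2 : f.range.relIndex (f.range ⊔ g.ker) * (f.range ⊔ g.ker).index = f.range.index :=
    AddSubgroup.relIndex_mul_index le_sup_left
  have h3 : f.range.relIndex (f.range ⊔ g.ker) = f.range.relIndex g.ker :=
    AddSubgroup.relIndex_sup_left _ _
  have h4 : Nat.card (f.range ⊓ g.ker : AddSubgroup B) * f.range.relIndex g.ker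
      = Nat.card g.ker := by
    have := AddSubgroup.relIndex_mul_relIndex ⊥ (f.range ⊓ g.ker) g.ker bot_le inf_le_right
    rwa [AddSubgroup.relIndex_bot_left, AddSubgroup.relIndex_bot_left,
      AddSubgroup.inf_relIndex_right] at this
  have h5 : Nat.card (g.comp f).ker
      = Nat.card f.ker * Nat.card (f.range ⊓ g.ker : AddSubgroup B) := by
    have hle : f.ker ≤ (g.comp f).ker := fun x hx ↦ by
      rw [AddMonoidHom.mem_ker] at hx ⊢
      simp [hx]
    have := AddSubgroup.relIndex_mul_relIndex ⊥ f.ker (g.comp f).ker bot_le hle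
    rw [AddSubgroup.relIndex_bot_left, AddSubgroup.relIndex_bot_left,
      AddSubgroup.relIndex_ker] at this
    rw [← this]
    congr 2
    have : (g.comp f).ker = g.ker.comap f := rfl
    rw [this, AddSubgroup.map_comap_eq]
  have h6 : Nat.card f.ker ≠ 0 := Nat.card_pos.ne'
  have h7 : Nat.card g.ker ≠ 0 := Nat.card_pos.ne'
  rw [h3] at h2
  have h8 : f.range.relIndex g.ker ≠ 0 := fun h ↦ hf (by rw [← h2, h, zero_mul])
  have h9 : Nat.card (f.range ⊓ g.ker : AddSubgroup B) ≠ 0 := fun h ↦ h7 (by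
    rw [← h4, h, zero_mul])
  unfold qIndex
  rw [h1, h5, ← h2, ← h4]
  push_cast
  field_simp

lemma qIndex_prod (f : A →+ B) (g : A →+ C) :
    qIndex (f.prod g) = f.range.index * qIndex (g.comp f.ker.subtype) := by
  have h1 : (f.prod g).range.index
      = f.range.index * (g.comp f.ker.subtype).range.index := by
    set H := (f.prod g).range
    set V := (AddMonoidHom.inr B C).range
    have hsup : H ⊔ V = f.range.comap (AddMonoidHom.fst B C) := by
      ext ⟨b, c⟩
      simp only [AddSubgroup.mem_sup, AddSubgroup.mem_comap, AddMonoidHom.coe_fst]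
      constructor
      · rintro ⟨_, ⟨a, rfl⟩, _, ⟨d, rfl⟩, h⟩
        exact ⟨a, by simpa using congrArg Prod.fst h⟩
      · rintro ⟨a, ha⟩
        exact ⟨_, ⟨a, rfl⟩, _, ⟨c - g a, rfl⟩, by ext <;> simp [ha]⟩
    have h2 : (H ⊔ V).index = f.range.index := by
      rw [hsup, AddSubgroup.index_comap_of_surjective _ Prod.fst_surjective]
    have h3 : H.relIndex (H ⊔ V) = (g.comp f.ker.subtype).range.index := by
      rw [AddSubgroup.relIndex_sup_left]
      have : V = (⊤ : AddSubgroup C).map (AddMonoidHom.inr B C) := by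
        rw [← AddMonoidHom.range_eq_map]
      rw [this, ← AddSubgroup.relIndex_comap, AddSubgroup.relIndex_top_right]
      congr 1
      ext c
      constructor
      · rintro ⟨a, ha⟩
        exact ⟨⟨a, congrArg Prod.fst ha⟩, congrArg Prod.snd ha⟩
      · rintro ⟨⟨a, ha⟩, hc⟩
        exact ⟨a, Prod.ext ha hc⟩
    rw [← AddSubgroup.relIndex_mul_index (le_sup_left : H ≤ H ⊔ V), h2, h3, mul_comm]
  have h4 : Nat.card (f.prod g).ker = Nat.card (g.comp f.ker.subtype).ker := by
    refine Nat.card_congr ⟨fun x ↦ ⟨⟨x.1, congrArg Prod.fst x.2⟩, congrArg Prod.snd x.2⟩,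
      fun x ↦ ⟨x.1.1, Prod.ext x.1.2 x.2⟩, fun _ ↦ rfl, fun _ ↦ rfl⟩
  rw [qIndex, qIndex, h1, h4]
  push_cast
  ring

lemma qIndex_congr {A' B' : Type*} [AddCommGroup A'] [AddCommGroup B'] (f : A →+ B)
    (f' : A' →+ B') (e : A ≃+ A') (e' : B ≃+ B') (h : ∀ a, f' (e a) = e' (f a)) :
    qIndex f = qIndex f' := by
  have h1 : f.range.index = f'.range.index := by
    rw [← AddSubgroup.index_map_equiv f.range e']
    congr 1
    ext b
    constructor
    · rintro ⟨_, ⟨a, rfl⟩, rfl⟩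
      exact ⟨e a, h a⟩
    · rintro ⟨a, rfl⟩
      exact ⟨_, ⟨e.symm a, rfl⟩, by simpa using (h (e.symm a)).symm⟩
  have h2 : Nat.card f.ker = Nat.card f'.ker := by
    refine Nat.card_congr (e.toEquiv.subtypeEquiv fun a ↦ ?_)
    change f a = 0 ↔ f' (e a) = 0
    rw [h]
    simp
  rw [qIndex, qIndex, h1, h2]

end HerbrandIndex

section Covolume

open Matrix

lemma qIndex_eq_abs_det {X : Type*} [Fintype X] (P : (X → ℤ) →ₗ[ℤ] (X → ℤ)) :
    qIndex P.toAddMonoidHom = |((LinearMap.toMatrix' P).det : ℚ)| := by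
  by_cases h : (LinearMap.toMatrix' P).det = 0
  · obtain ⟨v, hv0, hv⟩ := Matrix.exists_mulVec_eq_zero_iff.2 h
    have hPv : P v = 0 := by rw [← hv, LinearMap.toMatrix'_mulVec]
    have : Infinite P.toAddMonoidHom.ker := by
      refine Infinite.of_injective
        (fun n : ℤ ↦ (⟨n • v, (map_zsmul P n v).trans (by rw [hPv, smul_zero])⟩ : P.toAddMonoidHom.ker)) ?_
      intro m n hmn
      exact smul_left_injective ℤ hv0 (congrArg Subtype.val hmn)
    rw [qIndex, Nat.card_eq_zero_of_infinite, h]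
    simp
  · have hinj : Function.Injective P := by
      rw [← LinearMap.ker_eq_bot, LinearMap.ker_eq_bot']
      intro v hv
      by_contra hv0
      exact h (Matrix.exists_mulVec_eq_zero_iff.1 ⟨v, hv0, by rwa [LinearMap.toMatrix'_mulVec]⟩)
    have hker : P.toAddMonoidHom.ker = ⊥ := by
      rw [AddMonoidHom.ker_eq_bot_iff]; exact hinj
    have hidx : P.toAddMonoidHom.range.index = (LinearMap.toMatrix' P).det.natAbs := by
      have := AddSubgroup.index_eq_natAbs_det (Pi.basisFun ℤ X) P.toAddMonoidHom.range
        ((Pi.basisFun ℤ X).map (LinearEquiv.ofInjective P hinj))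
      rw [this]
      congr 1
    rw [qIndex, hker, hidx]
    simp [Nat.cast_natAbs]

/-- `Λ` has finite kernel of order `w`, and its image is the lattice spanned by the columns of
a real square matrix of determinant `±c`. -/
def HasCovolume {A X : Type*} [AddCommGroup A] [Fintype X] (Λ : A →+ (X → ℝ)) (w : ℕ) (c : ℝ) :
    Prop :=
  w ≠ 0 ∧ c ≠ 0 ∧ ∃ (π : A →+ (X → ℤ)) (M : Matrix X X ℝ), Function.Surjective π ∧
    Nat.card π.ker = w ∧ |M.det| = c ∧ ∀ a, Λ a = M *ᵥ fun i ↦ (π a i : ℝ)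

variable {A B X Y : Type*} [AddCommGroup A] [AddCommGroup B] [Fintype X] [Fintype Y]

lemma HasCovolume.of_equiv {Λ : A →+ (X → ℝ)} {w : ℕ} {c : ℝ} (h : HasCovolume Λ w c)
    (e : B ≃+ A) (i : Y ≃ X) (Λ' : B →+ (Y → ℝ)) (hΛ : ∀ b y, Λ' b y = Λ (e b) (i y)) :
    HasCovolume Λ' w c := by
  obtain ⟨hw, hc, π, M, hπ, hk, hM, hΛM⟩ := h
  refine ⟨hw, hc, AddMonoidHom.mk' (fun b y ↦ π (e b) (i y)) (fun a b ↦ by ext; simp),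
    M.submatrix i i, ?_, ?_, by rwa [Matrix.det_submatrix_equiv_self], ?_⟩
  · intro v
    obtain ⟨a, ha⟩ := hπ (v ∘ i.symm)
    exact ⟨e.symm a, by ext y; simp [ha]⟩
  · rw [← hk]
    refine Nat.card_congr (e.toEquiv.subtypeEquiv fun b ↦ ?_)
    change (fun y ↦ π (e b) (i y)) = 0 ↔ π (e b) = 0
    simp only [funext_iff, Pi.zero_apply]
    exact i.forall_congr_left.trans (by simp)
  · intro b
    ext y
    rw [hΛ, hΛM]
    simp only [Matrix.mulVec, dotProduct, Matrix.submatrix_apply, AddMonoidHom.mk'_apply]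
    exact (Equiv.sum_comp i _).symm

lemma HasCovolume.prod {Λ : A →+ (X → ℝ)} {Λ' : B →+ (Y → ℝ)} {w w' : ℕ} {c c' : ℝ}
    (h : HasCovolume Λ w c) (h' : HasCovolume Λ' w' c') (Λ'' : A × B →+ (X ⊕ Y → ℝ))
    (hΛ : ∀ a b, Λ'' (a, b) = Sum.elim (Λ a) (Λ' b)) :
    HasCovolume Λ'' (w * w') (c * c') := by
  obtain ⟨hw, hc, π, M, hπ, hk, hM, hΛM⟩ := h
  obtain ⟨hw', hc', π', M', hπ', hk', hM', hΛM'⟩ := h'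
  refine ⟨mul_ne_zero hw hw', mul_ne_zero hc hc',
    AddMonoidHom.mk' (fun x ↦ Sum.elim (π x.1) (π' x.2)) ?_, Matrix.fromBlocks M 0 0 M',
    ?_, ?_, ?_, ?_⟩
  · intro x y
    ext (i | i) <;> simp
  · intro v
    obtain ⟨a, ha⟩ := hπ (v ∘ Sum.inl)
    obtain ⟨b, hb⟩ := hπ' (v ∘ Sum.inr)
    exact ⟨(a, b), by ext (i | i) <;> simp [ha, hb]⟩
  · rw [← hk, ← hk', ← Nat.card_prod]
    have key (x : A × B) : Sum.elim (π x.1) (π' x.2) = 0 ↔ π x.1 = 0 ∧ π' x.2 = 0 := by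
      simp [funext_iff]
    exact Nat.card_congr ⟨fun x ↦ (⟨x.1.1, ((key _).1 x.2).1⟩, ⟨x.1.2, ((key _).1 x.2).2⟩),
      fun x ↦ ⟨(x.1.1, x.2.1), (key _).2 ⟨x.1.2, x.2.2⟩⟩, fun _ ↦ rfl, fun _ ↦ rfl⟩
  · have h := Matrix.det_fromBlocks_zero₂₁ M 0 M'
    rw [← hM, ← hM', ← abs_mul, ← h]
    congr!
  · rintro ⟨a, b⟩
    rw [hΛ, hΛM, hΛM']
    have : (fun i ↦ (((AddMonoidHom.mk' (fun x : A × B ↦ Sum.elim (π x.1) (π' x.2))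
        (by intro x y; ext (i | i) <;> simp)) (a, b) i : ℤ) : ℝ))
        = Sum.elim (fun i ↦ (π a i : ℝ)) (fun i ↦ (π' b i : ℝ)) := by
      ext (i | i) <;> simp
    rw [this, Matrix.fromBlocks_mulVec]
    simp

lemma qIndex_mul_covolume {ΛA : A →+ (X → ℝ)} {ΛB : B →+ (Y → ℝ)} {wA wB : ℕ} {cA cB : ℝ}
    (hA : HasCovolume ΛA wA cA) (hB : HasCovolume ΛB wB cB) (f : A →+ B)
    (Ψ : (X → ℝ) →ₗ[ℝ] (Y → ℝ)) (hΨ : ∀ a, Ψ (ΛA a) = ΛB (f a)) (e : X ≃ Y) :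
    (qIndex f : ℝ) * cB * wA = |((LinearMap.toMatrix' Ψ).submatrix e id).det| * cA * wB := by
  obtain ⟨hwA, hcA, πA, MA, hπA, hkA, hMA, hΛA⟩ := hA
  obtain ⟨hwB, hcB, πB, MB, hπB, hkB, hMB, hΛB⟩ := hB
  have hfA : Finite πA.ker := Nat.finite_of_card_ne_zero (by rwa [hkA])
  have hfB : Finite πB.ker := Nat.finite_of_card_ne_zero (by rwa [hkB])
  have hMB0 : MB.det ≠ 0 := fun h ↦ hcB (by rw [← hMB, h, abs_zero])
  have hdesc : ∀ a, πA a = 0 → πB (f a) = 0 := by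
    intro a ha
    have h1 : ΛB (f a) = 0 := by
      rw [← hΨ, hΛA, ha]
      have : (fun i : X ↦ (((0 : X → ℤ) i : ℤ) : ℝ)) = 0 := by ext; simp
      rw [this, Matrix.mulVec_zero, map_zero]
    have h2 := Matrix.eq_zero_of_mulVec_eq_zero hMB0 ((hΛB _).symm.trans h1)
    ext i
    simpa using congrFun h2 i
  let P₀ : (X → ℤ) →+ (Y → ℤ) := πA.liftOfSurjective hπA ⟨πB.comp f, hdesc⟩
  have hP₀ (a : A) : P₀ (πA a) = πB (f a) :=
    AddMonoidHom.liftOfRightInverse_comp_apply _ _ _ ⟨πB.comp f, hdesc⟩ a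
  let P : (X → ℤ) →ₗ[ℤ] (X → ℤ) :=
    (LinearMap.funLeft ℤ ℤ e).comp P₀.toIntLinearMap
  have hP (a : A) : P (πA a) = πB (f a) ∘ e := by
    rw [← hP₀]; rfl
  have hmat : (LinearMap.toMatrix' Ψ).submatrix e id * MA
      = MB.submatrix e e * (LinearMap.toMatrix' P).map (Int.cast : ℤ → ℝ) := by
    have hz (z : X → ℤ) : Ψ (MA *ᵥ fun i ↦ (z i : ℝ)) = MB *ᵥ fun j ↦ ((P₀ z j : ℤ) : ℝ) := by
      obtain ⟨a, rfl⟩ := hπA z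
      rw [← hΛA, hΨ, hΛB, hP₀]
    ext i j
    have h := congrFun (hz (Pi.single j 1)) (e i)
    have h1 : (fun i ↦ (((Pi.single j 1 : X → ℤ) i : ℤ) : ℝ)) = Pi.single j 1 := by
      ext i; by_cases hij : i = j <;> simp [hij]
    rw [h1, ← LinearMap.toMatrix'_mulVec Ψ, Matrix.mulVec_mulVec, Matrix.mulVec_single_one] at h
    change ((LinearMap.toMatrix' Ψ) * MA) (e i) j = _ at h
    have h2 : ((LinearMap.toMatrix' Ψ).submatrix e id * MA) i j
        = ((LinearMap.toMatrix' Ψ) * MA) (e i) j := by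
      simp [Matrix.mul_apply]
    rw [h2, h, Matrix.mulVec, dotProduct, Matrix.mul_apply, ← Equiv.sum_comp e]
    refine Finset.sum_congr rfl fun l _ ↦ ?_
    simp [LinearMap.toMatrix'_apply, P]
  have hdet := congrArg (fun M ↦ |M.det|) hmat
  simp only [Matrix.det_mul, abs_mul, Matrix.det_submatrix_equiv_self, hMA, hMB] at hdet
  have hdetP : |((LinearMap.toMatrix' P).map (Int.cast : ℤ → ℝ)).det|
      = (qIndex P.toAddMonoidHom : ℝ) := by
    rw [qIndex_eq_abs_det]
    have : ((LinearMap.toMatrix' P).map (Int.cast : ℤ → ℝ)).det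
        = ((LinearMap.toMatrix' P).det : ℝ) :=
      ((Int.castRingHom ℝ).map_det (LinearMap.toMatrix' P)).symm
    rw [this]
    push_cast
    rfl
  let πB' : B →+ (X → ℤ) := (LinearMap.funLeft ℤ ℤ e).toAddMonoidHom.comp πB
  have hπB' : Function.Surjective πB' :=
    ((LinearMap.funLeft_surjective_of_injective ℤ ℤ e e.injective)).comp hπB
  have hkB' : πB'.ker = πB.ker := by
    ext b
    constructor
    · intro h
      ext y
      have h1 : πB b (e (e.symm y)) = 0 := congrFun (h : πB' b = 0) (e.symm y)
      rwa [e.apply_symm_apply] at h1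
    · intro h
      ext y
      exact congrFun (h : πB b = 0) (e y)
  have hfB' : Finite πB'.ker := by rwa [hkB']
  have hcomm : P.toAddMonoidHom.comp πA = πB'.comp f := by
    ext1 a
    exact hP a
  have hqA : qIndex πA = 1 / wA := by
    rw [qIndex, hkA, AddMonoidHom.range_eq_top.2 hπA, AddSubgroup.index_top, Nat.cast_one]
  have hqB : qIndex πB' = 1 / wB := by
    rw [qIndex, hkB', hkB, AddMonoidHom.range_eq_top.2 hπB', AddSubgroup.index_top, Nat.cast_one]
  have hmain : qIndex f * wA = qIndex P.toAddMonoidHom * wB := by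
    by_cases h0 : qIndex P.toAddMonoidHom = 0
    · rw [h0, zero_mul]
      by_contra hne
      have hne' : qIndex f ≠ 0 := left_ne_zero_of_mul hne
      have hfk : Finite f.ker := by
        refine Nat.finite_of_card_ne_zero fun h ↦ hne' ?_
        rw [qIndex, h]; simp
      have hfr : f.range.index ≠ 0 := fun h ↦ hne' (by rw [qIndex, h]; simp)
      have h1 := qIndex_comp πB' f hfr
      have h2 : qIndex (P.toAddMonoidHom.comp πA) ≠ 0 := by
        rw [hcomm, h1, hqB]
        exact mul_ne_zero (by positivity) hne'
      have hPk : Finite P.toAddMonoidHom.ker := by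
        have : Finite (P.toAddMonoidHom.comp πA).ker := by
          refine Nat.finite_of_card_ne_zero fun h ↦ h2 ?_
          rw [qIndex, h]; simp
        refine Finite.of_surjective
          (fun x : (P.toAddMonoidHom.comp πA).ker ↦ (⟨πA x, x.2⟩ : P.toAddMonoidHom.ker)) ?_
        rintro ⟨z, hz⟩
        obtain ⟨a, rfl⟩ := hπA z
        exact ⟨⟨a, hz⟩, rfl⟩
      rw [qIndex_comp _ _ (by rw [AddMonoidHom.range_eq_top.2 hπA]; simp), h0, zero_mul] at h2
      exact h2 rfl
    · have hPk : Finite P.toAddMonoidHom.ker := by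
        refine Nat.finite_of_card_ne_zero fun h ↦ h0 ?_
        rw [qIndex, h]; simp
      have hPr : P.toAddMonoidHom.range.index ≠ 0 := fun h ↦ h0 (by rw [qIndex, h]; simp)
      have hPk0 : ∀ z, P z = 0 → z = 0 := by
        intro z hz
        have hdet0 : (LinearMap.toMatrix' P).det ≠ 0 := fun h ↦ h0 (by
          rw [qIndex_eq_abs_det, h]; simp)
        exact Matrix.eq_zero_of_mulVec_eq_zero hdet0 (by rw [LinearMap.toMatrix'_mulVec, hz])
      have hfk : Finite f.ker := by
        have hle : f.ker ≤ πA.ker := fun a ha ↦ hPk0 _ (by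
          rw [hP, (ha : f a = 0), map_zero]; rfl)
        exact Finite.of_injective _ (AddSubgroup.inclusion_injective hle)
      have hfr : f.range.index ≠ 0 := by
        have h1 : (f.range.map πB').index ≠ 0 := by
          have : f.range.map πB' = P.toAddMonoidHom.range := by
            rw [AddMonoidHom.map_range, ← hcomm, ← AddMonoidHom.map_range,
              AddMonoidHom.range_eq_top.2 hπA, ← AddMonoidHom.range_eq_map]
          rwa [this]
        rw [AddSubgroup.index_map, AddMonoidHom.range_eq_top.2 hπB', AddSubgroup.index_top,
          mul_one] at h1
        rw [← AddSubgroup.relIndex_mul_index (le_sup_left : f.range ≤ f.range ⊔ πB'.ker),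
          AddSubgroup.relIndex_sup_left]
        exact mul_ne_zero (ne_zero_of_dvd_ne_zero Nat.card_pos.ne'
          (AddSubgroup.relIndex_dvd_card _ _)) h1
      have h1 := qIndex_comp πB' f hfr
      rw [← hcomm, qIndex_comp _ _ (by rw [AddMonoidHom.range_eq_top.2 hπA]; simp),
        hqA, hqB] at h1
      have : (wA : ℚ) ≠ 0 := Nat.cast_ne_zero.2 hwA
      have : (wB : ℚ) ≠ 0 := Nat.cast_ne_zero.2 hwB
      field_simp at h1
      linarith
  have hmain' : (qIndex f : ℝ) * wA = qIndex P.toAddMonoidHom * wB := by exact_mod_cast hmain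
  rw [hdetP] at hdet
  calc (qIndex f : ℝ) * cB * wA = cB * (qIndex f * wA) := by ring
    _ = (cB * qIndex P.toAddMonoidHom) * wB := by rw [hmain']; ring
    _ = _ := by rw [← hdet]

end Covolume

section DihedralModule

lemma qIndex_prodMap {A B A' B' : Type*} [AddCommGroup A] [AddCommGroup B] [AddCommGroup A']
    [AddCommGroup B'] (f : A →+ B) (g : A' →+ B') :
    qIndex (f.prodMap g) = qIndex f * qIndex g := by
  have h1 : (f.prodMap g).range = f.range.prod g.range := by
    ext ⟨b, b'⟩
    simp only [AddMonoidHom.mem_range, AddSubgroup.mem_prod, Prod.exists,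
      AddMonoidHom.prodMap_def, AddMonoidHom.prod_apply, Prod.mk.injEq]
    exact ⟨fun ⟨a, a', h, h'⟩ ↦ ⟨⟨a, h⟩, ⟨a', h'⟩⟩, fun ⟨⟨a, h⟩, ⟨a', h'⟩⟩ ↦ ⟨a, a', h, h'⟩⟩
  have h2 : Nat.card (f.prodMap g).ker = Nat.card f.ker * Nat.card g.ker := by
    rw [← Nat.card_prod]
    exact Nat.card_congr ⟨fun x ↦ (⟨x.1.1, congrArg Prod.fst x.2⟩, ⟨x.1.2, congrArg Prod.snd x.2⟩),
      fun x ↦ ⟨(x.1.1, x.2.1), Prod.ext x.1.2 x.2.2⟩, fun _ ↦ rfl, fun _ ↦ rfl⟩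
  rw [qIndex, qIndex, qIndex, h1, h2, AddSubgroup.index_prod]
  push_cast
  rw [div_mul_div_comm]

variable {q : ℕ} {A : Type*} [AddCommGroup A]
  (τ : DihedralGroup q →* AddMonoid.End A)

/-- The operator `σ - 1`, where `σ` is the generator of the rotations. -/
def rotSub : A →+ A := 
  AddMonoidHom.mk' (fun a ↦ τ (r 1) a - a) fun a b ↦ by simp only [map_add]; abel

/-- The elements fixed by the rotations. -/
def rotFixed : AddSubgroup A := (rotSub τ).ker

/-- The elements fixed by the reflection `sr 0`. -/
def reflFixed : AddSubgroup A := 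
  (AddMonoidHom.mk' (fun a ↦ τ (sr 0) a - a) fun a b ↦ by simp only [map_add]; abel).ker

/-- The elements fixed by the dihedral group. -/
def dihFixed : AddSubgroup A := rotFixed τ ⊓ reflFixed τ

variable {τ}

lemma rotSub_apply (a : A) : rotSub τ a = τ (r 1) a - a := rfl

lemma mem_rotFixed_iff {a : A} : a ∈ rotFixed τ ↔ τ (r 1) a = a := sub_eq_zero

lemma mem_reflFixed_iff {a : A} : a ∈ reflFixed τ ↔ τ (sr 0) a = a := sub_eq_zero

lemma action_mul (g h : DihedralGroup q) (a : A) : τ g (τ h a) = τ (g * h) a := by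
  rw [map_mul]; rfl

lemma action_one (a : A) : τ (r 0) a = a := by
  rw [← one_def, map_one]; rfl

lemma dihFixed_le_rotFixed : dihFixed τ ≤ rotFixed τ := inf_le_left

lemma dihFixed_le_reflFixed : dihFixed τ ≤ reflFixed τ := inf_le_right

variable (τ) in
/-- The addition map from `A^C × A^s × A^s'`, with the last factor written as a translate
of `A^s` by the rotation `r t`. -/
def addFixed (t : ZMod q) : rotFixed τ × reflFixed τ × reflFixed τ →+ A :=
  AddMonoidHom.mk' (fun x ↦ x.1 + x.2.1 + τ (r t) x.2.2) (by
    intro x y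
    simp only [Prod.fst_add, Prod.snd_add, AddSubgroup.coe_add, map_add]
    abel)

lemma rotSub_mem_of_addFixed_eq_zero {t : ZMod q} (ht : t + t = 1)
    {x : rotFixed τ × reflFixed τ × reflFixed τ} (hx : addFixed τ t x = 0) :
    rotSub τ x.2.1 ∈ rotFixed τ := by
  obtain ⟨⟨f, hf⟩, ⟨g, hg⟩, ⟨h, hh⟩⟩ := x
  have hx' : f + g + τ (r t) h = 0 := hx
  rw [mem_rotFixed_iff] at hf
  rw [mem_reflFixed_iff] at hg hh
  set y := τ (r t) h with hy
  change rotSub τ g ∈ _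
  have hz : rotSub τ g = τ (sr (-1)) g - g := by
    rw [rotSub_apply]
    conv_lhs => rw [← hg]
    rw [action_mul, r_mul_sr, zero_sub, hg]
  have hz1 : τ (sr (-1)) (rotSub τ g) = - rotSub τ g := by
    rw [hz, map_sub, action_mul, sr_mul_sr, sub_self, action_one, neg_sub]
  have hsy : τ (sr (-1)) y = y := by
    rw [hy, action_mul, sr_mul_r]
    have : (sr (-1 + t) : DihedralGroup q) = r t * sr 0 := by
      rw [r_mul_sr, ← ht]; congr 1; ring
    rw [this, ← action_mul, hh]
  have hTy : τ (r 1) y - y = - rotSub τ g := by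
    have h1 : τ (r 1) (f + g + y) = 0 := by rw [hx', map_zero]
    rw [map_add, map_add, hf] at h1
    rw [rotSub_apply]
    have h2 : (f + τ (r 1) g + τ (r 1) y) - (f + g + y) = 0 := by rw [h1, hx', sub_zero]
    rw [neg_sub, eq_comm, ← sub_eq_zero, ← neg_eq_zero, ← h2]
    abel
  have hz2 : τ (r 1) (τ (sr (-1)) (rotSub τ g)) = - rotSub τ g := by
    have h0 : rotSub τ g = y - τ (r 1) y := by rw [← neg_sub, hTy, neg_neg]
    have h1 : τ (r 1) (τ (sr (-1)) (τ (r 1) y)) = y := by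
      rw [action_mul, action_mul, r_mul_sr, sr_mul_r]
      simpa using hsy
    rw [h0, map_sub, map_sub, h1, hsy, neg_sub]
  rw [hz1, map_neg, neg_inj] at hz2
  exact mem_rotFixed_iff.2 hz2

variable [NeZero q]

lemma action_r_of_mem {a : A} (ha : a ∈ rotFixed τ) (i : ZMod q) : τ (r i) a = a := by
  have h (n : ℕ) : τ (r (n : ZMod q)) a = a := by
    induction n with
    | zero => rw [Nat.cast_zero, action_one]
    | succ n ih =>
      rw [Nat.cast_succ, ← r_mul_r, ← action_mul, mem_rotFixed_iff.1 ha, ih]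
  rw [← ZMod.natCast_zmod_val i, h]

variable (τ) in
/-- The norm `∑ σ ^ i` of the rotations. -/
def rotNorm : A →+ A := 
  AddMonoidHom.mk' (fun a ↦ ∑ i : ZMod q, τ (r i) a) fun a b ↦ by
    simp only [map_add, Finset.sum_add_distrib]

lemma rotNorm_apply (a : A) : rotNorm τ a = ∑ i : ZMod q, τ (r i) a := rfl

lemma action_r_rotNorm (j : ZMod q) (a : A) : τ (r j) (rotNorm τ a) = rotNorm τ a := by
  rw [rotNorm_apply, map_sum, ← Equiv.sum_comp (Equiv.addLeft j) (fun i ↦ τ (r i) a)]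
  refine Finset.sum_congr rfl fun i _ ↦ ?_
  rw [action_mul, r_mul_r]
  rfl

lemma rotNorm_action_r (j : ZMod q) (a : A) : rotNorm τ (τ (r j) a) = rotNorm τ a := by
  rw [rotNorm_apply, rotNorm_apply, ← Equiv.sum_comp (Equiv.addRight j) (fun i ↦ τ (r i) a)]
  refine Finset.sum_congr rfl fun i _ ↦ ?_
  rw [action_mul, r_mul_r]
  rfl

lemma action_sr_rotNorm (a : A) : τ (sr 0) (rotNorm τ a) = rotNorm τ (τ (sr 0) a) := by
  rw [rotNorm_apply, rotNorm_apply, map_sum,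
    ← Equiv.sum_comp (Equiv.neg (ZMod q)) (fun i ↦ τ (r i) (τ (sr 0) a))]
  refine Finset.sum_congr rfl fun i _ ↦ ?_
  simp [action_mul]

lemma rotNorm_rotSub (a : A) : rotNorm τ (rotSub τ a) = 0 := by
  rw [rotSub_apply, map_sub, rotNorm_action_r, sub_self]

lemma rotNorm_of_mem {a : A} (ha : a ∈ rotFixed τ) : rotNorm τ a = q • a := by
  rw [rotNorm_apply, Finset.sum_congr rfl fun i _ ↦ action_r_of_mem ha i]
  simp

lemma rotNorm_mem (a : A) : rotNorm τ a ∈ rotFixed τ :=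
  mem_rotFixed_iff.2 (action_r_rotNorm 1 a)

lemma rotNorm_mem_dihFixed {a : A} (ha : a ∈ reflFixed τ) : rotNorm τ a ∈ dihFixed τ :=
  ⟨rotNorm_mem a, mem_reflFixed_iff.2 (by rw [action_sr_rotNorm, mem_reflFixed_iff.1 ha])⟩

variable (τ) in
/-- The norm of the rotations as a map from `A^s` to `A^D`. -/
def reflNorm : reflFixed τ →+ dihFixed τ :=
  ((rotNorm τ).comp (reflFixed τ).subtype).codRestrict _ fun a ↦ rotNorm_mem_dihFixed a.2

variable (τ) in
/-- The map comparing `A^C × A^s × A^s` with `A × A^D × A^D`. -/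
def compareFixed (t : ZMod q) :
    rotFixed τ × reflFixed τ × reflFixed τ →+ A × dihFixed τ × dihFixed τ :=
  (addFixed τ t).prod (((reflNorm τ).prodMap (reflNorm τ)).comp (AddMonoidHom.snd _ _))

lemma smul_rotSub_of_mem {a : A} (ha : rotSub τ a ∈ rotFixed τ) : q • rotSub τ a = 0 := by
  rw [← rotNorm_of_mem ha, rotNorm_rotSub]

variable (τ) in
/-- The elements of order dividing `q` fixed by the rotations. -/
def rotTorsion : AddSubgroup A := rotFixed τ ⊓ (nsmulAddMonoidHom q : A →+ A).ker

variable (τ) in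
/-- The elements of order dividing `q` fixed by the dihedral group. -/
def dihTorsion : AddSubgroup A := dihFixed τ ⊓ (nsmulAddMonoidHom q : A →+ A).ker

theorem qIndex_compareFixed {t : ZMod q} (ht : t + t = 1) [Finite (rotTorsion τ)] :
    ∃ κ : ℕ, κ ∣ Nat.card (rotTorsion τ) ∧ qIndex (compareFixed τ t) * κ
      = (addFixed τ t).range.index
        * qIndex (nsmulAddMonoidHom q : dihFixed τ →+ dihFixed τ) ^ 2 := by
  set m : dihFixed τ →+ dihFixed τ := nsmulAddMonoidHom q
  set V := (addFixed τ t).ker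
  let ι : dihFixed τ × dihFixed τ →+ V :=
    AddMonoidHom.mk' (fun x ↦
      ⟨(-⟨x.1, dihFixed_le_rotFixed x.1.2⟩ - ⟨x.2, dihFixed_le_rotFixed x.2.2⟩,
      ⟨x.1, dihFixed_le_reflFixed x.1.2⟩, ⟨x.2, dihFixed_le_reflFixed x.2.2⟩), by
        change - (x.1 : A) - x.2 + x.1 + τ (r t) x.2 = 0
        rw [action_r_of_mem (dihFixed_le_rotFixed x.2.2)]
        abel⟩) (by
      intro x y
      ext
      · change - ((x.1 : A) + y.1) - (x.2 + y.2) = (- (x.1 : A) - x.2) + (- (y.1 : A) - y.2)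
        abel
      · rfl
      · rfl)
  let ψ : V →+ dihFixed τ × dihFixed τ :=
    (((reflNorm τ).prodMap (reflNorm τ)).comp (AddMonoidHom.snd _ _)).comp V.subtype
  have hψι : ψ.comp ι = m.prodMap m := by
    refine AddMonoidHom.ext fun x ↦ Prod.ext (Subtype.ext ?_) (Subtype.ext ?_)
    · exact rotNorm_of_mem (dihFixed_le_rotFixed x.1.2)
    · exact rotNorm_of_mem (dihFixed_le_rotFixed x.2.2)
  let ζ : V →+ rotTorsion τ := ((rotSub τ).comp ((reflFixed τ).subtype.comp
    ((AddMonoidHom.fst _ _).comp ((AddMonoidHom.snd _ _).comp V.subtype)))).codRestrict _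
    fun x ↦ ⟨rotSub_mem_of_addFixed_eq_zero ht x.2,
      smul_rotSub_of_mem (rotSub_mem_of_addFixed_eq_zero ht x.2)⟩
  have hζ : ζ.ker = ι.range := by
    apply le_antisymm
    · rintro ⟨⟨⟨f, hf⟩, ⟨g, hg⟩, ⟨h, hh⟩⟩, hx⟩ hζ0
      have hg' : g ∈ rotFixed τ := congrArg Subtype.val (hζ0 : ζ _ = 0)
      have hx' : f + g + τ (r t) h = 0 := hx
      have hh1 : τ (r t) h ∈ rotFixed τ := by
        rw [eq_neg_of_add_eq_zero_right hx']
        exact neg_mem (add_mem hf hg')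
      have hh2 : h ∈ rotFixed τ := by
        have := action_r_of_mem hh1 (-t)
        rw [action_mul, r_mul_r, neg_add_cancel, action_one] at this
        rw [this]
        exact hh1
      rw [action_r_of_mem hh2] at hx'
      refine ⟨(⟨g, hg', hg⟩, ⟨h, hh2, hh⟩), ?_⟩
      refine Subtype.ext (Prod.ext (Subtype.ext ?_) rfl)
      change - g - h = f
      rw [← sub_eq_zero, ← neg_eq_zero, ← hx']
      abel
    · rintro _ ⟨x, rfl⟩
      exact Subtype.ext (x.1.2.1 : rotSub τ x.1 = 0)
  have hιinj : ι.ker = ⊥ := by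
    rw [AddMonoidHom.ker_eq_bot_iff]
    intro x y hxy
    have h1 := congrArg (fun z : V ↦ (z.1.2.1 : A)) hxy
    have h2 := congrArg (fun z : V ↦ (z.1.2.2 : A)) hxy
    exact Prod.ext (Subtype.ext h1) (Subtype.ext h2)
  have hidx : ι.range.index ∣ Nat.card (rotTorsion τ) := by
    rw [← hζ, AddSubgroup.index_ker]
    exact AddSubgroup.card_addSubgroup_dvd_card _
  have hιfin : Finite ι.ker := by rw [hιinj]; infer_instance
  have hmker : Finite m.ker := by
    refine Finite.of_injective
      (fun x : m.ker ↦ (⟨x.1, dihFixed_le_rotFixed x.1.2, congrArg Subtype.val x.2⟩ : rotTorsion τ))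
      fun x y hxy ↦ Subtype.ext (Subtype.ext (congrArg (fun z : rotTorsion τ ↦ (z : A)) hxy))
  have hmmker : Finite (m.prodMap m).ker := by
    refine Finite.of_injective (fun x : (m.prodMap m).ker ↦
      ((⟨x.1.1, congrArg Prod.fst x.2⟩, ⟨x.1.2, congrArg Prod.snd x.2⟩) : m.ker × m.ker))
      fun x y hxy ↦ Subtype.ext (Prod.ext ?_ ?_)
    · exact congrArg (fun z : m.ker × m.ker ↦ (z.1 : dihFixed τ)) hxy
    · exact congrArg (fun z : m.ker × m.ker ↦ (z.2 : dihFixed τ)) hxy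
  have hψfin : Finite ψ.ker := by
    refine (AddMonoidHom.finite_iff_finite_ker_range (ζ.comp ψ.ker.subtype)).2 ⟨?_, inferInstance⟩
    have hmem (y : (m.prodMap m).ker) : ψ (ι y) = 0 :=
      (DFunLike.congr_fun hψι y.1).trans y.2
    have hmem' (y : (m.prodMap m).ker) : ζ (ι y) = 0 := by
      have : ι y ∈ ζ.ker := hζ ▸ ⟨y.1, rfl⟩
      exact this
    refine Finite.of_surjective (fun y : (m.prodMap m).ker ↦
      (⟨⟨ι y, hmem y⟩, hmem' y⟩ : (ζ.comp ψ.ker.subtype).ker)) ?_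
    rintro ⟨⟨x, hx⟩, hx'⟩
    have hx'' : x ∈ ι.range := hζ ▸ (show x ∈ ζ.ker from hx')
    obtain ⟨y, rfl⟩ := hx''
    exact ⟨⟨y, (DFunLike.congr_fun hψι y).symm.trans hx⟩, rfl⟩
  refine ⟨ι.range.index, hidx, ?_⟩
  have h1 : qIndex (compareFixed τ t) = (addFixed τ t).range.index * qIndex ψ := qIndex_prod _ _
  have h2 : qIndex ι = ι.range.index := by simp [qIndex, hιinj]
  rw [h1, mul_assoc, ← h2, ← qIndex_comp ψ ι (ne_zero_of_dvd_ne_zero Nat.card_pos.ne' hidx), hψι,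
    qIndex_prodMap, sq]

end DihedralModule

section HerbrandQuotient

variable {q : ℕ} {A : Type*} [AddCommGroup A]
  {τ : DihedralGroup q →* AddMonoid.End A}

lemma rotFixed_le_range_addFixed (t : ZMod q) : rotFixed τ ≤ (addFixed τ t).range :=
  fun a ha ↦ ⟨(⟨a, ha⟩, 0, 0), by
    change a + 0 + τ (r t) 0 = a
    simp⟩

lemma reflFixed_le_range_addFixed (t : ZMod q) : reflFixed τ ≤ (addFixed τ t).range :=
  fun a ha ↦ ⟨(0, ⟨a, ha⟩, 0), by
    change 0 + a + τ (r t) 0 = a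
    simp⟩

lemma action_r_mem_range_addFixed (t : ZMod q) {a : A} (ha : a ∈ reflFixed τ) :
    τ (r t) a ∈ (addFixed τ t).range :=
  ⟨(0, 0, ⟨a, ha⟩), by
    change 0 + 0 + τ (r t) a = _
    simp⟩

lemma add_action_sr_mem_reflFixed (a : A) : a + τ (sr 0) a ∈ reflFixed τ := by
  rw [mem_reflFixed_iff, map_add, action_mul, sr_mul_sr, sub_self, action_one, add_comm]

lemma range_rotSub_le_range_addFixed {t : ZMod q} (ht : t + t = 1) :
    (rotSub τ).range ≤ (addFixed τ t).range := by
  rintro _ ⟨y, rfl⟩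
  have h1 : rotSub τ y = τ (r t) (τ (r (-t)) (τ (sr 0) y) + τ (sr 0) (τ (r (-t)) (τ (sr 0) y)))
      - (y + τ (sr 0) y) := by
    rw [map_add, action_mul, action_mul, action_mul, action_mul, action_mul, rotSub_apply]
    have e1 : (r t * (r (-t) * sr 0) : DihedralGroup q) = sr 0 := by simp
    have e2 : (r t * (sr 0 * (r (-t) * sr 0)) : DihedralGroup q) = r 1 := by
      simp [← ht]
    simp only [← mul_assoc] at e1 e2 ⊢
    rw [e1, e2]
    abel
  rw [h1]
  exact sub_mem (action_r_mem_range_addFixed t (add_action_sr_mem_reflFixed _))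
    (reflFixed_le_range_addFixed t (add_action_sr_mem_reflFixed _))

variable [NeZero q]

theorem qIndex_rotSub_add_rotNorm [Finite (rotTorsion τ)]
    (h0 : (nsmulAddMonoidHom q : rotFixed τ →+ rotFixed τ).range.index ≠ 0) :
    qIndex (rotSub τ + rotNorm τ) = ((rotSub τ).range ⊔ rotFixed τ).index
      / Nat.card ((rotSub τ).range ⊓ rotFixed τ : AddSubgroup A)
      * qIndex (nsmulAddMonoidHom q : rotFixed τ →+ rotFixed τ) := by
  let N : A →+ rotFixed τ := (rotNorm τ).codRestrict _ rotNorm_mem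
  let G : A →+ (rotSub τ).range × rotFixed τ := (rotSub τ).rangeRestrict.prod N
  let H : (rotSub τ).range × rotFixed τ →+ A :=
    (rotSub τ).range.subtype.coprod (rotFixed τ).subtype
  have hker : (rotSub τ).rangeRestrict.ker = rotFixed τ := AddMonoidHom.ker_rangeRestrict _
  have htop : (rotSub τ).rangeRestrict.range = ⊤ :=
    AddMonoidHom.range_eq_top.2 (rotSub τ).rangeRestrict_surjective
  have hG : qIndex G = qIndex (nsmulAddMonoidHom q : rotFixed τ →+ rotFixed τ) := by
    rw [qIndex_prod, htop, AddSubgroup.index_top, Nat.cast_one, one_mul]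
    exact qIndex_congr _ _ (AddEquiv.addSubgroupCongr hker) (AddEquiv.refl _)
      fun a ↦ Subtype.ext (rotNorm_of_mem (hker.le a.2)).symm
  have hGker : Finite G.ker := by
    refine Finite.of_injective (β := rotTorsion τ) (fun x ↦ ⟨x.1, ?_, ?_⟩) ?_
    · exact congrArg (fun y : (rotSub τ).range × rotFixed τ ↦ (y.1 : A)) x.2
    · have h1 : (x : A) ∈ rotFixed τ :=
        congrArg (fun y : (rotSub τ).range × rotFixed τ ↦ (y.1 : A)) x.2
      have h2 : rotNorm τ x = 0 :=
        congrArg (fun y : (rotSub τ).range × rotFixed τ ↦ (y.2 : A)) x.2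
      rwa [rotNorm_of_mem h1] at h2
    · exact fun x y h ↦ Subtype.ext (congrArg (fun z : rotTorsion τ ↦ (z : A)) h)
  have hGrange : G.range.index ≠ 0 := by
    intro h
    have h1 : qIndex G = 0 := by rw [qIndex, h]; simp
    rw [hG, qIndex, div_eq_zero_iff] at h1
    rcases h1 with h1 | h1
    · exact h0 (Nat.cast_eq_zero.1 h1)
    · have : Finite (nsmulAddMonoidHom q : rotFixed τ →+ rotFixed τ).ker := by
        refine Finite.of_injective (β := rotTorsion τ)
          (fun x ↦ ⟨x.1, x.1.2, congrArg Subtype.val x.2⟩) fun x y h ↦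
          Subtype.ext (Subtype.ext (congrArg (fun z : rotTorsion τ ↦ (z : A)) h))
      exact Nat.card_pos.ne' (Nat.cast_eq_zero.1 h1)
  have hHrange : H.range = (rotSub τ).range ⊔ rotFixed τ := by
    ext a
    simp only [AddSubgroup.mem_sup, AddMonoidHom.mem_range]
    constructor
    · rintro ⟨⟨x, y⟩, rfl⟩
      exact ⟨x, x.2, y, y.2, rfl⟩
    · rintro ⟨x, hx, y, hy, rfl⟩
      exact ⟨⟨⟨x, hx⟩, ⟨y, hy⟩⟩, rfl⟩
  have hHker : Nat.card H.ker = Nat.card ((rotSub τ).range ⊓ rotFixed τ : AddSubgroup A) := by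
    have key (x : H.ker) : (x.1.1 : A) = - x.1.2 := eq_neg_of_add_eq_zero_left x.2
    refine Nat.card_congr ⟨fun x ↦ ⟨x.1.1, x.1.1.2, ?_⟩,
      fun a ↦ ⟨(⟨a, a.2.1⟩, -⟨a, a.2.2⟩), ?_⟩, ?_, fun _ ↦ rfl⟩
    · rw [key]
      exact (rotFixed τ).neg_mem x.1.2.2
    · exact add_neg_cancel (a : A)
    · intro x
      exact Subtype.ext (Prod.ext rfl (Subtype.ext (by simp [key])))
  have hfin : Finite ((rotSub τ).range ⊓ rotFixed τ : AddSubgroup A) := by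
    refine Finite.of_injective (β := rotTorsion τ) (fun x ↦ ⟨x, x.2.2, ?_⟩)
      fun x y h ↦ Subtype.ext (congrArg (fun z : rotTorsion τ ↦ (z : A)) h)
    obtain ⟨_, ⟨y, rfl⟩, h⟩ := x
    exact smul_rotSub_of_mem h
  have hHfin : Finite H.ker := Nat.finite_of_card_ne_zero (hHker ▸ Nat.card_pos.ne')
  have hcomp : H.comp G = rotSub τ + rotNorm τ := rfl
  rw [← hcomp, qIndex_comp H G hGrange, hG, qIndex, hHrange, hHker]

theorem index_range_addFixed_dvd {t : ZMod q} (ht : t + t = 1) [Finite (rotTorsion τ)]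
    (htors : ∀ a : A, q • a = 0 → a ∈ rotFixed τ) {Q : ℕ}
    (hQ : ((rotSub τ).range ⊔ rotFixed τ).index
      = Q * Nat.card ((rotSub τ).range ⊓ rotFixed τ : AddSubgroup A)) :
    (addFixed τ t).range.index ∣ Q * Nat.card (dihTorsion τ) := by
  set I := (rotSub τ).range
  set Z := I ⊓ rotFixed τ
  set J := I ⊔ rotFixed τ
  set S := (addFixed τ t).range
  have hJS : J ≤ S := sup_le (range_rotSub_le_range_addFixed ht) (rotFixed_le_range_addFixed t)
  have hZq {z : A} (hz : z ∈ Z) : q • z = 0 := by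
    obtain ⟨⟨y, rfl⟩, h⟩ := hz
    exact smul_rotSub_of_mem h
  have hZfin : Finite Z :=
    Finite.of_injective (β := rotTorsion τ) (fun x ↦ ⟨x, x.2.2, hZq x.2⟩)
      fun x y h ↦ Subtype.ext (congrArg (fun z : rotTorsion τ ↦ (z : A)) h)
  have hsZ {z : A} (hz : z ∈ Z) : τ (sr 0) z ∈ Z := by
    obtain ⟨⟨y, rfl⟩, h⟩ := hz
    refine ⟨⟨- τ (r (-1)) (τ (sr 0) y), ?_⟩, ?_⟩
    · rw [rotSub_apply, rotSub_apply, map_neg, map_sub]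
      simp only [action_mul]
      simp
      abel
    · refine mem_rotFixed_iff.2 ?_
      have h1 := action_r_of_mem h (-1)
      conv_rhs => rw [← h1]
      simp [action_mul]
  let δ : Z →+ A := AddMonoidHom.mk' (fun z ↦ (z : A) - τ (sr 0) z) fun a b ↦ by
    simp only [AddSubgroup.coe_add, map_add]
    abel
  set W := δ.range
  have hWZ : W ≤ Z := by
    rintro _ ⟨z, rfl⟩
    exact sub_mem z.2 (hsZ z.2)
  have hWS : W ≤ S.map (rotSub τ) := by
    rintro _ ⟨⟨z, ⟨u, rfl⟩, hz⟩, rfl⟩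
    refine ⟨u + τ (sr 0) u, reflFixed_le_range_addFixed t (add_action_sr_mem_reflFixed u), ?_⟩
    change _ = rotSub τ u - τ (sr 0) (rotSub τ u)
    have h1 : τ (sr 0) (rotSub τ u) = τ (sr 0) (τ (r (-1)) (rotSub τ u)) := by
      rw [action_r_of_mem hz]
    rw [h1]
    simp only [rotSub_apply, map_add, map_sub, action_mul]
    simp
    abel
  have hmapJ : J.map (rotSub τ) = I.map (rotSub τ) := by
    rw [AddSubgroup.map_sup]
    refine sup_eq_left.2 ?_
    rintro _ ⟨a, ha, rfl⟩
    rw [(ha : rotSub τ a = 0)]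
    exact zero_mem _
  have hdisj : J.map (rotSub τ) ⊓ W = ⊥ := by
    rw [hmapJ, eq_bot_iff]
    rintro z ⟨⟨y, ⟨a, rfl⟩, rfl⟩, hz⟩
    have hz2 := hWZ hz
    have h1 : q • rotSub τ a = 0 := by
      have h2 : ∀ n : ℕ, τ (r (n : ZMod q)) (rotSub τ a)
          = rotSub τ a + n • rotSub τ (rotSub τ a) := by
        intro n
        induction n with
        | zero => rw [Nat.cast_zero, action_one, zero_nsmul, add_zero]
        | succ n ih =>
          have h3 : τ (r 1) (rotSub τ a) = rotSub τ a + rotSub τ (rotSub τ a) := by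
            rw [rotSub_apply (rotSub τ a)]; abel
          rw [Nat.cast_succ, add_comm, ← r_mul_r, ← action_mul, ih, map_add, map_nsmul,
            mem_rotFixed_iff.1 hz2.2, h3, succ_nsmul]
          abel
      have h3 (i : ZMod q) : τ (r i) (rotSub τ a)
          = rotSub τ a + i.val • rotSub τ (rotSub τ a) := by
        rw [← h2, ZMod.natCast_zmod_val]
      have hbij : Function.Bijective fun i : ZMod q ↦ i + i := by
        refine Finite.injective_iff_bijective.1 fun i j (hij : i + i = j + j) ↦ ?_
        rw [← mul_one i, ← mul_one j, ← ht, mul_add, mul_add, ← add_mul, ← add_mul, hij]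
      have h4 : ∑ i : ZMod q, (τ (r i) (rotSub τ a) - rotSub τ a) = 0 := by
        have h5 := hbij.sum_comp fun i : ZMod q ↦ τ (r i) (rotSub τ a) - rotSub τ a
        have h6 (i : ZMod q) : τ (r (i + i)) (rotSub τ a) - rotSub τ a
            = (τ (r i) (rotSub τ a) - rotSub τ a) + (τ (r i) (rotSub τ a) - rotSub τ a) := by
          rw [← r_mul_r, ← action_mul, h3 i, map_add, map_nsmul, action_r_of_mem hz2.2, h3]
          abel
        simp only [h6, Finset.sum_add_distrib] at h5
        exact left_eq_add.1 h5.symm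
      rw [Finset.sum_sub_distrib, ← rotNorm_apply, rotNorm_rotSub, zero_sub, neg_eq_zero] at h4
      simpa using h4
    exact AddSubgroup.mem_bot.2 (htors _ h1)
  have hrel : J.relIndex S = (J.map (rotSub τ)).relIndex (S.map (rotSub τ)) := by
    rw [AddSubgroup.relIndex_map_map]
    have hk : (rotSub τ).ker ≤ J := (le_sup_right : rotFixed τ ≤ J)
    rw [sup_eq_left.2 hk, sup_eq_left.2 (hk.trans hJS)]
  have hdvd : Nat.card W ∣ J.relIndex S := by
    have h1 : (J.map (rotSub τ)).relIndex W = Nat.card W := by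
      rw [← AddSubgroup.inf_relIndex_right, hdisj, AddSubgroup.relIndex_bot_left]
    rw [hrel, ← h1, ← AddSubgroup.relIndex_sup_left W (J.map (rotSub τ))]
    exact ⟨_, (AddSubgroup.relIndex_mul_relIndex _ _ _ le_sup_left
      (sup_le (AddSubgroup.map_mono hJS) hWS)).symm⟩
  have hker : Nat.card δ.ker ∣ Nat.card (dihTorsion τ) := by
    have hle (z : δ.ker) : (z.1 : A) ∈ dihTorsion τ :=
      ⟨⟨z.1.2.2, mem_reflFixed_iff.2 (sub_eq_zero.1 (z.2 : (z.1 : A) - τ (sr 0) z.1 = 0)).symm⟩,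
        hZq z.1.2⟩
    refine AddSubgroup.card_dvd_of_injective
      ((Z.subtype.comp δ.ker.subtype).codRestrict (dihTorsion τ) hle) fun x y h ↦ ?_
    exact Subtype.ext (Subtype.ext (congrArg (fun z : dihTorsion τ ↦ (z : A)) h))
  have hcard : Nat.card δ.ker * Nat.card W = Nat.card Z := by
    rw [← AddSubgroup.index_ker]
    exact AddSubgroup.card_mul_index _
  have hWfin : Finite W := Finite.of_surjective δ.rangeRestrict δ.rangeRestrict_surjective
  obtain ⟨m, hm⟩ := hdvd
  have h1 := AddSubgroup.relIndex_mul_index hJS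
  rw [hm, hQ, ← hcard] at h1
  have h2 : m * S.index = Q * Nat.card δ.ker := by
    refine Nat.eq_of_mul_eq_mul_left (Nat.card_pos (α := W)) ?_
    linarith
  exact (Dvd.intro_left m h2).trans (mul_dvd_mul_left Q hker)

end HerbrandQuotient

section InducedModule

variable {q : ℕ} {A : Type*} [AddCommGroup A] {τ : DihedralGroup q →* AddMonoid.End A}

lemma qIndex_nsmul_of_torsionFree {M : Type*} [AddCommGroup M]
    (htf : ∀ a : M, q • a = 0 → a = 0) :
    qIndex (nsmulAddMonoidHom q : M →+ M) = (nsmulAddMonoidHom q : M →+ M).range.index := by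
  have h : (nsmulAddMonoidHom q : M →+ M).ker = ⊥ := (AddSubgroup.eq_bot_iff_forall _).2 htf
  rw [qIndex, h, AddSubgroup.card_bot, Nat.cast_one, div_one]

lemma rotTorsion_eq_bot (htf : ∀ a : A, q • a = 0 → a = 0) : rotTorsion τ = ⊥ :=
  (AddSubgroup.eq_bot_iff_forall _).2 fun a ha ↦ htf a ha.2

variable [NeZero q]

variable (τ) in
/-- The norm of the rotations with values in the fixed elements. -/
def rotNormFixed : A →+ rotFixed τ := (rotNorm τ).codRestrict _ rotNorm_mem

lemma rotNormFixed_surjective (hN : ∀ a ∈ rotFixed τ, ∃ b, rotNorm τ b = a) :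
    Function.Surjective (rotNormFixed τ) := fun a ↦
  (hN a.1 a.2).imp fun _ h ↦ Subtype.ext h

lemma index_range_rotSub_sup_rotFixed (hN : ∀ a ∈ rotFixed τ, ∃ b, rotNorm τ b = a)
    (hker : ∀ a, rotNorm τ a = 0 → a ∈ (rotSub τ).range) :
    ((rotSub τ).range ⊔ rotFixed τ).index
      = (nsmulAddMonoidHom q : rotFixed τ →+ rotFixed τ).range.index := by
  rw [← AddSubgroup.index_comap_of_surjective _ (rotNormFixed_surjective hN)]
  congr 1
  refine le_antisymm (sup_le ?_ fun a ha ↦ ⟨⟨a, ha⟩, Subtype.ext (rotNorm_of_mem ha).symm⟩) ?_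
  · rintro _ ⟨a, rfl⟩
    exact ⟨0, Subtype.ext ((smul_zero q).trans (rotNorm_rotSub a).symm)⟩
  · rintro a ⟨c, hc⟩
    have h1 : q • (c : A) = rotNorm τ a := congrArg (fun x : rotFixed τ ↦ (x : A)) hc
    rw [← rotNorm_of_mem c.2] at h1
    rw [← sub_add_cancel a c]
    exact AddSubgroup.add_mem_sup (hker _ (by rw [map_sub, h1, sub_self])) c.2

lemma range_rotSub_inf_rotFixed (htf : ∀ a : A, q • a = 0 → a = 0) :
    (rotSub τ).range ⊓ rotFixed τ = ⊥ := by
  refine (AddSubgroup.eq_bot_iff_forall _).2 ?_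
  rintro _ ⟨⟨a, rfl⟩, ha⟩
  exact htf _ (smul_rotSub_of_mem ha)

lemma exists_mem_reflFixed_rotNorm_eq (hq : Odd q)
    (hN : ∀ a ∈ rotFixed τ, ∃ b, rotNorm τ b = a) {d : A} (hd : d ∈ dihFixed τ) :
    ∃ g ∈ reflFixed τ, rotNorm τ g = d := by
  obtain ⟨m, hm⟩ := hq
  obtain ⟨b, hb⟩ := hN d hd.1
  refine ⟨d - m • (b + τ (sr 0) b), sub_mem hd.2 (nsmul_mem ?_ m), ?_⟩
  · rw [mem_reflFixed_iff, map_add, action_mul, sr_mul_sr, sub_self, action_one, add_comm]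
  · rw [map_sub, rotNorm_of_mem hd.1, map_nsmul, map_add, ← action_sr_rotNorm, hb,
      mem_reflFixed_iff.1 hd.2, ← two_nsmul, ← mul_nsmul', hm, add_nsmul, one_nsmul,
      mul_comm m 2, add_sub_cancel_left]

lemma index_range_addFixed_mul (hq : Odd q) {t : ZMod q} (ht : t + t = 1)
    (htf : ∀ a : A, q • a = 0 → a = 0) (hN : ∀ a ∈ rotFixed τ, ∃ b, rotNorm τ b = a)
    (hker : ∀ a, rotNorm τ a = 0 → a ∈ (rotSub τ).range) :
    (addFixed τ t).range.index * (nsmulAddMonoidHom q : dihFixed τ →+ dihFixed τ).range.index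
      = (nsmulAddMonoidHom q : rotFixed τ →+ rotFixed τ).range.index := by
  set j := AddSubgroup.inclusion (dihFixed_le_rotFixed (τ := τ))
  set R := (nsmulAddMonoidHom q : rotFixed τ →+ rotFixed τ).range
  have hS : (R ⊔ j.range).comap (rotNormFixed τ) = (addFixed τ t).range := by
    refine le_antisymm ?_ ?_
    · intro a ha
      obtain ⟨_, ⟨c, rfl⟩, _, ⟨d, rfl⟩, h⟩ := AddSubgroup.mem_sup.1 ha
      have h1 : q • (c : A) + (d : A) = rotNorm τ a := congrArg (fun x : rotFixed τ ↦ (x : A)) h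
      obtain ⟨g, hg, hgd⟩ := exists_mem_reflFixed_rotNorm_eq hq hN d.2
      rw [← rotNorm_of_mem c.2, ← hgd] at h1
      have h2 : a - c - g ∈ (rotSub τ).range :=
        hker _ (by rw [map_sub, map_sub, ← h1]; abel)
      have h3 : a = (a - c - g) + c + g := by abel
      rw [h3]
      exact add_mem (add_mem (range_rotSub_le_range_addFixed ht h2)
        (rotFixed_le_range_addFixed t c.2)) (reflFixed_le_range_addFixed t hg)
    · rintro _ ⟨⟨f, g, h⟩, rfl⟩
      refine AddSubgroup.mem_sup.2 ⟨_, ⟨f, rfl⟩, _, ⟨reflNorm τ g + reflNorm τ h, rfl⟩, ?_⟩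
      refine Subtype.ext ?_
      change q • (f : A) + (rotNorm τ g + rotNorm τ h) = rotNorm τ (f + g + τ (r t) h)
      rw [map_add, map_add, rotNorm_action_r, rotNorm_of_mem f.2, add_assoc]
  have hD : R.comap j = (nsmulAddMonoidHom q : dihFixed τ →+ dihFixed τ).range := by
    ext d
    constructor
    · rintro ⟨c, hc⟩
      have h1 : q • (c : A) = d := congrArg (fun x : rotFixed τ ↦ (x : A)) hc
      refine ⟨⟨c, c.2, mem_reflFixed_iff.2 (sub_eq_zero.1 (htf _ ?_))⟩, Subtype.ext h1⟩
      rw [smul_sub, ← map_nsmul, h1, mem_reflFixed_iff.1 d.2.2, sub_self]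
    · rintro ⟨c, rfl⟩
      exact ⟨j c, rfl⟩
  rw [← hS, AddSubgroup.index_comap_of_surjective _ (rotNormFixed_surjective hN), ← hD,
    AddSubgroup.index_comap, ← AddSubgroup.relIndex_sup_left, mul_comm]
  exact AddSubgroup.relIndex_mul_index le_sup_left

theorem qIndex_compareFixed_of_torsionFree (hq : Odd q) {t : ZMod q} (ht : t + t = 1)
    (htf : ∀ a : A, q • a = 0 → a = 0) (hN : ∀ a ∈ rotFixed τ, ∃ b, rotNorm τ b = a)
    (hker : ∀ a, rotNorm τ a = 0 → a ∈ (rotSub τ).range) :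
    qIndex (compareFixed τ t) = qIndex (nsmulAddMonoidHom q : rotFixed τ →+ rotFixed τ)
      * qIndex (nsmulAddMonoidHom q : dihFixed τ →+ dihFixed τ) := by
  have h0 := rotTorsion_eq_bot (τ := τ) htf
  have : Finite (rotTorsion τ) := by rw [h0]; infer_instance
  obtain ⟨κ, hκ, h⟩ := qIndex_compareFixed (τ := τ) ht
  rw [h0, AddSubgroup.card_bot, Nat.dvd_one] at hκ
  rw [hκ, Nat.cast_one, mul_one] at h
  rw [h, qIndex_nsmul_of_torsionFree fun a ha ↦ Subtype.ext (htf _ (congrArg Subtype.val ha)),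
    qIndex_nsmul_of_torsionFree fun a ha ↦ Subtype.ext (htf _ (congrArg Subtype.val ha)),
    ← index_range_addFixed_mul hq ht htf hN hker]
  push_cast
  ring

theorem qIndex_rotSub_add_rotNorm_of_torsionFree
    (htf : ∀ a : A, q • a = 0 → a = 0) (hN : ∀ a ∈ rotFixed τ, ∃ b, rotNorm τ b = a)
    (hker : ∀ a, rotNorm τ a = 0 → a ∈ (rotSub τ).range)
    (h0 : (nsmulAddMonoidHom q : rotFixed τ →+ rotFixed τ).range.index ≠ 0) :
    qIndex (rotSub τ + rotNorm τ)
      = qIndex (nsmulAddMonoidHom q : rotFixed τ →+ rotFixed τ) ^ 2 := by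
  have : Finite (rotTorsion τ) := by rw [rotTorsion_eq_bot htf]; infer_instance
  rw [qIndex_rotSub_add_rotNorm h0, range_rotSub_inf_rotFixed htf, AddSubgroup.card_bot,
    index_range_rotSub_sup_rotFixed hN hker, Nat.cast_one, div_one,
    qIndex_nsmul_of_torsionFree fun a ha ↦ Subtype.ext (htf _ (congrArg Subtype.val ha)), sq]

end InducedModule

section PlaceLattice

variable {q : ℕ} {X XF XK Xk : Type*} [MulAction (DihedralGroup q) X]
  (pF : X → XF) (pK : X → XK) (pk : X → Xk)

/-- `Λ` is equivariant, and `ΛF`, `ΛK`, `Λk` are its restrictions to the fixed elements, on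
which it factors through the quotients `XF`, `XK`, `Xk` of `X`. -/
structure IsDihedralLattice {A : Type*} [AddCommGroup A] (τ : DihedralGroup q →* AddMonoid.End A)
    (Λ : A →+ (X → ℝ)) (ΛF : rotFixed τ →+ (XF → ℝ)) (ΛK : reflFixed τ →+ (XK → ℝ))
    (Λk : dihFixed τ →+ (Xk → ℝ)) : Prop where
  equivariant (g : DihedralGroup q) (a : A) (w : X) : Λ (τ g a) w = Λ a (g⁻¹ • w)
  rot (a : rotFixed τ) (w : X) : ΛF a (pF w) = Λ a w
  refl (a : reflFixed τ) (w : X) : ΛK a (pK w) = Λ a w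
  dih (a : dihFixed τ) (w : X) : Λk a (pk w) = Λ a w

variable {pF pK pk} {A : Type*} [AddCommGroup A] {τ : DihedralGroup q →* AddMonoid.End A}
  {Λ : A →+ (X → ℝ)} {ΛF : rotFixed τ →+ (XF → ℝ)} {ΛK : reflFixed τ →+ (XK → ℝ)}
  {Λk : dihFixed τ →+ (Xk → ℝ)} {w wF wK wk : ℕ} {c cF cK ck : ℝ}

lemma HasCovolume.finite_torsion {A X : Type*} [AddCommGroup A] [Fintype X]
    {Λ : A →+ (X → ℝ)} {w : ℕ} {c : ℝ} (h : HasCovolume Λ w c) [NeZero q] :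
    Finite (nsmulAddMonoidHom q : A →+ A).ker := by
  obtain ⟨hw, -, π, M, -, hπ, -⟩ := h
  have : Finite π.ker := Nat.finite_of_card_ne_zero (hπ ▸ hw)
  refine Finite.of_injective (β := π.ker) (fun a ↦ ⟨a.1, ?_⟩) fun a b hab ↦
    Subtype.ext (congrArg (fun x : π.ker ↦ (x : A)) hab)
  have h1 : q • π a.1 = 0 := by
    rw [← map_nsmul]
    exact (congrArg π (a.2 : q • (a.1 : A) = 0)).trans (map_zero π)
  exact (smul_eq_zero.1 h1).resolve_left (NeZero.ne q)

lemma HasCovolume.qIndex_nsmul {A X : Type*} [AddCommGroup A] [Fintype X]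
    {Λ : A →+ (X → ℝ)} {w : ℕ} {c : ℝ} (h : HasCovolume Λ w c) :
    qIndex (nsmulAddMonoidHom q : A →+ A) = q ^ Fintype.card X := by
  have h1 := qIndex_mul_covolume h h (nsmulAddMonoidHom q) ((q : ℝ) • LinearMap.id)
    (fun a ↦ by simp [nsmulAddMonoidHom, nsmul_eq_mul, Nat.cast_smul_eq_nsmul]) (Equiv.refl X)
  have hd : |((LinearMap.toMatrix' ((q : ℝ) • (LinearMap.id : (X → ℝ) →ₗ[ℝ] (X → ℝ)))).submatrix
      (Equiv.refl X) id).det| = q ^ Fintype.card X := by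
    simp
  rw [hd] at h1
  have h2 := mul_right_cancel₀ (Nat.cast_ne_zero.2 h.1) h1
  have h3 := mul_right_cancel₀ h.2.1 h2
  exact_mod_cast h3

variable [NeZero q]

lemma HasCovolume.range_nsmul_index_ne_zero {A X : Type*} [AddCommGroup A] [Fintype X]
    {Λ : A →+ (X → ℝ)} {w : ℕ} {c : ℝ} (h : HasCovolume Λ w c) :
    (nsmulAddMonoidHom q : A →+ A).range.index ≠ 0 := by
  intro h0
  have h1 := h.qIndex_nsmul (q := q)
  rw [qIndex, h0, Nat.cast_zero, zero_div] at h1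
  exact pow_ne_zero _ (Nat.cast_ne_zero.2 (NeZero.ne q)) h1.symm

variable (pF pK) in
/-- The linear map induced by `compareFixed` on logarithmic spaces. -/
noncomputable def compareReal (t : ZMod q) (sk : Xk → X) :
    (XF ⊕ XK ⊕ XK → ℝ) →ₗ[ℝ] (X ⊕ Xk ⊕ Xk → ℝ) where
  toFun φ := Sum.elim
    (fun x ↦ φ (.inl (pF x)) + φ (.inr (.inl (pK x))) + φ (.inr (.inr (pK ((r t)⁻¹ • x)))))
    (Sum.elim (fun x ↦ ∑ i : ZMod q, φ (.inr (.inl (pK ((r i)⁻¹ • sk x)))))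
      (fun x ↦ ∑ i : ZMod q, φ (.inr (.inr (pK ((r i)⁻¹ • sk x))))))
  map_add' φ ψ := by
    ext (x | x | x)
    · simp only [Pi.add_apply, Sum.elim_inl]; ring
    · simp only [Pi.add_apply, Sum.elim_inl, Sum.elim_inr, Finset.sum_add_distrib]
    · simp only [Pi.add_apply, Sum.elim_inr, Finset.sum_add_distrib]
  map_smul' a φ := by
    ext (x | x | x)
    · simp only [Pi.smul_apply, smul_eq_mul, Sum.elim_inl, RingHom.id_apply]; ring
    · simp only [Pi.smul_apply, smul_eq_mul, Sum.elim_inl, Sum.elim_inr, RingHom.id_apply,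
        Finset.mul_sum]
    · simp only [Pi.smul_apply, smul_eq_mul, Sum.elim_inr, RingHom.id_apply, Finset.mul_sum]

variable (X q) in
/-- The linear map induced by `rotSub + rotNorm` on logarithmic spaces. -/
noncomputable def rotReal : (X → ℝ) →ₗ[ℝ] (X → ℝ) where
  toFun φ x := φ ((r 1 : DihedralGroup q)⁻¹ • x) - φ x
    + ∑ i : ZMod q, φ ((r i : DihedralGroup q)⁻¹ • x)
  map_add' φ ψ := by
    ext x
    simp only [Pi.add_apply, Finset.sum_add_distrib]; ring
  map_smul' a φ := by
    ext x
    simp only [Pi.smul_apply, smul_eq_mul, RingHom.id_apply, Finset.mul_sum, mul_add, mul_sub]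

namespace IsDihedralLattice

lemma rotNorm_eq (h : IsDihedralLattice pF pK pk τ Λ ΛF ΛK Λk) (a : A) (x : X) :
    Λ (rotNorm τ a) x = ∑ i : ZMod q, Λ a ((r i)⁻¹ • x) := by
  rw [rotNorm_apply, map_sum, Finset.sum_apply]
  exact Finset.sum_congr rfl fun i _ ↦ h.equivariant _ _ _

variable [Fintype X]

lemma qIndex_rotSub_add_rotNorm (h : IsDihedralLattice pF pK pk τ Λ ΛF ΛK Λk)
    (hΛ : HasCovolume Λ w c) :
    (qIndex (rotSub τ + rotNorm τ) : ℝ) = |(LinearMap.toMatrix' (rotReal q X)).det| := by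
  have h1 := qIndex_mul_covolume hΛ hΛ (rotSub τ + rotNorm τ) (rotReal q X) (fun a ↦ by
    ext x
    change Λ a ((r 1)⁻¹ • x) - Λ a x + ∑ i : ZMod q, Λ a ((r i)⁻¹ • x)
      = Λ (rotSub τ a + rotNorm τ a) x
    rw [map_add, Pi.add_apply, h.rotNorm_eq, rotSub_apply, map_sub, Pi.sub_apply,
      h.equivariant]) (Equiv.refl X)
  exact mul_right_cancel₀ hΛ.2.1 (mul_right_cancel₀ (Nat.cast_ne_zero.2 hΛ.1) h1)

variable [Fintype XF] [Fintype XK] [Fintype Xk]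

lemma qIndex_compareFixed (h : IsDihedralLattice pF pK pk τ Λ ΛF ΛK Λk)
    (hΛ : HasCovolume Λ w c) (hF : HasCovolume ΛF wF cF) (hK : HasCovolume ΛK wK cK)
    (hk : HasCovolume Λk wk ck) (t : ZMod q) {sk : Xk → X} (hsk : ∀ x, pk (sk x) = x)
    (e : XF ⊕ XK ⊕ XK ≃ X ⊕ Xk ⊕ Xk) :
    (qIndex (compareFixed τ t) : ℝ) * (c * (ck * ck)) * ((wF * (wK * wK) : ℕ) : ℝ)
      = |((LinearMap.toMatrix' (compareReal pF pK t sk)).submatrix e id).det|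
        * (cF * (cK * cK)) * ((w * (wk * wk) : ℕ) : ℝ) := by
  let ΛS : rotFixed τ × reflFixed τ × reflFixed τ →+ (XF ⊕ XK ⊕ XK → ℝ) :=
    AddMonoidHom.mk' (fun a ↦ Sum.elim (ΛF a.1) (Sum.elim (ΛK a.2.1) (ΛK a.2.2))) (by
      intro a b
      ext (x | x | x) <;> simp)
  let ΛT : A × dihFixed τ × dihFixed τ →+ (X ⊕ Xk ⊕ Xk → ℝ) :=
    AddMonoidHom.mk' (fun a ↦ Sum.elim (Λ a.1) (Sum.elim (Λk a.2.1) (Λk a.2.2))) (by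
      intro a b
      ext (x | x | x) <;> simp)
  let ΛK2 : reflFixed τ × reflFixed τ →+ (XK ⊕ XK → ℝ) :=
    AddMonoidHom.mk' (fun a ↦ Sum.elim (ΛK a.1) (ΛK a.2)) (by
      intro a b
      ext (x | x) <;> simp)
  let Λk2 : dihFixed τ × dihFixed τ →+ (Xk ⊕ Xk → ℝ) :=
    AddMonoidHom.mk' (fun a ↦ Sum.elim (Λk a.1) (Λk a.2)) (by
      intro a b
      ext (x | x) <;> simp)
  have hS : HasCovolume ΛS (wF * (wK * wK)) (cF * (cK * cK)) :=
    hF.prod (hK.prod hK ΛK2 fun _ _ ↦ rfl) ΛS fun _ _ ↦ rfl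
  have hT : HasCovolume ΛT (w * (wk * wk)) (c * (ck * ck)) :=
    hΛ.prod (hk.prod hk Λk2 fun _ _ ↦ rfl) ΛT fun _ _ ↦ rfl
  suffices hΨ : ∀ a, compareReal pF pK t sk (ΛS a) = ΛT (compareFixed τ t a) by
    convert qIndex_mul_covolume hS hT (compareFixed τ t) (compareReal pF pK t sk) hΨ e
  rintro ⟨f, g, u⟩
  have key (g : reflFixed τ) (x : Xk) : ∑ i : ZMod q, ΛK g (pK ((r i)⁻¹ • sk x))
      = Λk (reflNorm τ g) x := by
    conv_rhs => rw [← hsk x, h.dih]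
    refine Eq.trans ?_ (h.rotNorm_eq (g : A) (sk x)).symm
    exact Finset.sum_congr rfl fun i _ ↦ h.refl _ _
  ext (x | x | x)
  · change ΛF f (pF x) + ΛK g (pK x) + ΛK u (pK ((r t)⁻¹ • x))
      = Λ ((f : A) + (g : A) + τ (r t) (u : A)) x
    rw [h.rot, h.refl, h.refl, map_add, map_add, Pi.add_apply, Pi.add_apply, h.equivariant]
  · exact key g x
  · exact key u x

end IsDihedralLattice

end PlaceLattice

section PermutationLattice

/-- The embedding of the sublattice of `X → ℤ` of functions constant on the fibres of `p`. -/
noncomputable def fibreEmbedding {X Y : Type*} {p : X → Y} (hp : p.Surjective)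
    (H : AddSubgroup (X → ℤ)) : H →+ (Y → ℝ) :=
  AddMonoidHom.mk' (fun b y ↦ ((b : X → ℤ) (Function.surjInv hp y) : ℝ)) fun a b ↦ by
    ext; simp

lemma fibreEmbedding_apply {X Y : Type*} {p : X → Y} (hp : p.Surjective)
    {H : AddSubgroup (X → ℤ)} (hH : ∀ b, b ∈ H ↔ ∀ x y, p x = p y → b x = b y)
    (b : H) (x : X) : fibreEmbedding hp H b (p x) = ((b : X → ℤ) x : ℝ) :=
  congrArg (Int.cast (R := ℝ)) ((hH b).1 b.2 _ _ (Function.surjInv_eq hp _))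

lemma hasCovolume_fibreEmbedding {X Y : Type*} [Fintype Y] {p : X → Y} (hp : p.Surjective)
    {H : AddSubgroup (X → ℤ)} (hH : ∀ b, b ∈ H ↔ ∀ x y, p x = p y → b x = b y) :
    HasCovolume (fibreEmbedding hp H) 1 1 := by
  let π : H →+ (Y → ℤ) := AddMonoidHom.mk' (fun b y ↦ (b : X → ℤ) (Function.surjInv hp y))
    fun a b ↦ by ext; simp
  refine ⟨one_ne_zero, one_ne_zero, π, 1, fun c ↦ ?_, ?_, by simp, fun b ↦ ?_⟩
  · refine ⟨⟨fun x ↦ c (p x), (hH _).2 fun x y h ↦ by rw [h]⟩, ?_⟩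
    ext y
    exact congrArg c (Function.surjInv_eq hp y)
  · have h : π.ker = ⊥ := by
      refine (AddSubgroup.eq_bot_iff_forall _).2 fun b hb ↦ Subtype.ext (funext fun x ↦ ?_)
      rw [(hH b).1 b.2 x _ (Function.surjInv_eq hp (p x)).symm]
      exact congrFun hb (p x)
    rw [h, AddSubgroup.card_bot]
  · rw [Matrix.one_mulVec]
    rfl

/-- The embedding of `X → ℤ` into `X → ℝ`. -/
def castEmbedding (X : Type*) : (X → ℤ) →+ (X → ℝ) :=
  AddMonoidHom.mk' (fun b x ↦ (b x : ℝ)) fun a b ↦ by ext; simp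

lemma hasCovolume_castEmbedding (X : Type*) [Fintype X] :
    HasCovolume (castEmbedding X) 1 1 := by
  refine ⟨one_ne_zero, one_ne_zero, AddMonoidHom.id _, 1, fun c ↦ ⟨c, rfl⟩, ?_, by simp,
    fun b ↦ ?_⟩
  · have h : (AddMonoidHom.id (X → ℤ)).ker = ⊥ := 
      (AddSubgroup.eq_bot_iff_forall _).2 fun b hb ↦ hb
    rw [h, AddSubgroup.card_bot]
  · rw [Matrix.one_mulVec]
    rfl

variable (q : ℕ) (X : Type*) [MulAction (DihedralGroup q) X]

/-- The permutation module `X → ℤ`. -/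
def permAction : DihedralGroup q →* AddMonoid.End (X → ℤ) where
  toFun g := AddMonoidHom.mk' (fun b x ↦ b (g⁻¹ • x)) fun _ _ ↦ rfl
  map_one' := by
    refine AddMonoidHom.ext fun b ↦ funext fun x ↦ ?_
    change b ((1 : DihedralGroup q)⁻¹ • x) = b x
    rw [inv_one, one_smul]
  map_mul' g h := by
    refine AddMonoidHom.ext fun b ↦ funext fun x ↦ ?_
    change b ((g * h)⁻¹ • x) = b (h⁻¹ • g⁻¹ • x)
    rw [mul_inv_rev, mul_smul]

variable {q X}

lemma permAction_apply (g : DihedralGroup q) (b : X → ℤ) (x : X) :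
    permAction q X g b x = b (g⁻¹ • x) := rfl

variable {XF XK Xk : Type*} {pF : X → XF} {pK : X → XK} {pk : X → Xk}

lemma mem_reflFixed_permAction
    (hpK : ∀ x y, pK x = pK y ↔ y = x ∨ y = (sr 0 : DihedralGroup q) • x) (b : X → ℤ) :
    b ∈ reflFixed (permAction q X) ↔ ∀ x y, pK x = pK y → b x = b y := by
  rw [mem_reflFixed_iff]
  constructor
  · intro h x y hxy
    rcases (hpK x y).1 hxy with rfl | rfl
    · rfl
    · conv_rhs => rw [← h, permAction_apply, inv_smul_smul]
  · intro h
    ext x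
    exact h _ _ ((hpK _ _).2 (Or.inr (smul_inv_smul _ _).symm))

variable [NeZero q]

lemma mem_rotFixed_permAction
    (hpF : ∀ x y, pF x = pF y ↔ ∃ i, (r i : DihedralGroup q) • x = y) (b : X → ℤ) :
    b ∈ rotFixed (permAction q X) ↔ ∀ x y, pF x = pF y → b x = b y := by
  constructor
  · intro h x y hxy
    obtain ⟨i, rfl⟩ := (hpF x y).1 hxy
    conv_rhs => rw [← action_r_of_mem h i, permAction_apply, inv_smul_smul]
  · intro h
    rw [mem_rotFixed_iff]
    ext x
    exact h _ _ ((hpF _ _).2 ⟨1, smul_inv_smul _ _⟩)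

lemma mem_dihFixed_permAction
    (hpF : ∀ x y, pF x = pF y ↔ ∃ i, (r i : DihedralGroup q) • x = y)
    (hpK : ∀ x y, pK x = pK y ↔ y = x ∨ y = (sr 0 : DihedralGroup q) • x)
    (hpk : ∀ x y, pk x = pk y ↔ ∃ g : DihedralGroup q, g • x = y) (b : X → ℤ) :
    b ∈ dihFixed (permAction q X) ↔ ∀ x y, pk x = pk y → b x = b y := by
  rw [dihFixed, AddSubgroup.mem_inf, mem_rotFixed_permAction hpF, mem_reflFixed_permAction hpK]
  constructor
  · rintro ⟨h1, h2⟩ x y hxy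
    obtain ⟨g, rfl⟩ := (hpk x y).1 hxy
    cases g with
    | r i => exact h1 _ _ ((hpF _ _).2 ⟨i, rfl⟩)
    | sr i =>
      have h3 : (sr i : DihedralGroup q) = r (-i) * sr 0 := by
        rw [r_mul_sr, zero_sub, neg_neg]
      rw [h3, mul_smul]
      exact (h2 _ _ ((hpK _ _).2 (Or.inr rfl))).trans (h1 _ _ ((hpF _ _).2 ⟨-i, rfl⟩))
  · refine fun h ↦ ⟨fun x y hxy ↦ ?_, fun x y hxy ↦ ?_⟩
    · obtain ⟨i, rfl⟩ := (hpF x y).1 hxy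
      exact h _ _ ((hpk _ _).2 ⟨_, rfl⟩)
    · rcases (hpK x y).1 hxy with rfl | rfl
      · rfl
      · exact h _ _ ((hpk _ _).2 ⟨_, rfl⟩)

lemma isDihedralLattice_permAction
    (hpF : ∀ x y, pF x = pF y ↔ ∃ i, (r i : DihedralGroup q) • x = y)
    (hpK : ∀ x y, pK x = pK y ↔ y = x ∨ y = (sr 0 : DihedralGroup q) • x)
    (hpk : ∀ x y, pk x = pk y ↔ ∃ g : DihedralGroup q, g • x = y)
    (hF : pF.Surjective) (hK : pK.Surjective) (hk : pk.Surjective) :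
    IsDihedralLattice pF pK pk (permAction q X) (castEmbedding X)
      (fibreEmbedding hF _) (fibreEmbedding hK _) (fibreEmbedding hk _) where
  equivariant _ _ _ := rfl
  rot := fibreEmbedding_apply hF (mem_rotFixed_permAction hpF)
  refl := fibreEmbedding_apply hK (mem_reflFixed_permAction hpK)
  dih := fibreEmbedding_apply hk (mem_dihFixed_permAction hpF hpK hpk)

lemma exists_sum_eq_one (hpF : ∀ x y, pF x = pF y ↔ ∃ i, (r i : DihedralGroup q) • x = y)
    (hfree : ∀ (i : ZMod q) (x : X), (r i : DihedralGroup q) • x = x → i = 0)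
    (hF : pF.Surjective) :
    ∃ E : X → ℤ, ∀ x, ∑ i : ZMod q, E ((r i : DihedralGroup q)⁻¹ • x) = 1 := by
  refine ⟨fun x ↦ if x = Function.surjInv hF (pF x) then 1 else 0, fun x ↦ ?_⟩
  obtain ⟨j, hj⟩ := (hpF _ x).1 (Function.surjInv_eq hF (pF x))
  rw [Finset.sum_eq_single j]
  · have h1 : (r j : DihedralGroup q)⁻¹ • x = Function.surjInv hF (pF x) :=
      inv_smul_eq_iff.2 hj.symm
    simp only [h1, Function.surjInv_eq hF, if_true]
  · intro i _ hij
    refine if_neg fun h ↦ hij ?_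
    have h1 : pF ((r i : DihedralGroup q)⁻¹ • x) = pF x := (hpF _ _).2 ⟨i, smul_inv_smul _ _⟩
    rw [h1, ← inv_smul_eq_iff.2 hj.symm] at h
    have h2 : (r (j - i) : DihedralGroup q) • x = x := by
      have h3 : (r (j - i) : DihedralGroup q) = r j * (r i)⁻¹ := by
        rw [inv_r, r_mul_r, sub_eq_add_neg]
      rw [h3, mul_smul, h, smul_inv_smul]
    exact (sub_eq_zero.1 (hfree _ _ h2)).symm
  · simp

lemma rotNorm_permAction (b : X → ℤ) (x : X) :
    rotNorm (permAction q X) b x = ∑ i : ZMod q, b ((r i : DihedralGroup q)⁻¹ • x) := by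
  rw [rotNorm_apply, Finset.sum_apply]
  rfl

lemma exists_rotNorm_permAction_eq
    (hpF : ∀ x y, pF x = pF y ↔ ∃ i, (r i : DihedralGroup q) • x = y)
    (hfree : ∀ (i : ZMod q) (x : X), (r i : DihedralGroup q) • x = x → i = 0)
    (hF : pF.Surjective) {b : X → ℤ} (hb : b ∈ rotFixed (permAction q X)) :
    ∃ a, rotNorm (permAction q X) a = b := by
  obtain ⟨E, hE⟩ := exists_sum_eq_one hpF hfree hF
  refine ⟨b * E, funext fun x ↦ ?_⟩
  have h (i : ZMod q) : b ((r i : DihedralGroup q)⁻¹ • x) = b x := congrFun (action_r_of_mem hb i) x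
  simp only [rotNorm_permAction, Pi.mul_apply, h, ← Finset.mul_sum, hE, mul_one]

lemma action_r_sub_mem_range_rotSub {A : Type*} [AddCommGroup A]
    {τ : DihedralGroup q →* AddMonoid.End A} (i : ZMod q) (a : A) :
    τ (r i) a - a ∈ (rotSub τ).range := by
  have h (n : ℕ) : τ (r (n : ZMod q)) a - a ∈ (rotSub τ).range := by
    induction n with
    | zero => rw [Nat.cast_zero, action_one, sub_self]; exact zero_mem _
    | succ n ih =>
      have h1 : τ (r ((n + 1 : ℕ) : ZMod q)) a - a
          = rotSub τ (τ (r (n : ZMod q)) a) + (τ (r (n : ZMod q)) a - a) := by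
        rw [rotSub_apply, action_mul, r_mul_r, Nat.cast_succ, add_comm (1 : ZMod q)]
        abel
      rw [h1]
      exact add_mem ⟨_, rfl⟩ ih
  rw [← ZMod.natCast_zmod_val i]
  exact h _

lemma mem_range_rotSub_of_rotNorm_permAction_eq_zero
    (hpF : ∀ x y, pF x = pF y ↔ ∃ i, (r i : DihedralGroup q) • x = y)
    (hfree : ∀ (i : ZMod q) (x : X), (r i : DihedralGroup q) • x = x → i = 0)
    (hF : pF.Surjective) {b : X → ℤ} (hb : rotNorm (permAction q X) b = 0) :
    b ∈ (rotSub (permAction q X)).range := by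
  obtain ⟨E, hE⟩ := exists_sum_eq_one hpF hfree hF
  let z (i : ZMod q) : X → ℤ := permAction q X (r (-i)) b * E
  have h1 : b = ∑ i, (permAction q X (r i) (z i) - z i) := by
    ext x
    simp only [z, Finset.sum_sub_distrib, Pi.sub_apply, Finset.sum_apply, permAction_apply,
      Pi.mul_apply, inv_r, neg_neg, ← Finset.sum_mul]
    have h2 : ∑ i : ZMod q, b ((r i : DihedralGroup q) • x) = 0 := by
      have h3 := congrFun hb x
      rw [rotNorm_permAction, ← Equiv.sum_comp (Equiv.neg (ZMod q))] at h3
      simpa [inv_r] using h3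
    have h4 := hE x
    simp only [inv_r] at h4
    simp only [← mul_smul, r_mul_r, add_neg_cancel, ← one_def, one_smul, ← Finset.mul_sum, h4, h2]
    ring
  rw [h1]
  exact sum_mem fun i _ ↦ action_r_sub_mem_range_rotSub i _

end PermutationLattice

section LatticeIndex

variable {q : ℕ} [NeZero q] {X XF XK Xk : Type*} [MulAction (DihedralGroup q) X]
  [Fintype X] [Fintype XF] [Fintype XK] [Fintype Xk]
  {pF : X → XF} {pK : X → XK} {pk : X → Xk}
  {A : Type*} [AddCommGroup A] {τ : DihedralGroup q →* AddMonoid.End A}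
  {Λ : A →+ (X → ℝ)} {ΛF : rotFixed τ →+ (XF → ℝ)} {ΛK : reflFixed τ →+ (XK → ℝ)}
  {Λk : dihFixed τ →+ (Xk → ℝ)} {w wF wK wk : ℕ} {c cF cK ck : ℝ}

theorem exists_index_of_isDihedralLattice (h : IsDihedralLattice pF pK pk τ Λ ΛF ΛK Λk)
    (hΛ : HasCovolume Λ w c) (hΛF : HasCovolume ΛF wF cF) (hΛK : HasCovolume ΛK wK cK)
    (hΛk : HasCovolume Λk wk ck) (hq : Odd q)
    (hpF : ∀ x y, pF x = pF y ↔ ∃ i, (r i : DihedralGroup q) • x = y)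
    (hpK : ∀ x y, pK x = pK y ↔ y = x ∨ y = (sr 0 : DihedralGroup q) • x)
    (hpk : ∀ x y, pk x = pk y ↔ ∃ g : DihedralGroup q, g • x = y)
    (hfree : ∀ (i : ZMod q) (x : X), (r i : DihedralGroup q) • x = x → i = 0)
    (hF : pF.Surjective) (hK : pK.Surjective) (hk : pk.Surjective)
    (hcard : Fintype.card X + 2 * Fintype.card Xk = Fintype.card XF + 2 * Fintype.card XK)
    (htors : ∀ a : A, q • a = 0 → a ∈ rotFixed τ) :
    ∃ κ ind : ℕ, κ ∣ Nat.card (rotTorsion τ) ∧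
      ind ∣ q ^ Fintype.card XF * Nat.card (dihTorsion τ) ∧
      (q : ℝ) ^ Fintype.card XF * κ * ((cF * cK ^ 2) * (w * wk ^ 2))
        = q ^ Fintype.card Xk * ind * ((c * ck ^ 2) * (wF * wK ^ 2)) := by
  obtain ⟨t, ht⟩ := ZMod.exists_two_mul_eq hq 1
  rw [two_mul] at ht
  have hq0 : (q : ℝ) ≠ 0 := Nat.cast_ne_zero.2 (NeZero.ne q)
  have hqq : (q : ℚ) ≠ 0 := Nat.cast_ne_zero.2 (NeZero.ne q)
  have hfinA := hΛ.finite_torsion (q := q)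
  have : Finite (rotTorsion τ) := Finite.of_injective
    (AddSubgroup.inclusion (inf_le_right : rotTorsion τ ≤ _)) (AddSubgroup.inclusion_injective _)
  obtain ⟨e⟩ : Nonempty (XF ⊕ XK ⊕ XK ≃ X ⊕ Xk ⊕ Xk) := by
    refine Fintype.card_eq.1 ?_
    simp only [Fintype.card_sum]
    lia
  set B := permAction q X
  have hB := isDihedralLattice_permAction hpF hpK hpk hF hK hk
  have hΛB := hasCovolume_castEmbedding X
  have hΛBF := hasCovolume_fibreEmbedding hF (mem_rotFixed_permAction hpF)
  have hΛBK := hasCovolume_fibreEmbedding hK (mem_reflFixed_permAction hpK)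
  have hΛBk := hasCovolume_fibreEmbedding hk (mem_dihFixed_permAction hpF hpK hpk)
  have htf (b : X → ℤ) (hb : q • b = 0) : b = 0 := (smul_eq_zero.1 hb).resolve_left (NeZero.ne q)
  have hN (b) (hb : b ∈ rotFixed B) := exists_rotNorm_permAction_eq hpF hfree hF hb
  have hker (b) (hb : rotNorm B b = 0) :=
    mem_range_rotSub_of_rotNorm_permAction_eq_zero hpF hfree hF hb
  have hΘ : qIndex (rotSub τ + rotNorm τ) = qIndex (rotSub B + rotNorm B) := by
    have h1 := h.qIndex_rotSub_add_rotNorm hΛ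
    rw [← hB.qIndex_rotSub_add_rotNorm hΛB] at h1
    exact_mod_cast h1
  rw [qIndex_rotSub_add_rotNorm_of_torsionFree htf hN hker hΛBF.range_nsmul_index_ne_zero,
    qIndex_rotSub_add_rotNorm hΛF.range_nsmul_index_ne_zero, hΛBF.qIndex_nsmul, hΛF.qIndex_nsmul,
    sq] at hΘ
  replace hΘ := mul_right_cancel₀ (pow_ne_zero _ hqq) hΘ
  have hQ : ((rotSub τ).range ⊔ rotFixed τ).index = q ^ Fintype.card XF
      * Nat.card ((rotSub τ).range ⊓ rotFixed τ : AddSubgroup A) := by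
    have h0 : (Nat.card ((rotSub τ).range ⊓ rotFixed τ : AddSubgroup A) : ℚ) ≠ 0 := by
      intro h0
      rw [h0, div_zero] at hΘ
      exact pow_ne_zero _ hqq hΘ.symm
    rw [div_eq_iff h0] at hΘ
    exact_mod_cast hΘ
  obtain ⟨κ, hκ, hcmp⟩ := qIndex_compareFixed (τ := τ) ht
  refine ⟨κ, _, hκ, index_range_addFixed_dvd ht htors hQ, ?_⟩
  have hsk : ∀ x, pk (Function.surjInv hk x) = x := Function.surjInv_eq hk
  have h1 := h.qIndex_compareFixed hΛ hΛF hΛK hΛk t hsk e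
  have h2 := hB.qIndex_compareFixed hΛB hΛBF hΛBK hΛBk t hsk e
  simp only [mul_one, Nat.cast_one] at h2
  rw [← h2, qIndex_compareFixed_of_torsionFree hq ht htf hN hker, hΛBF.qIndex_nsmul,
    hΛBk.qIndex_nsmul] at h1
  rw [hΛk.qIndex_nsmul] at hcmp
  have hcmp' : (qIndex (compareFixed τ t) : ℝ) * κ
      = (addFixed τ t).range.index * (q ^ Fintype.card Xk) ^ 2 := by exact_mod_cast hcmp
  refine mul_left_cancel₀ (pow_ne_zero (Fintype.card Xk) hq0) ?_
  push_cast at h1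
  linear_combination (c * ck ^ 2) * (wF * wK ^ 2) * hcmp' - κ * h1

end LatticeIndex

section LogarithmicEmbedding

open Units

variable (M : Type*) [Field M] [NumberField M]

/-- The logarithmic embedding of the units of `M`, extended by the diagonal. -/
noncomputable def logUnits : Additive (𝓞 M)ˣ × ℤ →+ (InfinitePlace M → ℝ) :=
  AddMonoidHom.mk' (fun a w ↦ Real.log (w ((a.1.toMul : 𝓞 M) : M)) + a.2) (by
    intro a b
    ext w
    have h (u : (𝓞 M)ˣ) : w ((u : 𝓞 M) : M) ≠ 0 := by simp
    simp only [Prod.fst_add, toMul_add, Units.val_mul, map_mul, Prod.snd_add, Int.cast_add,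
      Pi.add_apply, Real.log_mul (h _) (h _)]
    ring)

variable {M}

lemma torsion_mul_prod_injective {ζ ζ' : torsion M} {f f' : Fin (rank M) → ℤ}
    (h : (ζ : (𝓞 M)ˣ) * ∏ i, fundSystem M i ^ f i = ζ' * ∏ i, fundSystem M i ^ f' i) :
    ζ = ζ' ∧ f = f' :=
  Prod.ext_iff.1 ((exist_unique_eq_mul_prod M _).unique (y₁ := (ζ, f)) (y₂ := (ζ', f')) rfl h)

variable (M) in
/-- The coordinates of a unit with respect to the fundamental system of units. -/
noncomputable def unitCoord : Additive (𝓞 M)ˣ →+ (Fin (rank M) → ℤ) :=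
  AddMonoidHom.mk' (fun u ↦ (exist_unique_eq_mul_prod M u.toMul).choose.2) (by
    intro u v
    have h (u : Additive (𝓞 M)ˣ) : u.toMul
        = ((exist_unique_eq_mul_prod M u.toMul).choose.1 : (𝓞 M)ˣ)
          * ∏ i, fundSystem M i ^ (exist_unique_eq_mul_prod M u.toMul).choose.2 i :=
      (exist_unique_eq_mul_prod M u.toMul).choose_spec.1
    refine (torsion_mul_prod_injective (ζ := (exist_unique_eq_mul_prod M (u + v).toMul).choose.1)
      (ζ' := (exist_unique_eq_mul_prod M u.toMul).choose.1
        * (exist_unique_eq_mul_prod M v.toMul).choose.1) ((h (u + v)).symm.trans ?_)).2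
    refine (toMul_add u v).trans ((congrArg₂ _ (h u) (h v)).trans ?_)
    simp only [Subgroup.coe_mul, Pi.add_apply, zpow_add, Finset.prod_mul_distrib]
    exact mul_mul_mul_comm _ _ _ _)

lemma exists_eq_mul_prod_unitCoord (u : (𝓞 M)ˣ) : ∃ ζ ∈ torsion M,
    u = ζ * ∏ i, fundSystem M i ^ unitCoord M (Additive.ofMul u) i :=
  ⟨_, (exist_unique_eq_mul_prod M u).choose.1.2, (exist_unique_eq_mul_prod M u).choose_spec.1⟩

lemma unitCoord_surjective : Function.Surjective (unitCoord M) := by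
  intro f
  refine ⟨Additive.ofMul (∏ i, fundSystem M i ^ f i), ?_⟩
  obtain ⟨ζ, hζ, h⟩ := exists_eq_mul_prod_unitCoord (∏ i, fundSystem M i ^ f i)
  exact ((torsion_mul_prod_injective (ζ := 1) (ζ' := ⟨ζ, hζ⟩)
    ((one_mul _).trans h)).2).symm

lemma unitCoord_eq_zero_iff (u : Additive (𝓞 M)ˣ) :
    unitCoord M u = 0 ↔ u.toMul ∈ torsion M := by
  obtain ⟨ζ, hζ, h⟩ := exists_eq_mul_prod_unitCoord u.toMul
  rw [ofMul_toMul] at h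
  refine ⟨fun h0 ↦ ?_, fun h0 ↦ ?_⟩
  · rw [h, h0]
    simp [hζ]
  · exact (torsion_mul_prod_injective (ζ := ⟨_, h0⟩) (ζ' := ⟨ζ, hζ⟩) (f := 0)
      (by simpa using h)).2.symm

lemma log_eq_sum_unitCoord_mul_log (u : (𝓞 M)ˣ) (w : InfinitePlace M) :
    Real.log (w ((u : 𝓞 M) : M)) = ∑ i, (unitCoord M (Additive.ofMul u) i : ℝ)
      * Real.log (w ((fundSystem M i : 𝓞 M) : M)) := by
  obtain ⟨ζ, hζ, h⟩ := exists_eq_mul_prod_unitCoord u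
  let φ : (𝓞 M)ˣ →* ℝ := (w.1.toMonoidWithZeroHom : M →* ℝ).comp
    ((algebraMap (𝓞 M) M : 𝓞 M →* M).comp (Units.coeHom (𝓞 M)))
  have hφ (u : (𝓞 M)ˣ) : φ u = w ((u : 𝓞 M) : M) := rfl
  have hne (u : (𝓞 M)ˣ) : φ u ≠ 0 := by simp [hφ]
  rw [← hφ]
  conv_lhs => rw [h]
  rw [map_mul, hφ ζ, (mem_torsion M).1 hζ w, one_mul, map_prod, Real.log_prod fun i _ ↦ hne _]
  refine Finset.sum_congr rfl fun i _ ↦ ?_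
  have h1 (v : (𝓞 M)ˣ) (n : ℤ) : φ (v ^ n) = φ v ^ n := by
    exact (congrArg Units.val (map_zpow φ.toHomUnits v n)).trans (Units.val_zpow_eq_zpow_val _ _)
  rw [h1, Real.log_zpow, hφ]

variable (M) in
theorem exists_hasCovolume_logUnits : ∃ c, HasCovolume (logUnits M) (torsionOrder M) c ∧
    Module.finrank ℚ M * regulator M = 2 ^ InfinitePlace.nrComplexPlaces M * c := by
  obtain ⟨w'⟩ : Nonempty (InfinitePlace M) := inferInstance
  obtain ⟨e⟩ : Nonempty ({w // w ≠ w'} ≃ Fin (rank M)) := by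
    refine Fintype.card_eq.1 ?_
    rw [Fintype.card_fin, rank, Fintype.card_subtype_compl, Fintype.card_subtype_eq]
  let Mat : Matrix (InfinitePlace M) (InfinitePlace M) ℝ := Matrix.of fun w i ↦
    if h : i = w' then 1 else Real.log (w ((fundSystem M (e ⟨i, h⟩) : 𝓞 M) : M))
  have hdet : Module.finrank ℚ M * regulator M
      = 2 ^ InfinitePlace.nrComplexPlaces M * |Mat.det| := by
    have h1 : (Matrix.of (fun i w : InfinitePlace M ↦ if h : i = w' then (w.mult : ℝ)
        else w.mult * (w (fundSystem M (e ⟨i, h⟩))).log))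
        = Mat.transpose * Matrix.diagonal fun w : InfinitePlace M ↦ (w.mult : ℝ) := by
      ext i w
      rw [Matrix.mul_diagonal, Matrix.transpose_apply]
      simp only [Mat, Matrix.of_apply]
      split_ifs
      · rw [one_mul]
      · rw [mul_comm]
    rw [finrank_mul_regulator_eq_det M w' e]
    convert_to |(Mat.transpose * Matrix.diagonal fun w : InfinitePlace M ↦ (w.mult : ℝ)).det| = _
    · rw [← h1]
    rw [Matrix.det_mul, Matrix.det_transpose, Matrix.det_diagonal, abs_mul, mul_comm]
    congr 1
    rw [Finset.abs_prod, InfinitePlace.nrComplexPlaces, Fintype.card_subtype,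
      ← Finset.prod_const, Finset.prod_filter]
    refine Finset.prod_congr rfl fun w _ ↦ ?_
    rw [InfinitePlace.mult, ← InfinitePlace.not_isReal_iff_isComplex]
    split_ifs <;> simp_all
  have hc : |Mat.det| ≠ 0 := by
    intro h0
    rw [h0, mul_zero] at hdet
    exact mul_ne_zero (Nat.cast_ne_zero.2 Module.finrank_pos.ne') (regulator_ne_zero M) hdet
  let π : Additive (𝓞 M)ˣ × ℤ →+ (InfinitePlace M → ℤ) :=
    AddMonoidHom.mk' (fun a i ↦ if h : i = w' then a.2 else unitCoord M a.1 (e ⟨i, h⟩)) (by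
      intro a b
      ext i
      simp only [Prod.fst_add, Prod.snd_add, map_add, Pi.add_apply]
      split_ifs <;> rfl)
  refine ⟨|Mat.det|, ⟨torsionOrder_ne_zero M, hc, π, Mat, fun v ↦ ?_, ?_, rfl, fun a ↦ ?_⟩, hdet⟩
  · obtain ⟨u, hu⟩ := unitCoord_surjective fun j ↦ v (e.symm j)
    refine ⟨(u, v w'), funext fun i ↦ ?_⟩
    change (if h : i = w' then v w' else unitCoord M u (e ⟨i, h⟩)) = v i
    split_ifs with h
    · rw [h]
    · simp [hu]
  · have h1 (a : Additive (𝓞 M)ˣ × ℤ) : a ∈ π.ker ↔ a.1.toMul ∈ torsion M ∧ a.2 = 0 := by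
      rw [← unitCoord_eq_zero_iff]
      constructor
      · intro h
        have h3 (i) : (if h : i = w' then a.2 else unitCoord M a.1 (e ⟨i, h⟩)) = 0 := congrFun h i
        refine ⟨funext fun j ↦ ?_, by simpa using h3 w'⟩
        have h4 := h3 (e.symm j)
        rw [dif_neg (e.symm j).2] at h4
        simpa using h4
      · rintro ⟨h3, h4⟩
        refine funext fun i ↦ ?_
        change (if h : i = w' then a.2 else unitCoord M a.1 (e ⟨i, h⟩)) = 0
        split_ifs
        · exact h4
        · rw [h3]; rfl
    rw [torsionOrder]
    exact Nat.card_congr ⟨fun a ↦ ⟨a.1.1.toMul, ((h1 _).1 a.2).1⟩,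
      fun u ↦ ⟨(Additive.ofMul u.1, 0), (h1 _).2 ⟨u.2, rfl⟩⟩,
      fun a ↦ Subtype.ext (Prod.ext rfl ((h1 _).1 a.2).2.symm), fun u ↦ rfl⟩
  · ext w
    change Real.log (w ((a.1.toMul : 𝓞 M) : M)) + a.2 = ∑ i, Mat w i * (π a i : ℝ)
    rw [log_eq_sum_unitCoord_mul_log, Fintype.sum_eq_add_sum_subtype_ne _ w', add_comm]
    congr 1
    · simp [Mat, π]
    · rw [← e.sum_comp]
      refine Finset.sum_congr rfl fun i _ ↦ ?_
      have h1 : Mat w i = Real.log (w ((fundSystem M (e i) : 𝓞 M) : M)) := dif_neg i.2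
      have h2 : π a i = unitCoord M a.1 (e i) := dif_neg i.2
      rw [h1, h2, mul_comm]
      rfl

end LogarithmicEmbedding

section FixedUnits

open Units

variable (M L : Type*) [Field M] [Field L] [Algebra M L]

/-- The inclusion of the units of `M` in those of `L`, extended by the identity of `ℤ`. -/
noncomputable def unitsInclusion : Additive (𝓞 M)ˣ × ℤ →+ Additive (𝓞 L)ˣ × ℤ :=
  (MonoidHom.toAdditive (Units.map (algebraMap (𝓞 M) (𝓞 L) : 𝓞 M →* 𝓞 L))).prodMap
    (AddMonoidHom.id ℤ)

variable {M L}

lemma coe_unitsInclusion_fst (a : Additive (𝓞 M)ˣ × ℤ) :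
    (((unitsInclusion M L a).1.toMul : 𝓞 L) : L) = algebraMap M L ((a.1.toMul : 𝓞 M) : M) := rfl

lemma unitsInclusion_injective : Function.Injective (unitsInclusion M L) := by
  intro a b h
  have h1 := congrArg (fun x : Additive (𝓞 L)ˣ × ℤ ↦ ((x.1.toMul : 𝓞 L) : L)) h
  simp only [coe_unitsInclusion_fst] at h1
  refine Prod.ext (Additive.toMul.injective (Units.ext (RingOfIntegers.ext
    ((algebraMap M L).injective h1)))) (congrArg Prod.snd h :)

variable [NumberField M] [NumberField L]

lemma exists_unitsInclusion_eq [IsGalois M L] {a : Additive (𝓞 L)ˣ × ℤ}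
    (ha : ∀ σ : L ≃ₐ[M] L, σ ((a.1.toMul : 𝓞 L) : L) = ((a.1.toMul : 𝓞 L) : L)) :
    ∃ b, unitsInclusion M L b = a := by
  have hfix (u : (𝓞 L)ˣ) (hu : ∀ σ : L ≃ₐ[M] L, σ ((u : 𝓞 L) : L) = ((u : 𝓞 L) : L)) :
      ∃ v : 𝓞 M, algebraMap (𝓞 M) (𝓞 L) v = u := by
    obtain ⟨x, hx⟩ := (IsGalois.mem_range_algebraMap_iff_fixed (F := M) _).2 hu
    have hx' : IsIntegral ℤ x := by
      rw [← isIntegral_algebraMap_iff (algebraMap M L).injective, hx]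
      exact RingOfIntegers.isIntegral_coe _
    exact ⟨⟨x, hx'⟩, RingOfIntegers.ext hx⟩
  obtain ⟨v, hv⟩ := hfix a.1.toMul ha
  obtain ⟨v', hv'⟩ := hfix a.1.toMul⁻¹ fun σ ↦ by
    have h1 : (((a.1.toMul⁻¹ : (𝓞 L)ˣ) : 𝓞 L) : L) = (((a.1.toMul : 𝓞 L)) : L)⁻¹ := by
      refine eq_inv_of_mul_eq_one_left ?_
      rw [← map_mul, Units.inv_mul, map_one]
    rw [h1, map_inv₀, ha]
  have hinj : Function.Injective (algebraMap (𝓞 M) (𝓞 L)) :=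
    FaithfulSMul.algebraMap_injective _ _
  have h1 : v * v' = 1 := hinj (by rw [map_mul, hv, hv', Units.mul_inv, map_one])
  exact ⟨(Additive.ofMul ⟨v, v', h1, (mul_comm _ _).trans h1⟩, a.2),
    Prod.ext (Additive.toMul.injective (Units.ext hv)) rfl⟩

variable {B : AddSubgroup (Additive (𝓞 L)ˣ × ℤ)}

theorem exists_hasCovolume_fixed [IsGalois M L]
    (hB : ∀ a, a ∈ B ↔ ∀ σ : L ≃ₐ[M] L, σ ((a.1.toMul : 𝓞 L) : L) = ((a.1.toMul : 𝓞 L) : L)) :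
    ∃ (Λ : B →+ (InfinitePlace M → ℝ)) (c : ℝ), HasCovolume Λ (torsionOrder M) c ∧
      Module.finrank ℚ M * regulator M = 2 ^ InfinitePlace.nrComplexPlaces M * c ∧
      ∀ (a : B) (w : InfinitePlace L), Λ a (w.comap (algebraMap M L)) = logUnits L a w := by
  let f : Additive (𝓞 M)ˣ × ℤ →+ B := (unitsInclusion M L).codRestrict B fun a ↦
    (hB _).2 fun σ ↦ by rw [coe_unitsInclusion_fst, σ.commutes]
  let e : (Additive (𝓞 M)ˣ × ℤ) ≃+ B := AddEquiv.ofBijective f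
    ⟨fun a b h ↦ unitsInclusion_injective (congrArg Subtype.val h), fun b ↦ by
      obtain ⟨a, ha⟩ := exists_unitsInclusion_eq ((hB _).1 b.2)
      exact ⟨a, Subtype.ext ha⟩⟩
  obtain ⟨c, hc, hreg⟩ := exists_hasCovolume_logUnits M
  refine ⟨(logUnits M).comp e.symm.toAddMonoidHom, c, hc.of_equiv e.symm (Equiv.refl _) _
    fun b y ↦ rfl, hreg, fun a w ↦ ?_⟩
  obtain ⟨a, rfl⟩ := e.surjective a
  change logUnits M (e.symm (e a)) _ = _
  rw [e.symm_apply_apply]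
  rfl

lemma card_fixed_torsion_dvd [IsGalois M L] {q : ℕ} [NeZero q]
    (hB : ∀ a, a ∈ B ↔ ∀ σ : L ≃ₐ[M] L, σ ((a.1.toMul : 𝓞 L) : L) = ((a.1.toMul : 𝓞 L) : L)) :
    Nat.card (B ⊓ (nsmulAddMonoidHom q).ker : AddSubgroup (Additive (𝓞 L)ˣ × ℤ)) ∣
      q ^ (if (∃ ζ : M, ζ ≠ 1 ∧ ζ ^ q = 1) then 1 else 0) := by
  have hmem {a : Additive (𝓞 L)ˣ × ℤ} (ha : q • a = 0) :
      a.2 = 0 ∧ ((a.1.toMul : 𝓞 L) : L) ^ q = 1 := by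
    refine ⟨(smul_eq_zero.1 (congrArg Prod.snd ha)).resolve_left (NeZero.ne q), ?_⟩
    have h1 : a.1.toMul ^ q = 1 := congrArg (fun x : Additive (𝓞 L)ˣ × ℤ ↦ x.1.toMul) ha
    rw [← map_pow, ← Units.val_pow_eq_pow_val, h1, Units.val_one, map_one]
  split_ifs with h
  · let φ : (𝓞 L)ˣ →* Lˣ := Units.map (algebraMap (𝓞 L) L : 𝓞 L →* L)
    let f : Multiplicative (B ⊓ (nsmulAddMonoidHom q).ker : AddSubgroup (Additive (𝓞 L)ˣ × ℤ)) →*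
        rootsOfUnity q L :=
      MonoidHom.mk' (fun a ↦ ⟨φ a.toAdd.1.1.toMul, (mem_rootsOfUnity _ _).2
        (Units.ext (hmem a.toAdd.2.2).2)⟩) fun a b ↦ Subtype.ext (map_mul φ _ _)
    have hf : Function.Injective f := by
      intro a b hab
      have h1 : ((a.toAdd.1.1.toMul : 𝓞 L) : L) = ((b.toAdd.1.1.toMul : 𝓞 L) : L) :=
        congrArg (fun x : rootsOfUnity q L ↦ ((x : Lˣ) : L)) hab
      refine Multiplicative.toAdd.injective (Subtype.ext (Prod.ext
        (Additive.toMul.injective (Units.ext (RingOfIntegers.ext h1))) ?_))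
      rw [(hmem a.toAdd.2.2).1, (hmem b.toAdd.2.2).1]
    rw [pow_one]
    refine (Subgroup.card_dvd_of_injective f hf).trans ?_
    rw [← IsCyclic.exponent_eq_card]
    refine Monoid.exponent_dvd_of_forall_pow_eq_one fun x ↦ Subtype.ext ?_
    exact (mem_rootsOfUnity _ _).1 x.2
  · push Not at h
    rw [pow_zero, Nat.dvd_one]
    refine Nat.card_eq_one_iff_unique.2 ⟨⟨fun a b ↦ ?_⟩, ⟨0⟩⟩
    have h0 (a : (B ⊓ (nsmulAddMonoidHom q).ker : AddSubgroup (Additive (𝓞 L)ˣ × ℤ))) :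
        (a : Additive (𝓞 L)ˣ × ℤ) = 0 := by
      obtain ⟨b, hb⟩ := exists_unitsInclusion_eq ((hB _).1 a.2.1)
      obtain ⟨h1, h2⟩ := hmem a.2.2
      have h3 : ((b.1.toMul : 𝓞 M) : M) = 1 := by
        by_contra h3
        refine h _ h3 ((algebraMap M L).injective ?_)
        rw [map_pow, ← coe_unitsInclusion_fst, hb, h2, map_one]
      refine Prod.ext (Additive.toMul.injective (Units.ext (RingOfIntegers.ext ?_))) h1
      rw [← hb, coe_unitsInclusion_fst, h3, map_one]
      rfl
    exact Subtype.ext ((h0 a).trans (h0 b).symm)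

end FixedUnits

section DihedralUnits

open Units

variable {q : ℕ} {k L : Type*} [Field k] [Field L] [Algebra k L]

variable (k L) in
/-- The action of the Galois group on the units, extended by the trivial action on `ℤ`. -/
noncomputable def galUnits : (L ≃ₐ[k] L) →* AddMonoid.End (Additive (𝓞 L)ˣ × ℤ) where
  toFun σ := (MonoidHom.toAdditive (Units.map
    (RingOfIntegers.mapRingHom (σ : L →+* L) : 𝓞 L →* 𝓞 L))).prodMap (AddMonoidHom.id ℤ)
  map_one' := rfl
  map_mul' _ _ := rfl

lemma coe_galUnits_fst (σ : L ≃ₐ[k] L) (a : Additive (𝓞 L)ˣ × ℤ) :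
    (((galUnits k L σ a).1.toMul : 𝓞 L) : L) = σ ((a.1.toMul : 𝓞 L) : L) := rfl

lemma galUnits_eq_self_iff (σ : L ≃ₐ[k] L) (a : Additive (𝓞 L)ˣ × ℤ) :
    galUnits k L σ a = a ↔ σ ((a.1.toMul : 𝓞 L) : L) = ((a.1.toMul : 𝓞 L) : L) := by
  refine ⟨fun h ↦ by rw [← coe_galUnits_fst, h], fun h ↦ Prod.ext ?_ rfl⟩
  exact Additive.toMul.injective (Units.ext (RingOfIntegers.ext h))

variable (e : (L ≃ₐ[k] L) ≃* DihedralGroup q)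

/-- The action of the dihedral group on the units, extended by the trivial action on `ℤ`. -/
noncomputable def dihedralUnits : DihedralGroup q →* AddMonoid.End (Additive (𝓞 L)ˣ × ℤ) :=
  (galUnits k L).comp e.symm.toMonoidHom

/-- The action of the dihedral group on the infinite places. -/
noncomputable abbrev dihedralPlaces : MulAction (DihedralGroup q) (InfinitePlace L) :=
  MulAction.compHom _ e.symm.toMonoidHom

lemma forall_algEquiv_apply_eq_iff (M : IntermediateField k L) (x : L) :
    (∀ σ : L ≃ₐ[M] L, σ x = x) ↔ ∀ g ∈ M.fixingSubgroup, g x = x :=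
  ⟨fun h g hg ↦ h (fixingSubgroupEquiv M ⟨g, hg⟩),
    fun h σ ↦ h _ ((fixingSubgroupEquiv M).symm σ).2⟩

lemma comap_algebraMap_eq_iff [IsGalois k L] (M : IntermediateField k L) (w w' : InfinitePlace L) :
    w.comap (algebraMap M L) = w'.comap (algebraMap M L) ↔ ∃ g ∈ M.fixingSubgroup, g • w = w' := by
  rw [← InfinitePlace.mem_orbit_iff]
  constructor
  · rintro ⟨σ, rfl⟩
    exact ⟨_, ((fixingSubgroupEquiv M).symm σ).2, rfl⟩
  · rintro ⟨g, hg, rfl⟩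
    exact ⟨fixingSubgroupEquiv M ⟨g, hg⟩, rfl⟩

section Fixed

variable [FiniteDimensional k L] [IsGalois k L] {F K : IntermediateField k L}

lemma mem_rotFixed_dihedralUnits_iff [NeZero q]
    (hF : F = fixedField ((Subgroup.closure {(r 1 : DihedralGroup q)}).comap e.toMonoidHom))
    (a : Additive (𝓞 L)ˣ × ℤ) : a ∈ rotFixed (dihedralUnits e) ↔
      ∀ σ : L ≃ₐ[F] L, σ ((a.1.toMul : 𝓞 L) : L) = ((a.1.toMul : 𝓞 L) : L) := by
  rw [forall_algEquiv_apply_eq_iff]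
  simp only [mem_fixingSubgroup_rotations e hF, ← galUnits_eq_self_iff]
  constructor
  · rintro h _ ⟨i, rfl⟩
    exact action_r_of_mem h i
  · exact fun h ↦ mem_rotFixed_iff.2 (h _ ⟨1, rfl⟩)

lemma mem_reflFixed_dihedralUnits_iff
    (hK : K = fixedField ((Subgroup.closure {(sr 0 : DihedralGroup q)}).comap e.toMonoidHom))
    (a : Additive (𝓞 L)ˣ × ℤ) : a ∈ reflFixed (dihedralUnits e) ↔
      ∀ σ : L ≃ₐ[K] L, σ ((a.1.toMul : 𝓞 L) : L) = ((a.1.toMul : 𝓞 L) : L) := by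
  rw [forall_algEquiv_apply_eq_iff]
  simp only [mem_fixingSubgroup_reflection e hK, ← galUnits_eq_self_iff]
  constructor
  · rintro h _ (rfl | rfl)
    · rw [map_one]; rfl
    · exact mem_reflFixed_iff.1 h
  · exact fun h ↦ mem_reflFixed_iff.2 (h _ (Or.inr rfl))

end Fixed

lemma mem_dihFixed_dihedralUnits_iff [NeZero q] (a : Additive (𝓞 L)ˣ × ℤ) :
    a ∈ dihFixed (dihedralUnits e) ↔
      ∀ σ : L ≃ₐ[k] L, σ ((a.1.toMul : 𝓞 L) : L) = ((a.1.toMul : 𝓞 L) : L) := by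
  simp only [← galUnits_eq_self_iff]
  constructor
  · rintro ⟨h1, h2⟩ σ
    obtain ⟨g, rfl⟩ := e.symm.surjective σ
    change dihedralUnits e g a = a
    rcases g with i | i
    · exact action_r_of_mem h1 i
    · have h3 : (sr i : DihedralGroup q) = sr 0 * r i := by simp
      rw [h3, ← action_mul, action_r_of_mem h1, mem_reflFixed_iff.1 h2]
  · exact fun h ↦ ⟨mem_rotFixed_iff.2 (h _), mem_reflFixed_iff.2 (h _)⟩

lemma AlgEquiv.exists_apply_eq_pow_of_pow_eq_one [NeZero q] {ζ : L} (hζ : ζ ^ q = 1) :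
    ∃ ξ : L, ξ ^ q = 1 ∧ (∃ m : ℕ, ζ = ξ ^ m) ∧ ∀ σ : L ≃ₐ[k] L, ∃ n : ℕ, σ ξ = ξ ^ n := by
  obtain ⟨ξ, hξ⟩ := IsCyclic.exists_generator (α := rootsOfUnity q L)
  have h1 (x : L) (hx : x ^ q = 1) : ∃ m : ℕ, x = ((ξ : Lˣ) : L) ^ m := by
    obtain ⟨m, hm⟩ := (mem_powers_iff_mem_zpowers (y := rootsOfUnity.mkOfPowEq x hx)).2 (hξ _)
    refine ⟨m, ?_⟩
    have h2 := congrArg (fun y : rootsOfUnity q L ↦ ((y : Lˣ) : L)) hm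
    simpa using h2.symm
  have h0 : ((ξ : Lˣ) : L) ^ q = 1 := (mem_rootsOfUnity' q _).1 ξ.2
  exact ⟨_, h0, h1 _ hζ, fun σ ↦ h1 _ (by rw [← map_pow, h0, map_one])⟩

/-- The automorphisms of a field commute on its roots of unity. -/
lemma AlgEquiv.mul_apply_of_pow_eq_one [NeZero q] {ζ : L} (hζ : ζ ^ q = 1) (σ τ : L ≃ₐ[k] L) :
    (σ * τ) ζ = (τ * σ) ζ := by
  obtain ⟨ξ, -, ⟨m, rfl⟩, h⟩ := AlgEquiv.exists_apply_eq_pow_of_pow_eq_one (k := k) hζ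
  obtain ⟨a, ha⟩ := h σ
  obtain ⟨b, hb⟩ := h τ
  simp only [AlgEquiv.mul_apply, map_pow, ha, hb]
  ring

lemma mem_rotFixed_dihedralUnits_of_smul_eq_zero [NeZero q] (hq : Odd q)
    {a : Additive (𝓞 L)ˣ × ℤ} (ha : q • a = 0) : a ∈ rotFixed (dihedralUnits e) := by
  have h1 : ((a.1.toMul : 𝓞 L) : L) ^ q = 1 := by
    have h1 : a.1.toMul ^ q = 1 := congrArg (fun x : Additive (𝓞 L)ˣ × ℤ ↦ x.1.toMul) ha
    rw [← map_pow, ← Units.val_pow_eq_pow_val, h1, Units.val_one, map_one]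
  obtain ⟨j, hj⟩ := ZMod.exists_two_mul_eq hq 1
  refine mem_rotFixed_iff.2 ((galUnits_eq_self_iff _ _).2 ?_)
  have h2 := AlgEquiv.mul_apply_of_pow_eq_one h1 (e.symm (r j)) (e.symm (sr 0))
  rw [← map_mul, ← map_mul, r_mul_sr, sr_mul_r, zero_sub, zero_add] at h2
  have h3 : (r 1 : DihedralGroup q) = sr (-j) * sr j := by
    rw [sr_mul_sr, sub_neg_eq_add, ← two_mul, hj]
  change e.symm (r 1) _ = _
  rw [h3, map_mul, AlgEquiv.mul_apply, ← h2, ← AlgEquiv.mul_apply, ← map_mul, sr_mul_sr, sub_self,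
    ← one_def, map_one, AlgEquiv.one_apply]

lemma dihedralPlaces_r_smul_eq_self [NeZero q] (hq : Odd q) (i : ZMod q) (w : InfinitePlace L)
    (h : e.symm (r i) • w = w) : i = 0 := by
  have h1 : e.symm (r i) ^ 2 = 1 := by
    have h2 : (⟨e.symm (r i), h⟩ : MulAction.stabilizer (L ≃ₐ[k] L) w) ^ 2 = 1 := by
      rcases InfinitePlace.nat_card_stabilizer_eq_one_or_two k w with h3 | h3
      · have h4 := pow_card_eq_one' (x := (⟨e.symm (r i), h⟩ : MulAction.stabilizer (L ≃ₐ[k] L) w))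
        rw [h3, pow_one] at h4
        rw [h4, one_pow]
      · rw [← h3]
        exact pow_card_eq_one'
    exact congrArg Subtype.val h2
  rw [← map_pow, EmbeddingLike.map_eq_one_iff, r_pow, one_def, r.injEq] at h1
  obtain ⟨j, hj⟩ := ZMod.exists_two_mul_eq hq 1
  calc i = i * (2 * j) := by rw [hj, mul_one]
    _ = j * (i * (2 : ℕ)) := by push_cast; ring
    _ = 0 := by rw [h1, mul_zero]

lemma logUnits_dihedralUnits (g : DihedralGroup q) (a : Additive (𝓞 L)ˣ × ℤ)
    (w : InfinitePlace L) : logUnits L (dihedralUnits e g a) w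
      = logUnits L a ((e.symm g)⁻¹ • w) := rfl

end DihedralUnits

section ClassNumberRelation

open Units Module

variable {q : ℕ} [NeZero q] {k L : Type*} [Field k] [Field L] [NumberField k] [NumberField L]
  [Algebra k L] [IsGalois k L] (e : (L ≃ₐ[k] L) ≃* DihedralGroup q) {F K : IntermediateField k L}

include e in
lemma card_infinitePlace_dihedral (hq : Odd q)
    (hF : F = fixedField ((Subgroup.closure {(r 1 : DihedralGroup q)}).comap e.toMonoidHom))
    (hK : K = fixedField ((Subgroup.closure {(sr 0 : DihedralGroup q)}).comap e.toMonoidHom)) :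
    Fintype.card (InfinitePlace L) + 2 * Fintype.card (InfinitePlace k)
      = Fintype.card (InfinitePlace F) + 2 * Fintype.card (InfinitePlace K) := by
  have : FiniteDimensional k L := Module.Finite.of_restrictScalars_finite ℚ k L
  have h := galAvg_dihedral e hq hF hK (fixedPlaces L) fixedPlaces_conj
  rw [← card_infinitePlace_eq_galAvg, ← card_infinitePlace_eq_galAvg,
    ← card_infinitePlace_eq_galAvg, ← card_infinitePlace_eq_galAvg] at h
  exact_mod_cast h

include e in
lemma finrank_rat_dihedral
    (hF : F = fixedField ((Subgroup.closure {(r 1 : DihedralGroup q)}).comap e.toMonoidHom))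
    (hK : K = fixedField ((Subgroup.closure {(sr 0 : DihedralGroup q)}).comap e.toMonoidHom)) :
    finrank ℚ L = 2 * q * finrank ℚ k ∧ finrank ℚ F = 2 * finrank ℚ k ∧
      finrank ℚ K = q * finrank ℚ k := by
  have : FiniteDimensional k L := Module.Finite.of_restrictScalars_finite ℚ k L
  have hL : finrank ℚ L = 2 * q * finrank ℚ k := by
    rw [← finrank_mul_finrank ℚ k L, finrank_dihedral e, mul_comm]
  have h1 := finrank_mul_finrank ℚ F L
  have h2 := finrank_mul_finrank ℚ K L
  rw [finrank_rotations e hF] at h1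
  rw [finrank_reflection e hK] at h2
  refine ⟨hL, Nat.eq_of_mul_eq_mul_right (NeZero.pos q) ?_, by lia⟩
  rw [h1, hL]
  ring

lemma finrank_add_nrPlaces (M : Type*) [Field M] [NumberField M] :
    Fintype.card (InfinitePlace M) + InfinitePlace.nrComplexPlaces M = finrank ℚ M ∧
      InfinitePlace.nrRealPlaces M + InfinitePlace.nrComplexPlaces M
        = Fintype.card (InfinitePlace M) := by
  have h1 := InfinitePlace.card_add_two_mul_card_eq_rank M
  have h2 := InfinitePlace.card_eq_nrRealPlaces_add_nrComplexPlaces M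
  lia

lemma nrPlaces_dihedral (hq : Odd q)
    (hF : F = fixedField ((Subgroup.closure {(r 1 : DihedralGroup q)}).comap e.toMonoidHom))
    (hK : K = fixedField ((Subgroup.closure {(sr 0 : DihedralGroup q)}).comap e.toMonoidHom)) :
    InfinitePlace.nrRealPlaces L + 2 * InfinitePlace.nrRealPlaces k
      = InfinitePlace.nrRealPlaces F + 2 * InfinitePlace.nrRealPlaces K ∧
    InfinitePlace.nrComplexPlaces L + 2 * InfinitePlace.nrComplexPlaces k
      = InfinitePlace.nrComplexPlaces F + 2 * InfinitePlace.nrComplexPlaces K := by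
  have h := card_infinitePlace_dihedral e hq hF hK
  obtain ⟨hL', hF', hK'⟩ := finrank_rat_dihedral e hF hK
  have h1 := finrank_add_nrPlaces L
  have h2 := finrank_add_nrPlaces k
  have h3 := finrank_add_nrPlaces F
  have h4 := finrank_add_nrPlaces K
  have h5 : finrank ℚ L = 2 * finrank ℚ K := by rw [hL', hK', mul_assoc]
  lia

/-- The relation between class numbers and regulators in a dihedral extension. -/
theorem classNumber_mul_regulator_dihedral (hq : Odd q)
    (hF : F = fixedField ((Subgroup.closure {(r 1 : DihedralGroup q)}).comap e.toMonoidHom))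
    (hK : K = fixedField ((Subgroup.closure {(sr 0 : DihedralGroup q)}).comap e.toMonoidHom)) :
    ((classNumber L * classNumber k ^ 2) * (regulator L * regulator k ^ 2)
        * (torsionOrder F * torsionOrder K ^ 2) : ℝ)
      = (classNumber F * classNumber K ^ 2) * (regulator F * regulator K ^ 2)
        * (torsionOrder L * torsionOrder k ^ 2) := by
  have h := dedekindZeta_residue_dihedral e hq hF hK
  obtain ⟨hr, hc⟩ := nrPlaces_dihedral e hq hF hK
  have hd : (|(discr L : ℝ)| * |(discr k : ℝ)| ^ 2)
      = |(discr F : ℝ)| * |(discr K : ℝ)| ^ 2 := by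
    have h1 := discr_dihedral e hq hF hK
    simp only [← Int.cast_abs, Int.abs_eq_natAbs]
    exact_mod_cast h1
  have hs : √|(discr L : ℝ)| * √|(discr k : ℝ)| ^ 2 = √|(discr F : ℝ)| * √|(discr K : ℝ)| ^ 2 := by
    have h2 (x y : ℝ) (hx : 0 ≤ x) (hy : 0 ≤ y) : √x * √y ^ 2 = √(x * y ^ 2) := by
      rw [Real.sqrt_mul hx, Real.sqrt_sq hy, Real.sq_sqrt hy]
    rw [h2 _ _ (abs_nonneg _) (abs_nonneg _), h2 _ _ (abs_nonneg _) (abs_nonneg _), hd]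
  have hs0 : √|(discr F : ℝ)| * √|(discr K : ℝ)| ^ 2 ≠ 0 :=
    mul_ne_zero (Real.sqrt_pos.2 (abs_pos.2 (Int.cast_ne_zero.2 (discr_ne_zero F)))).ne'
      (pow_ne_zero _ (Real.sqrt_pos.2 (abs_pos.2 (Int.cast_ne_zero.2 (discr_ne_zero K)))).ne')
  have hpow (x : ℝ) {a b c d : ℕ} (h : a + 2 * b = c + 2 * d) :
      x ^ a * (x ^ b) ^ 2 = x ^ c * (x ^ d) ^ 2 := by
    rw [← pow_mul, ← pow_mul, ← pow_add, ← pow_add, mul_comm b, mul_comm d, h]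
  have hr' := hpow 2 hr
  have hc' := hpow (2 * Real.pi) hc
  have hr0 : (2 : ℝ) ^ InfinitePlace.nrRealPlaces F * (2 ^ InfinitePlace.nrRealPlaces K) ^ 2 ≠ 0 :=
    by positivity
  have hc0 : (2 * Real.pi) ^ InfinitePlace.nrComplexPlaces F
      * ((2 * Real.pi) ^ InfinitePlace.nrComplexPlaces K) ^ 2 ≠ 0 := by positivity
  have hw {a b : ℕ} (ha : a ≠ 0) (hb : b ≠ 0) : (a * b ^ 2 : ℝ) ≠ 0 :=
    mul_ne_zero (Nat.cast_ne_zero.2 ha) (pow_ne_zero _ (Nat.cast_ne_zero.2 hb))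
  have hprod (a₁ a₂ b₁ b₂ R₁ R₂ h₁ h₂ w₁ w₂ s₁ s₂ : ℝ) :
      a₁ * b₁ * R₁ * h₁ / (w₁ * s₁) * (a₂ * b₂ * R₂ * h₂ / (w₂ * s₂)) ^ 2
        = (a₁ * a₂ ^ 2) * (b₁ * b₂ ^ 2) * ((h₁ * h₂ ^ 2) * (R₁ * R₂ ^ 2) / (w₁ * w₂ ^ 2))
          / (s₁ * s₂ ^ 2) := by ring
  simp only [dedekindZeta_residue_def] at h
  rw [hprod, hprod, hr', hc', hs] at h
  have h1 := mul_left_cancel₀ (mul_ne_zero hr0 hc0) ((div_left_inj' hs0).1 h)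
  rwa [div_eq_div_iff (hw (torsionOrder_ne_zero L) (torsionOrder_ne_zero k))
    (hw (torsionOrder_ne_zero F) (torsionOrder_ne_zero K))] at h1

end ClassNumberRelation

section ClassNumberIndex

open Units Module

variable {q : ℕ} {k L : Type*} [Field k] [Field L] [Algebra k L] [IsGalois k L]
  (e : (L ≃ₐ[k] L) ≃* DihedralGroup q) {F K : IntermediateField k L}

lemma comap_eq_comap_iff_dihedral (w w' : InfinitePlace L) :
    w.comap (algebraMap k L) = w'.comap (algebraMap k L) ↔
      ∃ g : DihedralGroup q, e.symm g • w = w' := by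
  rw [← InfinitePlace.mem_orbit_iff]
  constructor
  · rintro ⟨σ, h⟩
    exact ⟨e σ, by rwa [e.symm_apply_apply]⟩
  · rintro ⟨g, h⟩
    exact ⟨_, h⟩

variable [NumberField k] [NumberField L]

lemma comap_eq_comap_iff_rotations
    (hF : F = fixedField ((Subgroup.closure {(r 1 : DihedralGroup q)}).comap e.toMonoidHom))
    (w w' : InfinitePlace L) : w.comap (algebraMap F L) = w'.comap (algebraMap F L) ↔
      ∃ i, e.symm (r i) • w = w' := by
  have : FiniteDimensional k L := Module.Finite.of_restrictScalars_finite ℚ k L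
  rw [comap_algebraMap_eq_iff]
  simp only [mem_fixingSubgroup_rotations e hF]
  constructor
  · rintro ⟨_, ⟨i, rfl⟩, h⟩
    exact ⟨i, h⟩
  · rintro ⟨i, h⟩
    exact ⟨_, ⟨i, rfl⟩, h⟩

lemma comap_eq_comap_iff_reflection
    (hK : K = fixedField ((Subgroup.closure {(sr 0 : DihedralGroup q)}).comap e.toMonoidHom))
    (w w' : InfinitePlace L) : w.comap (algebraMap K L) = w'.comap (algebraMap K L) ↔
      w' = w ∨ w' = e.symm (sr 0) • w := by
  have : FiniteDimensional k L := Module.Finite.of_restrictScalars_finite ℚ k L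
  rw [comap_algebraMap_eq_iff]
  simp only [mem_fixingSubgroup_reflection e hK]
  constructor
  · rintro ⟨_, rfl | rfl, rfl⟩
    · exact Or.inl (one_smul _ w)
    · exact Or.inr rfl
  · rintro (rfl | rfl)
    · exact ⟨1, Or.inl rfl, one_smul _ _⟩
    · exact ⟨_, Or.inr rfl, rfl⟩

variable [NeZero q]

/-- The relation between regulators in a dihedral extension, up to powers of `q`. -/
theorem exists_regulator_relation (hq : Odd q)
    (hF : F = fixedField ((Subgroup.closure {(r 1 : DihedralGroup q)}).comap e.toMonoidHom))
    (hK : K = fixedField ((Subgroup.closure {(sr 0 : DihedralGroup q)}).comap e.toMonoidHom)) :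
    ∃ κ ind : ℕ, κ ∣ q ^ (if (∃ ζ : F, ζ ≠ 1 ∧ ζ ^ q = 1) then 1 else 0) ∧
      ind ∣ q ^ Fintype.card (InfinitePlace F)
        * q ^ (if (∃ ζ : k, ζ ≠ 1 ∧ ζ ^ q = 1) then 1 else 0) ∧
      (q : ℝ) ^ (Fintype.card (InfinitePlace F) + 1) * κ * ((regulator F * regulator K ^ 2)
          * (torsionOrder L * torsionOrder k ^ 2))
        = q ^ Fintype.card (InfinitePlace k) * ind * ((regulator L * regulator k ^ 2)
          * (torsionOrder F * torsionOrder K ^ 2)) := by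
  have : FiniteDimensional k L := Module.Finite.of_restrictScalars_finite ℚ k L
  let _ := dihedralPlaces e
  obtain ⟨c, hΛ, hc⟩ := exists_hasCovolume_logUnits L
  obtain ⟨ΛF, cF, hΛF, hcF, hF'⟩ := exists_hasCovolume_fixed (mem_rotFixed_dihedralUnits_iff e hF)
  obtain ⟨ΛK, cK, hΛK, hcK, hK'⟩ := exists_hasCovolume_fixed (mem_reflFixed_dihedralUnits_iff e hK)
  obtain ⟨Λk, ck, hΛk, hck, hk'⟩ := exists_hasCovolume_fixed (mem_dihFixed_dihedralUnits_iff e)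
  have hlat : IsDihedralLattice (fun w : InfinitePlace L ↦ w.comap (algebraMap F L))
      (fun w ↦ w.comap (algebraMap K L)) (fun w ↦ w.comap (algebraMap k L)) (dihedralUnits e)
      (logUnits L) ΛF ΛK Λk :=
    ⟨fun g a w ↦ by
      rw [logUnits_dihedralUnits, ← map_inv]
      rfl, hF', hK', hk'⟩
  obtain ⟨κ, ind, hκ, hind, h⟩ := exists_index_of_isDihedralLattice hlat hΛ hΛF hΛK hΛk hq
    (comap_eq_comap_iff_rotations e hF) (comap_eq_comap_iff_reflection e hK)
    (comap_eq_comap_iff_dihedral e)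
    (fun i w h ↦ dihedralPlaces_r_smul_eq_self e hq i w h)
    InfinitePlace.comap_surjective InfinitePlace.comap_surjective InfinitePlace.comap_surjective
    (card_infinitePlace_dihedral e hq hF hK)
    (fun a ↦ mem_rotFixed_dihedralUnits_of_smul_eq_zero e hq)
  refine ⟨κ, ind, hκ.trans (card_fixed_torsion_dvd (mem_rotFixed_dihedralUnits_iff e hF)),
    hind.trans (mul_dvd_mul_left _ (card_fixed_torsion_dvd (mem_dihFixed_dihedralUnits_iff e))), ?_⟩
  obtain ⟨hL1, hF1, hK1⟩ := finrank_rat_dihedral e hF hK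
  have hn : (finrank ℚ k : ℝ) ≠ 0 := Nat.cast_ne_zero.2 finrank_pos.ne'
  have hq0 : (q : ℝ) ≠ 0 := Nat.cast_ne_zero.2 (NeZero.ne q)
  have h2 : (2 : ℝ) ^ InfinitePlace.nrComplexPlaces L * (2 ^ InfinitePlace.nrComplexPlaces k) ^ 2
      = 2 ^ InfinitePlace.nrComplexPlaces F * (2 ^ InfinitePlace.nrComplexPlaces K) ^ 2 := by
    rw [← pow_mul, ← pow_mul, ← pow_add, ← pow_add, mul_comm _ 2, mul_comm _ 2,
      (nrPlaces_dihedral e hq hF hK).2]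
  have h20 : (2 : ℝ) ^ InfinitePlace.nrComplexPlaces F
      * (2 ^ InfinitePlace.nrComplexPlaces K) ^ 2 ≠ 0 := by positivity
  rw [hL1] at hc
  rw [hF1] at hcF
  rw [hK1] at hcK
  push_cast at hc hcF hcK
  set n : ℝ := ((finrank ℚ k : ℕ) : ℝ)
  have hA : (2 * q * n ^ 3) * (regulator L * regulator k ^ 2)
      = (2 ^ InfinitePlace.nrComplexPlaces F * (2 ^ InfinitePlace.nrComplexPlaces K) ^ 2)
        * (c * ck ^ 2) := by
    rw [← h2]
    calc _ = (2 * q * n * regulator L) * (n * regulator k) ^ 2 := by ring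
      _ = _ := by rw [hc, hck]; ring
  have hB : (2 * q * n ^ 3) * q * (regulator F * regulator K ^ 2)
      = (2 ^ InfinitePlace.nrComplexPlaces F * (2 ^ InfinitePlace.nrComplexPlaces K) ^ 2)
        * (cF * cK ^ 2) := by
    calc _ = (2 * n * regulator F) * (q * n * regulator K) ^ 2 := by ring
      _ = _ := by rw [hcF, hcK]; ring
  refine mul_left_cancel₀ (mul_ne_zero (mul_ne_zero two_ne_zero hq0) (pow_ne_zero 3 hn)) ?_
  rw [pow_succ]
  linear_combination (q : ℝ) ^ Fintype.card (InfinitePlace F) * κ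
      * (torsionOrder L * torsionOrder k ^ 2) * hB
    - (q : ℝ) ^ Fintype.card (InfinitePlace k) * ind * (torsionOrder F * torsionOrder K ^ 2) * hA
    + (2 ^ InfinitePlace.nrComplexPlaces F * (2 ^ InfinitePlace.nrComplexPlaces K) ^ 2) * h

/-- The relation between class numbers in a dihedral extension, up to powers of `q`. -/
theorem exists_classNumber_relation (hq : Odd q)
    (hF : F = fixedField ((Subgroup.closure {(r 1 : DihedralGroup q)}).comap e.toMonoidHom))
    (hK : K = fixedField ((Subgroup.closure {(sr 0 : DihedralGroup q)}).comap e.toMonoidHom)) :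
    ∃ κ ind : ℕ, κ ∣ q ^ (if (∃ ζ : F, ζ ≠ 1 ∧ ζ ^ q = 1) then 1 else 0) ∧
      ind ∣ q ^ Fintype.card (InfinitePlace F)
        * q ^ (if (∃ ζ : k, ζ ≠ 1 ∧ ζ ^ q = 1) then 1 else 0) ∧
      q ^ (Fintype.card (InfinitePlace F) + 1) * κ * (classNumber L * classNumber k ^ 2)
        = q ^ Fintype.card (InfinitePlace k) * ind * (classNumber F * classNumber K ^ 2) := by
  obtain ⟨κ, ind, hκ, hind, h⟩ := exists_regulator_relation e hq hF hK
  refine ⟨κ, ind, hκ, hind, ?_⟩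
  have h1 := classNumber_mul_regulator_dihedral e hq hF hK
  have h0 : (regulator L * regulator k ^ 2) * (torsionOrder F * torsionOrder K ^ 2) ≠ 0 :=
    mul_ne_zero (mul_ne_zero (regulator_ne_zero L) (pow_ne_zero _ (regulator_ne_zero k)))
      (mul_ne_zero (Nat.cast_ne_zero.2 (torsionOrder_ne_zero F))
        (pow_ne_zero _ (Nat.cast_ne_zero.2 (torsionOrder_ne_zero K))))
  have h2 : ((q ^ (Fintype.card (InfinitePlace F) + 1) * κ * (classNumber L * classNumber k ^ 2)
      : ℕ) : ℝ) = (q ^ Fintype.card (InfinitePlace k) * ind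
        * (classNumber F * classNumber K ^ 2) : ℕ) := by
    push_cast
    refine mul_right_cancel₀ h0 ?_
    linear_combination (q : ℝ) ^ (Fintype.card (InfinitePlace F) + 1) * κ * h1
      + (classNumber F * classNumber K ^ 2 : ℝ) * h
  exact_mod_cast h2

end ClassNumberIndex

section Valuations

open Units

lemma padicValNat_le_mul_of_dvd_pow {ℓ m q n : ℕ} [Fact ℓ.Prime] (hq : q ≠ 0) (h : m ∣ q ^ n) :
    padicValNat ℓ m ≤ n * padicValNat ℓ q := by
  rw [← padicValNat.pow]
  exact (padicValNat_dvd_iff_le (pow_ne_zero n hq)).1 (pow_padicValNat_dvd.trans h)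

lemma Units.rank_add_one (M : Type*) [Field M] [NumberField M] :
    rank M + 1 = Fintype.card (InfinitePlace M) :=
  Nat.sub_add_cancel Fintype.card_pos

lemma padicValRat_classNumber_ratio_bounds {q : ℕ} [NeZero q] {k L : Type*} [Field k] [Field L]
    [NumberField k] [NumberField L] [Algebra k L] [IsGalois k L]
    (e : (L ≃ₐ[k] L) ≃* DihedralGroup q) {F K : IntermediateField k L} (hq : Odd q)
    (hF : F = fixedField ((Subgroup.closure {(r 1 : DihedralGroup q)}).comap e.toMonoidHom))
    (hK : K = fixedField ((Subgroup.closure {(sr 0 : DihedralGroup q)}).comap e.toMonoidHom))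
    (ℓ : ℕ) (hℓ : ℓ.Prime) :
    -(((rank F + (if (∃ ζ : F, ζ ≠ 1 ∧ ζ ^ q = 1) then 1 else 0) + 1 : ℕ) : ℤ)) *
        (padicValNat ℓ q : ℤ) ≤
      padicValRat ℓ
        (((classNumber L : ℚ) * (classNumber k : ℚ) ^ 2) /
          ((classNumber F : ℚ) * (classNumber K : ℚ) ^ 2)) ∧
    padicValRat ℓ
        (((classNumber L : ℚ) * (classNumber k : ℚ) ^ 2) /
          ((classNumber F : ℚ) * (classNumber K : ℚ) ^ 2)) ≤
      ((rank k + (if (∃ ζ : k, ζ ≠ 1 ∧ ζ ^ q = 1) then 1 else 0) : ℕ) : ℤ) *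
        (padicValNat ℓ q : ℤ) := by
  have : Fact ℓ.Prime := ⟨hℓ⟩
  obtain ⟨κ, ind, hκ, hind, h⟩ := exists_classNumber_relation e hq hF hK
  have hq0 : q ≠ 0 := NeZero.ne q
  have hqq : (q : ℚ) ≠ 0 := Nat.cast_ne_zero.2 hq0
  have hκ0 : κ ≠ 0 := ne_zero_of_dvd_ne_zero (pow_ne_zero _ hq0) hκ
  rw [← pow_add] at hind
  have hind0 : ind ≠ 0 := ne_zero_of_dvd_ne_zero (pow_ne_zero _ hq0) hind
  have h1 := padicValNat_le_mul_of_dvd_pow (ℓ := ℓ) hq0 hκ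
  have h2 := padicValNat_le_mul_of_dvd_pow (ℓ := ℓ) hq0 hind
  have hcl (M : Type _) [Field M] [NumberField M] : classNumber M ≠ 0 := Fintype.card_ne_zero
  have hFK : (classNumber F * classNumber K ^ 2 : ℚ) ≠ 0 := mul_ne_zero
    (Nat.cast_ne_zero.2 (hcl F)) (pow_ne_zero _ (Nat.cast_ne_zero.2 (hcl K)))
  have hLk : (classNumber L * classNumber k ^ 2 : ℚ) ≠ 0 := mul_ne_zero
    (Nat.cast_ne_zero.2 (hcl L)) (pow_ne_zero _ (Nat.cast_ne_zero.2 Fintype.card_ne_zero))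
  have h3 : (q : ℚ) ^ (Fintype.card (InfinitePlace F) + 1) * κ
      * ((classNumber L * classNumber k ^ 2) / (classNumber F * classNumber K ^ 2))
      = q ^ Fintype.card (InfinitePlace k) * ind := by
    rw [mul_div_assoc', div_eq_iff hFK]
    exact_mod_cast h
  have h4 := congrArg (padicValRat ℓ) h3
  rw [padicValRat.mul (mul_ne_zero (pow_ne_zero _ hqq) (Nat.cast_ne_zero.2 hκ0))
      (div_ne_zero hLk hFK), padicValRat.mul (pow_ne_zero _ hqq) (Nat.cast_ne_zero.2 hκ0),
    padicValRat.mul (pow_ne_zero _ hqq) (Nat.cast_ne_zero.2 hind0), padicValRat.pow,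
    padicValRat.pow, padicValRat.of_nat, padicValRat.of_nat, padicValRat.of_nat,
    ← Units.rank_add_one F, ← Units.rank_add_one k] at h4
  rw [← Units.rank_add_one F] at h2
  generalize padicValRat ℓ _ = x at h4 ⊢
  generalize (if (∃ ζ : F, ζ ≠ 1 ∧ ζ ^ q = 1) then 1 else 0 : ℕ) = δF at h1 ⊢
  generalize (if (∃ ζ : k, ζ ≠ 1 ∧ ζ ^ q = 1) then 1 else 0 : ℕ) = δk at h2 ⊢
  generalize padicValNat ℓ q = v at h1 h2 h4 ⊢
  generalize padicValNat ℓ κ = vκ at h1 h4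
  generalize padicValNat ℓ ind = vi at h2 h4
  zify at h1 h2
  push_cast at h1 h2 h4 ⊢
  have h5 : (0 : ℤ) ≤ rank k * v := by positivity
  constructor <;> nlinarith

lemma eq_one_of_pow_eq_one_of_im_eq_zero {M : Type*} [Field M] [NumberField M]
    (φ : M →+* ℂ) (hφ : ∀ x, (φ x).im = 0) {q : ℕ} (hq : Odd q) {ζ : M} (hζ : ζ ^ q = 1) :
    ζ = 1 := by
  have h1 : φ ζ = ((φ ζ).re : ℂ) := Complex.ext rfl (by simpa using hφ ζ)
  have h2 : (φ ζ).re ^ q = 1 := by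
    have h3 : (((φ ζ).re ^ q : ℝ) : ℂ) = (1 : ℝ) := by
      rw [Complex.ofReal_pow, ← h1, ← map_pow, hζ, map_one, Complex.ofReal_one]
    exact Complex.ofReal_injective h3
  refine φ.injective ?_
  rw [h1, map_one, hq.strictMono_pow.injective (h2.trans (one_pow q).symm), Complex.ofReal_one]

lemma Units.rank_add_one_of_forall_im_eq_zero {M : Type*} [Field M] [NumberField M]
    (h : ∀ (φ : M →+* ℂ) (x : M), (φ x).im = 0) : rank M + 1 = Module.finrank ℚ M := by
  have : IsTotallyReal M := ⟨fun w ↦ by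
    rw [InfinitePlace.isReal_iff, ComplexEmbedding.isReal_iff]
    exact RingHom.ext fun x ↦ Complex.conj_eq_iff_im.2 (h _ x)⟩
  rw [Units.rank_add_one, IsTotallyReal.finrank M,
    InfinitePlace.card_eq_nrRealPlaces_add_nrComplexPlaces, IsTotallyReal.nrComplexPlaces_eq_zero, add_zero]

end Valuations

/-- Let `L/k` be dihedral of degree `2q` (`q` odd), `F` its quadratic
subextension, `K` a degree-`q` subextension.  For every prime `ℓ`,
`-a·v_ℓ(q) ≤ v_ℓ(h(L)h(k)²/(h(F)h(K)²)) ≤ b·v_ℓ(q)`, where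
`a = rank U_F + δ_q(F) + 1`, `b = rank U_k + δ_q(k)`, and `δ_q(M) = 1` iff `M` contains
a nontrivial root of unity of order dividing `q`.  If moreover `F` is totally real of
degree `2d`, then `-2d·v_ℓ(q) ≤ v_ℓ(...) ≤ (d-1)·v_ℓ(q)`. -/
theorem dihedral_class_number_ratio_bounds (q : ℕ) [NeZero q] (hq : Odd q)
    (k L : Type*) [Field k] [Field L] [NumberField k] [NumberField L]
    [Algebra k L] [IsGalois k L]
    (e : (L ≃ₐ[k] L) ≃* DihedralGroup q)
    (F K : IntermediateField k L)
    (hF : F = fixedField ((Subgroup.closure {(r 1 : DihedralGroup q)}).comap e.toMonoidHom))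
    (hK : K = fixedField ((Subgroup.closure {(sr 0 : DihedralGroup q)}).comap e.toMonoidHom)) :
    (∀ ℓ : ℕ, ℓ.Prime →
      (-(((Units.rank ↥F + (if (∃ ζ : ↥F, ζ ≠ 1 ∧ ζ ^ q = 1) then 1 else 0) + 1 : ℕ) : ℤ)) *
          (padicValNat ℓ q : ℤ) ≤
        padicValRat ℓ
          (((classNumber L : ℚ) * (classNumber k : ℚ) ^ 2) /
            ((classNumber ↥F : ℚ) * (classNumber ↥K : ℚ) ^ 2)) ∧
      padicValRat ℓ
          (((classNumber L : ℚ) * (classNumber k : ℚ) ^ 2) /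
            ((classNumber ↥F : ℚ) * (classNumber ↥K : ℚ) ^ 2)) ≤
        ((Units.rank k + (if (∃ ζ : k, ζ ≠ 1 ∧ ζ ^ q = 1) then 1 else 0) : ℕ) : ℤ) *
          (padicValNat ℓ q : ℤ)) ∧
    ((∀ (φ : ↥F →+* ℂ) (x : ↥F), (φ x).im = 0) →
      ∀ d : ℕ, Module.finrank ℚ ↥F = 2 * d →
        ∀ ℓ : ℕ, ℓ.Prime →
          (-((2 * d : ℕ) : ℤ)) * (padicValNat ℓ q : ℤ) ≤
            padicValRat ℓ
              (((classNumber L : ℚ) * (classNumber k : ℚ) ^ 2) /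
                ((classNumber ↥F : ℚ) * (classNumber ↥K : ℚ) ^ 2)) ∧
          padicValRat ℓ
              (((classNumber L : ℚ) * (classNumber k : ℚ) ^ 2) /
                ((classNumber ↥F : ℚ) * (classNumber ↥K : ℚ) ^ 2)) ≤
            ((d : ℤ) - 1) * (padicValNat ℓ q : ℤ))) := by
  refine fun p hp ↦ ⟨padicValRat_classNumber_ratio_bounds e hq hF hK p hp, fun hreal d hd ℓ hℓ ↦ ?_⟩
  have hrealk (ψ : k →+* ℂ) (x : k) : (ψ x).im = 0 := by
    rw [← ComplexEmbedding.lift_algebraMap_apply F ψ x]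
    exact hreal _ _
  have hk := Units.rank_add_one_of_forall_im_eq_zero hrealk
  have hF' := Units.rank_add_one_of_forall_im_eq_zero hreal
  have hdk : Module.finrank ℚ k = d := by
    have h := (finrank_rat_dihedral e hF hK).2.1
    lia
  have h := padicValRat_classNumber_ratio_bounds e hq hF hK ℓ hℓ
  rw [if_neg, if_neg] at h
  · have h1 : Units.rank F + 0 + 1 = 2 * d := by lia
    have h2 : ((Units.rank k + 0 : ℕ) : ℤ) = d - 1 := by lia
    rwa [h1, h2] at h
  · rintro ⟨ζ, h1, h2⟩
    obtain ⟨ψ⟩ : Nonempty (k →+* ℂ) := inferInstance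
    exact h1 (eq_one_of_pow_eq_one_of_im_eq_zero ψ (hrealk ψ) hq h2)
  · rintro ⟨ζ, h1, h2⟩
    obtain ⟨φ⟩ : Nonempty (F →+* ℂ) := inferInstance
    exact h1 (eq_one_of_pow_eq_one_of_im_eq_zero φ (hreal φ) hq h2)
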